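/- The functional 𝓘 is the lower semicontinuous envelope, with respect to the metric d_𝓜, of the functional 𝓘̃ defined by 𝓘̃(μ)=𝓘(μ) if μ∈𝓜₀ and 𝓘̃(μ)=+∞ otherwise. Equivalently: 𝓘 is lower semicontinuous on 𝓜 and for each μ∈𝓜 with 𝓘(μ)<+∞ there exists a sequence {μ^k}⊂𝓜₀ with μ^k→μ in 𝓜 and limsup_k 𝓘(μ^k) ≤ 𝓘(μ). -/

import Mathlib

/-! The lower semicontinuity of `𝓘` is immediate (`calI_lsc`): each expression in the supremum defining `𝓘` is
continuous along `d_𝓜`-convergent sequences.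

For the recovery sequence let `𝓘(μ) < ∞` and write `m = μ(ι)`. Riesz's theorem (`riesz_cost`) gives `h ∈ L²` with
`m_t + (μ(f) + √μ(σ) h)_x = 0` weakly and `∫ h² ≤ 2 𝓘(μ)`.

*Smoothing* (`exists_smoothing`). Contract time slightly into `(0,T)`, mollify and mix with `δ_{1/2}`. The mean and the
flux become a smooth pair `(m, E)` with `m_t + E_x = 0`, and by Jensen the cost density `(E - Lf)²/Lσ` is dominated by
the mollification of `h²`. The pair has a stream function `β`, and `m` being bounded below, `β` grows linearly in `|x|`.
The measures are cut off to `δ_c` for large `|x|` by a weight that is a function of `β` (`exists_cut`): multiplying a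
gradient `∇β` by a function of `β` yields a gradient again, so the conservation law survives the cut-off exactly.

*From Young measures to functions* (`exists_field`). Bernstein's operators replace each measure of the smooth family by a
finite convex combination `∑ θᵢ δ_{λᵢ}` with `λᵢ ∈ [δ, 1-δ]`. Giving the atom `λᵢ` the flux `Eᵢ = f(λᵢ) + σ(λᵢ) P`, with
`P = (E - Lf)/Lσ`, one has `∑ θᵢ Eᵢ = E` and `∑ θᵢ (Eᵢ - f(λᵢ))²/σ(λᵢ) = (E - Lf)²/Lσ`, so no cost is lost. The pairs
`(-Eᵢ, λᵢ)` are to be the values of the gradient of a scalar potential; any two values of such a gradient can be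
laminated, hence every finite convex combination of them is realised by gradients of uniformly small compactly supported
perturbations (`good_convex`, `young_realize`). The `x`-derivative of the resulting potential is a `C¹` function `u`, and
its `t`-derivative bounds the cost of `δ_u` by `½ ∫ (E - f(u))²/σ(u)` (`calI_ofFun_le`). Since the perturbation of the
potential is uniformly small, `u` is close to `m` in all negative seminorms, uniformly in time.

*Diagonal argument* (`recovery`). The metric generating the weak* topology enters only through its convergent sequences.
Weak* convergence follows from convergence of countably many quantities, the Bernstein moments integrated against a dense
sequence in `L¹` (`weakStar_of_moments`), and at stage `k` those with indices below `k` are within `1/(k+1)` of their limits.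
-/

open MeasureTheory Set Filter Topology
open scoped ENNReal Classical

noncomputable section

namespace GammaSCL

/-! ### Spatial test functions and the metric on `U` -/

/-- Smooth compactly supported test functions on `ℝ`, supported in `(-N, N)`. -/
structure STest (N : ℝ) where
  toFun : ℝ → ℝ
  smooth : ContDiff ℝ (⊤ : ℕ∞) toFun
  cpt : HasCompactSupport toFun
  supp : Function.support toFun ⊆ Ioo (-N) N

/-- The negative Sobolev seminorm `‖w‖_{-1,N}`. -/
def negNorm (N : ℝ) (w : ℝ → ℝ) : ℝ :=
  sSup { r : ℝ | ∃ φ : STest N, (∫ x, deriv φ.toFun x ^ 2) = 1 ∧ r = ∫ x, w x * φ.toFun x }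

/-- The metric `d_U` on the space `U` of measurable `[0,1]`-valued functions. -/
def dU (u v : ℝ → ℝ) : ℝ :=
  ∑' n : ℕ, (2 : ℝ)⁻¹ ^ (n + 1) *
    (negNorm ((n : ℝ) + 1) (fun x => u x - v x) /
      (1 + negNorm ((n : ℝ) + 1) (fun x => u x - v x)))

/-- The space `𝒰 = C([0,T]; U)`. -/
structure cU (T : ℝ) where
  toFun : ℝ × ℝ → ℝ
  meas : Measurable toFun
  mem01 : ∀ p, toFun p ∈ Icc (0:ℝ) 1
  cont : ∀ t₀ ∈ Icc (0:ℝ) T, ∀ δ > 0, ∃ ζ > 0, ∀ t ∈ Icc (0:ℝ) T,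
    |t - t₀| < ζ → dU (fun x => toFun (t, x)) (fun x => toFun (t₀, x)) < δ

/-- The uniform metric `d_𝒰` on `𝒰`. -/
def dcU (T : ℝ) (u v : cU T) : ℝ :=
  sSup { r : ℝ | ∃ t ∈ Icc (0:ℝ) T,
    r = dU (fun x => u.toFun (t, x)) (fun x => v.toFun (t, x)) }

/-- The metric `d_𝒳` on `𝒳`. -/
def dX (T : ℝ) (u v : cU T) : ℝ :=
  (∑' n : ℕ, (2 : ℝ)⁻¹ ^ (n + 1) *
    ∫ p in Icc (0:ℝ) T ×ˢ Icc (-((n : ℝ) + 1)) ((n : ℝ) + 1), |u.toFun p - v.toFun p|) +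
  dcU T u v

/-! ### Space-time test functions -/

/-- Smooth test functions compactly supported in `(0,T) × ℝ`. -/
structure TTest (T : ℝ) where
  toFun : ℝ × ℝ → ℝ
  smooth : ContDiff ℝ (⊤ : ℕ∞) toFun
  cpt : HasCompactSupport toFun
  supp : Function.support toFun ⊆ Ioo (0 : ℝ) T ×ˢ (univ : Set ℝ)

/-- Smooth test functions compactly supported in `[0,T] × ℝ` (no vanishing at `t = 0, T`). -/
structure TTestC where
  toFun : ℝ × ℝ → ℝ
  smooth : ContDiff ℝ (⊤ : ℕ∞) toFun
  cpt : HasCompactSupport toFun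

/-- Partial derivative in `t`. -/
def ptF (ψ : ℝ × ℝ → ℝ) : ℝ × ℝ → ℝ := fun p => fderiv ℝ ψ p (1, 0)
/-- Partial derivative in `x`. -/
def pxF (ψ : ℝ × ℝ → ℝ) : ℝ × ℝ → ℝ := fun p => fderiv ℝ ψ p (0, 1)

/-- The `L²([0,T] × ℝ)` inner product `⟨⟨g, h⟩⟩`. -/
def pair (T : ℝ) (g h : ℝ × ℝ → ℝ) : ℝ :=
  ∫ p in Icc (0:ℝ) T ×ˢ (univ : Set ℝ), g p * h p

/-! ### Weak derivatives -/

/-- Locally square integrable on `[0,T] × ℝ`. -/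
def L2loc (T : ℝ) (w : ℝ × ℝ → ℝ) : Prop :=
  Measurable w ∧ ∀ R > 0, IntegrableOn (fun p => w p ^ 2) (Icc (0:ℝ) T ×ˢ Icc (-R) R)

/-- `w` is the weak `x`-derivative of `u`. -/
def HasWeakDx (T : ℝ) (u w : ℝ × ℝ → ℝ) : Prop :=
  ∀ φ : TTest T, pair T u (pxF φ.toFun) = - pair T w φ.toFun

/-- `u` admits a locally square integrable weak `x`-derivative. -/
def hasDx (T : ℝ) (u : ℝ × ℝ → ℝ) : Prop := ∃ w, L2loc T w ∧ HasWeakDx T u w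

/-- A choice of weak `x`-derivative. -/
def wDx (T : ℝ) (u : ℝ × ℝ → ℝ) : ℝ × ℝ → ℝ :=
  if h : hasDx T u then h.choose else 0

/-! ### The parabolic cost functional -/

/-- The expression inside the supremum defining `I_ε`. -/
def IexprW (f D σ : ℝ → ℝ) (T ε : ℝ) (u w : ℝ × ℝ → ℝ) (φ : TTest T) : ℝ :=
  - pair T u (ptF φ.toFun) - pair T (fun p => f (u p)) (pxF φ.toFun)
    + ε / 2 * pair T (fun p => D (u p) * w p) (pxF φ.toFun)
    - 1 / 2 * pair T (fun p => σ (u p) * pxF φ.toFun p) (pxF φ.toFun)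

/-- The cost functional `I_ε : 𝒰 → [0,+∞]`. -/
def Ieps (f D σ : ℝ → ℝ) (T ε : ℝ) (u : cU T) : ℝ≥0∞ :=
  if hasDx T u.toFun then
    ⨆ φ : TTest T, ENNReal.ofReal (IexprW f D σ T ε u.toFun (wDx T u.toFun) φ)
  else ⊤

/-- The rescaled cost functional `H_ε := ε⁻¹ I_ε`. -/
def Heps (f D σ : ℝ → ℝ) (T ε : ℝ) (u : cU T) : ℝ≥0∞ :=
  ENNReal.ofReal ε⁻¹ * Ieps f D σ T ε u

/-! ### Young measures -/

/-- The space `𝓜` of Young measures. -/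
structure YM (T : ℝ) where
  m : ℝ × ℝ → Measure ℝ
  prob : ∀ p, IsProbabilityMeasure (m p)
  supp01 : ∀ p, m p (Icc (0:ℝ) 1)ᶜ = 0
  meas : ∀ F : ℝ → ℝ, Continuous F → Measurable fun p => ∫ l, F l ∂ m p
  bar_mem : ∀ p, (∫ l, l ∂ m p) ∈ Icc (0:ℝ) 1
  bar_cont : ∀ t₀ ∈ Icc (0:ℝ) T, ∀ δ > 0, ∃ ζ > 0, ∀ t ∈ Icc (0:ℝ) T,
    |t - t₀| < ζ →
      dU (fun x => ∫ l, l ∂ m (t, x)) (fun x => ∫ l, l ∂ m (t₀, x)) < δ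

/-- The moment `μ(F)`. -/
def YM.mom {T : ℝ} (μ : YM T) (F : ℝ → ℝ) : ℝ × ℝ → ℝ := fun p => ∫ l, F l ∂ μ.m p

/-- The barycenter `μ(ι)` of a Young measure, as an element of `𝒰`. -/
def YM.bar {T : ℝ} (μ : YM T) : cU T :=
  ⟨fun p => ∫ l, l ∂ μ.m p, μ.meas (fun l => l) continuous_id', μ.bar_mem, μ.bar_cont⟩

/-- The metric `d_𝓜 = d_w + d_𝒰(μ(ι), ν(ι))`. -/
def dM (T : ℝ) (dw : YM T → YM T → ℝ) (μ ν : YM T) : ℝ :=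
  dw μ ν + dcU T μ.bar ν.bar

/-- `dw` is a distance generating the weak* topology on Young measures. -/
def GeneratesWeakStar (T : ℝ) (dw : YM T → YM T → ℝ) : Prop :=
  (∀ μ ν, dw μ ν = dw ν μ) ∧ (∀ μ ν, 0 ≤ dw μ ν) ∧
  ∀ (μ : ℕ → YM T) (ν : YM T),
    Tendsto (fun n => dw (μ n) ν) atTop (𝓝 0) ↔
      ∀ g : ℝ × (ℝ × ℝ) → ℝ, Continuous g → HasCompactSupport g →
        Tendsto
          (fun n => ∫ p in Icc (0:ℝ) T ×ˢ (univ : Set ℝ), ∫ l, g (l, p) ∂ (μ n).m p)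
          atTop
          (𝓝 (∫ p in Icc (0:ℝ) T ×ˢ (univ : Set ℝ), ∫ l, g (l, p) ∂ ν.m p))

/-- The lift `𝓘_ε` of `I_ε` to Young measures. -/
def calIeps (f D σ : ℝ → ℝ) (T ε : ℝ) (μ : YM T) : ℝ≥0∞ :=
  if h : ∃ u : cU T, ∀ p, μ.m p = Measure.dirac (u.toFun p) then
    Ieps f D σ T ε h.choose
  else ⊤

/-- The limiting functional `𝓘` on Young measures. -/
def calI (f σ : ℝ → ℝ) (T : ℝ) (μ : YM T) : ℝ≥0∞ :=
  ⨆ φ : TTest T, ENNReal.ofReal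
    (- pair T (μ.mom (fun l => l)) (ptF φ.toFun) - pair T (μ.mom f) (pxF φ.toFun)
      - 1 / 2 * pair T (fun p => μ.mom σ p * pxF φ.toFun p) (pxF φ.toFun))

/-! ### Γ-convergence via sequences -/

/-- Sequential compactness with respect to a distance function. -/
def SeqCompactIn {α : Type*} (d : α → α → ℝ) (K : Set α) : Prop :=
  ∀ x : ℕ → α, (∀ n, x n ∈ K) → ∃ y ∈ K, ∃ s : ℕ → ℕ, StrictMono s ∧
    Tendsto (fun n => d (x (s n)) y) atTop (𝓝 0)

/-- Equicoercivity of a family of functionals. -/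
def Equicoercive {α : Type*} (d : α → α → ℝ) (F : ℝ → α → ℝ≥0∞) : Prop :=
  ∀ M : ℝ, 0 < M → ∃ K : Set α, SeqCompactIn d K ∧
    ∀ ε ∈ Ioc (0:ℝ) 1, { x : α | F ε x ≤ ENNReal.ofReal M } ⊆ K

/-- The Γ-liminf inequality `Γ-liminf F_ε ≥ G`. -/
def GammaLiminfGE {α : Type*} (d : α → α → ℝ) (F : ℝ → α → ℝ≥0∞) (G : α → ℝ≥0∞) : Prop :=
  ∀ (x : α) (e : ℕ → ℝ) (xs : ℕ → α), (∀ n, 0 < e n) → Tendsto e atTop (𝓝 0) →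
    Tendsto (fun n => d (xs n) x) atTop (𝓝 0) →
    G x ≤ Filter.liminf (fun n => F (e n) (xs n)) atTop

/-- The Γ-limsup inequality `Γ-limsup F_ε ≤ G`. -/
def GammaLimsupLE {α : Type*} (d : α → α → ℝ) (F : ℝ → α → ℝ≥0∞) (G : α → ℝ≥0∞) : Prop :=
  ∀ (x : α) (e : ℕ → ℝ), (∀ n, 0 < e n) → Tendsto e atTop (𝓝 0) →
    ∃ xs : ℕ → α, Tendsto (fun n => d (xs n) x) atTop (𝓝 0) ∧
      Filter.limsup (fun n => F (e n) (xs n)) atTop ≤ G x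

/-- Γ-convergence of `F_ε` to `G`. -/
def GammaConvergesTo {α : Type*} (d : α → α → ℝ) (F : ℝ → α → ℝ≥0∞) (G : α → ℝ≥0∞) : Prop :=
  GammaLiminfGE d F G ∧ GammaLimsupLE d F G

/-! ### Entropies, entropy production, kinetic measures -/

/-- Weak solutions to `u_t + f(u)_x = 0`. -/
def IsWeakSolution (f : ℝ → ℝ) (T : ℝ) (u : ℝ × ℝ → ℝ) : Prop :=
  ∀ φ : TTest T, pair T u (ptF φ.toFun) + pair T (fun p => f (u p)) (pxF φ.toFun) = 0

/-- Derivative within `[0,1]`. -/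
def dIcc (g : ℝ → ℝ) : ℝ → ℝ := fun v => derivWithin g (Icc 0 1) v

/-- An entropy–entropy flux pair. -/
structure Entropy (f : ℝ → ℝ) where
  eta : ℝ → ℝ
  q : ℝ → ℝ
  smooth : ContDiffOn ℝ 2 eta (Icc 0 1)
  qcont : ContinuousOn q (Icc 0 1)
  flux : ∀ a ∈ Icc (0:ℝ) 1, ∀ b ∈ Icc (0:ℝ) 1,
    q b - q a = ∫ v in a..b, dIcc eta v * deriv f v

/-- The `η`-entropy production `℘_{η,u}(φ)`. -/
def entProd (f : ℝ → ℝ) (T : ℝ) (E : Entropy f) (u : ℝ × ℝ → ℝ) (φ : TTest T) : ℝ :=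
  - pair T (fun p => E.eta (u p)) (ptF φ.toFun) - pair T (fun p => E.q (u p)) (pxF φ.toFun)

/-- `‖℘_{η,u}‖_{TV,L}`. -/
def TVabs (f : ℝ → ℝ) (T : ℝ) (E : Entropy f) (L : ℝ) (u : ℝ × ℝ → ℝ) : ℝ≥0∞ :=
  ⨆ φ : { φ : TTest T // Function.support φ.toFun ⊆ Ioo (0:ℝ) T ×ˢ Ioo (-L) L ∧
          ∀ p, |φ.toFun p| ≤ 1 },
    ENNReal.ofReal (entProd f T E u φ.1)

/-- `‖℘⁺_{η,u}‖_{TV,L}`. -/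
def TVpos (f : ℝ → ℝ) (T : ℝ) (E : Entropy f) (L : ℝ) (u : ℝ × ℝ → ℝ) : ℝ≥0∞ :=
  ⨆ φ : { φ : TTest T // Function.support φ.toFun ⊆ Ioo (0:ℝ) T ×ˢ Ioo (-L) L ∧
          ∀ p, φ.toFun p ∈ Icc (0:ℝ) 1 },
    ENNReal.ofReal (entProd f T E u φ.1)

/-- Entropy-measure solutions: every entropy production extends to a Radon measure. -/
def EMsol (f : ℝ → ℝ) (T : ℝ) (u : cU T) : Prop :=
  IsWeakSolution f T u.toFun ∧ ∀ E : Entropy f, ∀ L > 0, TVabs f T E L u.toFun ≠ ⊤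

/-- `v`-derivative (within `[0,1]`) of a sampler. -/
def dv1 (θ : ℝ → ℝ × ℝ → ℝ) : ℝ → ℝ × ℝ → ℝ :=
  fun v p => derivWithin (fun w => θ w p) (Icc 0 1) v

/-- An entropy sampler together with a conjugated entropy flux sampler. -/
structure Sampler (f : ℝ → ℝ) (T : ℝ) where
  θ : ℝ → ℝ × ℝ → ℝ
  Q : ℝ → ℝ × ℝ → ℝ
  cpt : HasCompactSupport (Function.uncurry θ)
  supp : Function.support (Function.uncurry θ) ⊆
    Icc (0:ℝ) 1 ×ˢ (Ioo (0:ℝ) T ×ˢ (univ : Set ℝ))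
  smooth_p : ∀ v, ContDiff ℝ (⊤ : ℕ∞) (θ v)
  smooth_v : ∀ p, ContDiffOn ℝ 2 (fun v => θ v p) (Icc 0 1)
  cont0 : Continuous (Function.uncurry θ)
  cont1 : ContinuousOn (Function.uncurry (dv1 θ)) (Icc (0:ℝ) 1 ×ˢ (univ : Set (ℝ × ℝ)))
  cont2 : ContinuousOn (Function.uncurry (dv1 (dv1 θ))) (Icc (0:ℝ) 1 ×ˢ (univ : Set (ℝ × ℝ)))
  Qsmooth : ∀ v, ContDiff ℝ 1 (Q v)
  Qflux : ∀ (p : ℝ × ℝ), ∀ a ∈ Icc (0:ℝ) 1, ∀ b ∈ Icc (0:ℝ) 1,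
    Q b p - Q a p = ∫ v in a..b, dv1 θ v p * deriv f v

/-- The `ϑ`-sampled entropy production `P_{ϑ,u}`. -/
def Ptheta (f : ℝ → ℝ) (T : ℝ) (S : Sampler f T) (u : ℝ × ℝ → ℝ) : ℝ :=
  - ∫ p in Icc (0:ℝ) T ×ˢ (univ : Set ℝ),
      (fderiv ℝ (S.θ (u p)) p (1, 0) + fderiv ℝ (S.Q (u p)) p (0, 1))

/-- `(ρp, ρn)` is a decomposition of the kinetic measure `ϱ_u` of a weak solution `u`. -/
def IsKineticMeasure (f : ℝ → ℝ) (T : ℝ) (u : ℝ × ℝ → ℝ)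
    (ρp ρn : ℝ → Measure (ℝ × ℝ)) : Prop :=
  (∀ v, ρp v ((Ioo (0:ℝ) T ×ˢ (univ : Set ℝ))ᶜ) = 0 ∧
        ρn v ((Ioo (0:ℝ) T ×ˢ (univ : Set ℝ))ᶜ) = 0) ∧
  (∀ L > 0, ∃ C : ℝ≥0∞, C ≠ ⊤ ∧ ∀ v ∈ Icc (0:ℝ) 1,
      ρp v (Icc (0:ℝ) T ×ˢ Icc (-L) L) + ρn v (Icc (0:ℝ) T ×ˢ Icc (-L) L) ≤ C) ∧
  (∀ g : ℝ × ℝ → ℝ, Continuous g → HasCompactSupport g →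
      Measurable fun v => (∫ p, g p ∂ ρp v) - ∫ p, g p ∂ ρn v) ∧
  ∀ S : Sampler f T, Ptheta f T S u =
    ∫ v in Icc (0:ℝ) 1,
      ((∫ p, dv1 (dv1 S.θ) v p ∂ ρp v) - ∫ p, dv1 (dv1 S.θ) v p ∂ ρn v)

/-- The Γ-entropy cost functional `H`. -/
def Hfun (f D σ : ℝ → ℝ) (T : ℝ) (u : cU T) : ℝ≥0∞ :=
  if IsWeakSolution f T u.toFun then
    ⨅ ρ : { ρ : (ℝ → Measure (ℝ × ℝ)) × (ℝ → Measure (ℝ × ℝ)) //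
            IsKineticMeasure f T u.toFun ρ.1 ρ.2 },
      ∫⁻ v in Icc (0:ℝ) 1, ENNReal.ofReal (D v / σ v) * ρ.1.1 v univ
  else ⊤

/-- Entropic solutions. -/
def EntropicSol (f : ℝ → ℝ) (T : ℝ) (u : cU T) : Prop :=
  IsWeakSolution f T u.toFun ∧
  ∀ E : Entropy f, (∀ v ∈ Icc (0:ℝ) 1, 0 ≤ dIcc (dIcc E.eta) v) →
    ∀ φ : TTest T, (∀ p, 0 ≤ φ.toFun p) → entProd f T E u.toFun φ ≤ 0

/-- There is no interval in which `f` is affine. -/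
def NoAffinePiece (f : ℝ → ℝ) : Prop :=
  ∀ a b : ℝ, 0 ≤ a → a < b → b ≤ 1 →
    ¬ ∃ c d : ℝ, ∀ v ∈ Icc a b, f v = c * v + d

/-- Entropy-splittable solutions. -/
def Splittable (f : ℝ → ℝ) (T : ℝ) (u : cU T) : Prop :=
  EMsol f T u ∧
  ∃ Ep En : Set (ℝ × ℝ), IsClosed Ep ∧ IsClosed En ∧
    Ep ⊆ Icc (0:ℝ) T ×ˢ (univ : Set ℝ) ∧ En ⊆ Icc (0:ℝ) T ×ˢ (univ : Set ℝ) ∧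
    (∃ ρp ρn : ℝ → Measure (ℝ × ℝ), IsKineticMeasure f T u.toFun ρp ρn ∧
      ∀ᵐ v ∂(volume.restrict (Icc (0:ℝ) 1)), ρp v Epᶜ = 0 ∧ ρn v Enᶜ = 0) ∧
    ∀ L > 0, ∀ a b : ℝ, 0 ≤ a → a < b → b ≤ T →
      ∃ a' b' : ℝ, a ≤ a' ∧ a' < b' ∧ b' ≤ b ∧
        ∀ t ∈ Ioo a' b', ∀ x ∈ Icc (-L) L, (t, x) ∉ Ep ∩ En

/-- Nice solutions with respect to `σ`: the set `𝒮_σ`. -/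
def NiceSol (f D σ : ℝ → ℝ) (T : ℝ) (u : cU T) : Prop :=
  Splittable f T u ∧ Hfun f D σ T u ≠ ⊤ ∧
  ∀ L > 0, ∃ δ > 0,
    ∀ᵐ p ∂(volume.restrict (Icc (0:ℝ) T ×ˢ Icc (-L) L)), δ ≤ σ (u.toFun p)

/-- The relaxed functional `H̄`. -/
def Hbar (f D σ : ℝ → ℝ) (T : ℝ) (u : cU T) : ℝ≥0∞ :=
  ⨅ s : { s : ℕ → cU T // (∀ n, NiceSol f D σ T (s n)) ∧
          Tendsto (fun n => dX T (s n) u) atTop (𝓝 0) },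
    Filter.liminf (fun n => Hfun f D σ T (s.1 n)) atTop

/-- Continuity in time with values in `L¹_loc(ℝ)`. -/
def ContL1 (T : ℝ) (u : ℝ × ℝ → ℝ) : Prop :=
  ∀ t₀ ∈ Icc (0:ℝ) T, ∀ R > 0, ∀ δ > 0, ∃ ζ > 0, ∀ t ∈ Icc (0:ℝ) T,
    |t - t₀| < ζ → (∫ x in Icc (-R) R, |u (t, x) - u (t₀, x)|) < δ

/-! ### The relaxation `R_{f,σ}` and the Γ-limit `I` on `𝒰` -/

/-- The function `R_{f,σ}(w,c)`. -/
def Rfs (f σ : ℝ → ℝ) (w c : ℝ) : ℝ≥0∞ :=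
  ⨅ ν : { ν : Measure ℝ // IsProbabilityMeasure ν ∧ ν (Icc (0:ℝ) 1)ᶜ = 0 ∧ (∫ l, l ∂ν) = w },
    if (∫ l, σ l ∂ν.1) = 0 then (if (∫ l, f l ∂ν.1) = c then 0 else ⊤)
    else ENNReal.ofReal ((∫ l, f l ∂ν.1 - c) ^ 2 / ∫ l, σ l ∂ν.1)

/-- The Γ-limit `I` of `I_ε` on `𝒰`. -/
def Ilim (f σ : ℝ → ℝ) (T : ℝ) (u : cU T) : ℝ≥0∞ :=
  ⨅ Φ : { Φ : ℝ × ℝ → ℝ // L2loc T Φ ∧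
          ∀ φ : TTest T, - pair T Φ (pxF φ.toFun) = pair T u.toFun (ptF φ.toFun) },
    ∫⁻ p in Icc (0:ℝ) T ×ˢ (univ : Set ℝ), Rfs f σ (u.toFun p) (Φ.1 p)

/-! ### The classes `𝓜_g` and `𝓜₀` -/

/-- The class `𝓜_g`. -/
def Mg (f σ : ℝ → ℝ) (T : ℝ) (μ : YM T) : Prop :=
  calI f σ T μ ≠ ⊤ ∧
  ∃ r > 0, ∃ L > 0, ∃ ν : Measure ℝ, IsProbabilityMeasure ν ∧ ν (Icc (0:ℝ) 1)ᶜ = 0 ∧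
    (∀ p : ℝ × ℝ, p.1 ∈ Icc (0:ℝ) T → r ≤ μ.mom (fun l => l) p ∧ r ≤ μ.mom σ p) ∧
    ∀ p : ℝ × ℝ, p.1 ∈ Icc (0:ℝ) T → L < |p.2| → μ.m p = ν

/-- The class `𝓜₀` of Dirac masses of smooth functions in `𝓜_g`. -/
def M0 (f σ : ℝ → ℝ) (T : ℝ) (μ : YM T) : Prop :=
  Mg f σ T μ ∧ ∃ u : ℝ × ℝ → ℝ, ContDiff ℝ 1 u ∧ (∀ p, u p ∈ Icc (0:ℝ) 1) ∧
    ∀ p, μ.m p = Measure.dirac (u p)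

/-! ### The spaces `𝓓¹_a` and the Riesz representation of the cost -/

/-- `P` represents (the gradient of) an element of the Hilbert space `𝓓¹_a`. -/
def InD1 (T : ℝ) (a P : ℝ × ℝ → ℝ) : Prop :=
  Measurable P ∧ IntegrableOn (fun p => a p * P p ^ 2) (Icc (0:ℝ) T ×ˢ (univ : Set ℝ)) ∧
  ∀ δ > 0, ∃ φ : TTestC,
    (∫ p in Icc (0:ℝ) T ×ˢ (univ : Set ℝ), a p * (P p - pxF φ.toFun p) ^ 2) < δ

/-- The extended linear functional `ℓ^u_ε(φ)` with boundary terms. -/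
def ellC (f D : ℝ → ℝ) (T ε : ℝ) (u w : ℝ × ℝ → ℝ) (φ : TTestC) : ℝ :=
  (∫ x, u (T, x) * φ.toFun (T, x)) - (∫ x, u (0, x) * φ.toFun (0, x))
    - pair T u (ptF φ.toFun) - pair T (fun p => f (u p)) (pxF φ.toFun)
    + ε / 2 * pair T (fun p => D (u p) * w p) (pxF φ.toFun)

/-- `u` is a weak solution to `u_t + f(u)_x = (ε/2)(D(u)u_x)_x - (σ(u)Ψ_x)_x` with `Ψ_x = P`. -/
def rieszEq (f D σ : ℝ → ℝ) (T ε : ℝ) (u w P : ℝ × ℝ → ℝ) : Prop :=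
  ∀ φ : TTestC,
    (∫ x, u (T, x) * φ.toFun (T, x)) - (∫ x, u (0, x) * φ.toFun (0, x))
      - (pair T u (ptF φ.toFun)
        + pair T (fun p => f (u p) - ε / 2 * (D (u p) * w p) + σ (u p) * P p)
            (pxF φ.toFun)) = 0

/-- `μ(ι)_t + μ(f)_x = -(μ(σ) P)_x` weakly. -/
def calIEq (f σ : ℝ → ℝ) (T : ℝ) (μ : YM T) (P : ℝ × ℝ → ℝ) : Prop :=
  ∀ φ : TTest T,
    - pair T (μ.mom (fun l => l)) (ptF φ.toFun) - pair T (μ.mom f) (pxF φ.toFun)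
      = pair T (fun p => μ.mom σ p * P p) (pxF φ.toFun)

/-! ### The cost functional on `L¹_loc` -/

/-- Locally integrable on `[0,T] × ℝ`. -/
def L1loc (T : ℝ) (u : ℝ × ℝ → ℝ) : Prop :=
  Measurable u ∧ ∀ R > 0, IntegrableOn u (Icc (0:ℝ) T ×ˢ Icc (-R) R)

/-- The cost functional `Î_ε` on `L¹_loc([0,T] × ℝ)`. -/
def Ihat (f D σ : ℝ → ℝ) (T ε : ℝ) (u : ℝ × ℝ → ℝ) : ℝ≥0∞ :=
  if L2loc T (fun p => f (u p)) ∧ hasDx T u then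
    ⨆ φ : TTest T, ENNReal.ofReal (IexprW f D σ T ε u (wDx T u) φ)
  else ⊤

/-! ### Hamilton–Jacobi equations -/

/-- The space `𝓑` (representatives of equivalence classes modulo additive constants). -/
structure HJ (T : ℝ) where
  b : ℝ × ℝ → ℝ
  meas : Measurable b
  sq : ∀ t ∈ Icc (0:ℝ) T, ∀ R > 0, IntegrableOn (fun x => b (t, x) ^ 2) (Icc (-R) R)
  contL2 : ∀ t₀ ∈ Icc (0:ℝ) T, ∀ R > 0, ∀ δ > 0, ∃ ζ > 0, ∀ t ∈ Icc (0:ℝ) T,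
    |t - t₀| < ζ → (∫ x in Icc (-R) R, (b (t, x) - b (t₀, x)) ^ 2) < δ
  ux : cU T
  hux : ∀ φ : TTest T, pair T b (pxF φ.toFun) = - pair T ux.toFun φ.toFun

/-- The part of the distance on `𝓑` involving the infimum over additive constants. -/
def dConst (T : ℝ) (b1 b2 : HJ T) : ℝ :=
  sInf { r : ℝ | ∃ c : ℝ, r = sSup { s : ℝ | ∃ t ∈ Icc (0:ℝ) T,
    s = ∑' n : ℕ, (2 : ℝ)⁻¹ ^ (n + 1) *
      Real.sqrt (∫ x in Icc (-((n : ℝ) + 1)) ((n : ℝ) + 1),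
        (b1.b (t, x) - b2.b (t, x) + c) ^ 2) } }

/-- The metric `d_𝓑`. -/
def dB (T : ℝ) (b1 b2 : HJ T) : ℝ := dcU T b1.ux b2.ux + dConst T b1 b2

/-- The metric `d_𝒴`. -/
def dY (T : ℝ) (b1 b2 : HJ T) : ℝ := dX T b1.ux b2.ux + dConst T b1 b2

/-- The expression inside the supremum defining `J_ε`. -/
def JexprW (f D σ : ℝ → ℝ) (T ε : ℝ) (bb uxf w2 : ℝ × ℝ → ℝ) (φ : TTest T) : ℝ :=
  - pair T bb (ptF φ.toFun) + pair T (fun p => f (uxf p)) φ.toFun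
    - ε / 2 * pair T (fun p => D (uxf p) * w2 p) φ.toFun
    - 1 / 2 * pair T (fun p => σ (uxf p) * φ.toFun p) φ.toFun

/-- The cost functional `J_ε` on `𝓑`. -/
def Jeps (f D σ : ℝ → ℝ) (T ε : ℝ) (b : HJ T) : ℝ≥0∞ :=
  if hasDx T b.ux.toFun then
    ⨆ φ : TTest T, ENNReal.ofReal (JexprW f D σ T ε b.b b.ux.toFun (wDx T b.ux.toFun) φ)
  else ⊤

/-- The rescaled cost functional `K_ε := ε⁻¹ J_ε`. -/
def Keps (f D σ : ℝ → ℝ) (T ε : ℝ) (b : HJ T) : ℝ≥0∞ :=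
  ENNReal.ofReal ε⁻¹ * Jeps f D σ T ε b

/-- Weak solutions to `b_t + f(b_x) = 0`. -/
def HJWeakSol (f : ℝ → ℝ) (T : ℝ) (b : HJ T) : Prop :=
  ∀ φ : TTest T, - pair T b.b (ptF φ.toFun) + pair T (fun p => f (b.ux.toFun p)) φ.toFun = 0

/-- The compatibility condition `b_x = μ(ι)` defining `𝓐`. -/
def APred (T : ℝ) (bm : HJ T × YM T) : Prop :=
  ∀ᵐ p ∂(volume.restrict (Icc (0:ℝ) T ×ˢ (univ : Set ℝ))),
    bm.1.ux.toFun p = bm.2.mom (fun l => l) p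

/-- The metric `d_𝓐`. -/
def dA (T : ℝ) (dw : YM T → YM T → ℝ)
    (x y : { bm : HJ T × YM T // APred T bm }) : ℝ :=
  dB T x.1.1 y.1.1 + dM T dw x.1.2 y.1.2

/-- The lift `𝓙_ε` of `J_ε` to `𝓐`. -/
def calJeps (f D σ : ℝ → ℝ) (T ε : ℝ) (x : { bm : HJ T × YM T // APred T bm }) : ℝ≥0∞ :=
  if ∀ p, x.1.2.m p = Measure.dirac (x.1.1.ux.toFun p) then Jeps f D σ T ε x.1.1 else ⊤

/-- The limiting functional `𝓙` on `𝓐`. -/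
def calJ (f σ : ℝ → ℝ) (T : ℝ) (x : { bm : HJ T × YM T // APred T bm }) : ℝ≥0∞ :=
  ⨆ φ : TTest T, ENNReal.ofReal
    (- pair T x.1.1.b (ptF φ.toFun) + pair T (x.1.2.mom f) φ.toFun
      - 1 / 2 * pair T (fun p => x.1.2.mom σ p * φ.toFun p) φ.toFun)

/-! ### Jump sets and BV solutions -/

/-- The function `ρ(v, u⁺, u⁻)` of Remark 2.3. -/
def rhoJ (f : ℝ → ℝ) (v a b : ℝ) : ℝ :=
  if v ∈ Icc (min a b) (max a b) then
    f b * (a - v) + f a * (v - b) - f v * (a - b)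
  else 0


/-! ### Oscillating functions converge weakly to their mean -/

section

lemma affine_integral (G : ℝ × ℝ → ℝ) {s : ℝ} (v : ℝ × ℝ) :
    ∫ z, G (s • z + v) = |(s ^ 2)⁻¹| * ∫ z, G z := by
  have h1 := Measure.integral_comp_smul (volume : Measure (ℝ × ℝ)) (fun z => G (z + v)) s
  simp only [Module.finrank_prod, Module.finrank_self] at h1
  rw [h1, integral_add_right_eq_self G v]; simp

lemma affine_integrable {G : ℝ × ℝ → ℝ} (hG : Integrable G) {s : ℝ} (hs : s ≠ 0) (v : ℝ × ℝ) :
    Integrable (fun z => G (s • z + v)) := by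
  have := (hG.comp_add_right v)
  exact (integrable_comp_smul_iff volume (fun z => G (z + v)) hs).2 this

lemma L1_cont_aux {g : ℝ × ℝ → ℝ} (hg : Continuous g) (hc : HasCompactSupport g) :
    Tendsto (fun sv : ℝ × (ℝ × ℝ) => ∫ z, |g (sv.1 • z + sv.2) - g z|) (𝓝 (1, 0)) (𝓝 0) := by
  obtain ⟨M, hM⟩ := hc.exists_bound_of_continuous hg
  obtain ⟨R, hR⟩ := hc.isCompact.isBounded.subset_closedBall (0 : ℝ × ℝ)
  have hsupp : ∀ z : ℝ × ℝ, R < ‖z‖ → g z = 0 := by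
    intro z hz
    by_contra h
    have : z ∈ Metric.closedBall (0 : ℝ × ℝ) R := hR (subset_tsupport _ h)
    simp at this; linarith
  have h0 : (0:ℝ) = ∫ z : ℝ × ℝ, (0:ℝ) := by simp
  rw [h0]
  refine tendsto_integral_filter_of_dominated_convergence
    ((Metric.closedBall (0 : ℝ × ℝ) (2 * |R| + 2)).indicator (fun _ => 2 * M)) ?_ ?_ ?_ ?_
  · refine Eventually.of_forall fun sv => ?_
    exact (Continuous.aestronglyMeasurable (by fun_prop))
  · have e1 : ∀ᶠ sv : ℝ × (ℝ × ℝ) in 𝓝 (1, 0), 1/2 < sv.1 :=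
      (continuous_fst.tendsto _).eventually (lt_mem_nhds (by norm_num))
    have e2 : ∀ᶠ sv : ℝ × (ℝ × ℝ) in 𝓝 (1, 0), ‖sv.2‖ < 1 :=
      ((continuous_snd.norm).tendsto _).eventually (gt_mem_nhds (by simp))
    filter_upwards [e1, e2] with sv h1 h2
    refine Eventually.of_forall fun z => ?_
    have hM0 : 0 ≤ M := (norm_nonneg _).trans (hM 0)
    by_cases hz : z ∈ Metric.closedBall (0 : ℝ × ℝ) (2 * |R| + 2)
    · rw [indicator_of_mem hz, Real.norm_eq_abs, abs_abs]
      have a := hM (sv.1 • z + sv.2); have b := hM z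
      rw [Real.norm_eq_abs] at a b
      have := abs_sub (g (sv.1 • z + sv.2)) (g z)
      linarith
    · rw [indicator_of_notMem hz]
      simp only [Metric.mem_closedBall, dist_zero_right, not_le] at hz
      have hRR := le_abs_self R
      have hR0 := abs_nonneg R
      rw [hsupp z (by linarith), hsupp (sv.1 • z + sv.2)]
      · simp
      · have : ‖sv.1 • z‖ ≤ ‖sv.1 • z + sv.2‖ + ‖sv.2‖ := by
          simpa using norm_sub_le (sv.1 • z + sv.2) sv.2
        rw [norm_smul, Real.norm_eq_abs, abs_of_pos (by linarith)] at this
        nlinarith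
  · rw [integrable_indicator_iff measurableSet_closedBall]
    exact integrableOn_const measure_closedBall_lt_top.ne enorm_ne_top
  · refine Eventually.of_forall fun z => ?_
    have : Continuous fun sv : ℝ × (ℝ × ℝ) => |g (sv.1 • z + sv.2) - g z| := by fun_prop
    simpa using this.tendsto (1, 0)

/-- Dilations and translations act continuously on `L¹`. -/
lemma L1_cont {G : ℝ × ℝ → ℝ} (hG : Integrable G) :
    Tendsto (fun sv : ℝ × (ℝ × ℝ) => ∫ z, |G (sv.1 • z + sv.2) - G z|) (𝓝 (1, 0)) (𝓝 0) := by
  rw [Metric.tendsto_nhds]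
  intro ε hε
  obtain ⟨g, hc, hle, hg, hgi⟩ := hG.exists_hasCompactSupport_integral_sub_le
    (show (0:ℝ) < ε / 10 by positivity)
  have e1 : ∀ᶠ sv : ℝ × (ℝ × ℝ) in 𝓝 (1, 0), 1/2 < sv.1 :=
      (continuous_fst.tendsto _).eventually (lt_mem_nhds (by norm_num))
  have e3 := (Metric.tendsto_nhds.1 (L1_cont_aux hg hc)) (ε / 10) (by positivity)
  filter_upwards [e1, e3] with sv h1 h3
  have hs : sv.1 ≠ 0 := by linarith
  have i1 := affine_integrable hG hs sv.2
  have i2 := affine_integrable hgi hs sv.2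
  have nn : 0 ≤ ∫ z, |G (sv.1 • z + sv.2) - G z| := integral_nonneg fun _ => abs_nonneg _
  rw [Real.dist_eq, sub_zero, abs_of_nonneg nn]
  rw [Real.dist_eq, sub_zero] at h3
  have h3' := (le_abs_self _).trans_lt h3
  have hk : ∫ z, |G (sv.1 • z + sv.2) - G z| ≤
      ∫ z, (|G (sv.1 • z + sv.2) - g (sv.1 • z + sv.2)| + |g (sv.1 • z + sv.2) - g z| +
        |G z - g z|) := by
    refine integral_mono (i1.sub hG).abs (((i1.sub i2).abs.add (i2.sub hgi).abs).add
      (hG.sub hgi).abs) fun z => ?_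
    have := abs_sub_le (G (sv.1 • z + sv.2)) (g (sv.1 • z + sv.2)) (G z)
    have h := abs_sub_le (g (sv.1 • z + sv.2)) (g z) (G z)
    rw [abs_sub_comm (g z)] at h
    dsimp only; linarith
  have ha := affine_integral (fun z => |G z - g z|) (s := sv.1) sv.2
  have hle' : ∫ z, |G z - g z| ≤ ε / 10 := by simpa [Real.norm_eq_abs] using hle
  have hb : |(sv.1 ^ 2)⁻¹| ≤ 4 := by
    rw [abs_of_nonneg (by positivity)]
    rw [inv_le_comm₀ (by positivity) (by norm_num)]; nlinarith
  have hcc : ∫ z, |G (sv.1 • z + sv.2) - g (sv.1 • z + sv.2)| ≤ 4 * (ε / 10) := by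
    rw [ha]; exact mul_le_mul hb hle' (integral_nonneg fun _ => abs_nonneg _) (by norm_num)
  have hsum : ∫ z, (|G (sv.1 • z + sv.2) - g (sv.1 • z + sv.2)| + |g (sv.1 • z + sv.2) - g z| +
        |G z - g z|) = (∫ z, |G (sv.1 • z + sv.2) - g (sv.1 • z + sv.2)|) +
        (∫ z, |g (sv.1 • z + sv.2) - g z|) + ∫ z, |G z - g z| := by
    rw [integral_add, integral_add]
    · exact (i1.sub i2).abs
    · exact (i2.sub hgi).abs
    · exact (i1.sub i2).abs.add (i2.sub hgi).abs
    · exact (hG.sub hgi).abs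
  linarith

/-- Rapidly oscillating periodic functions converge weakly to their mean. -/
lemma equidist {q : ℝ → ℝ} (hq : Measurable q) (hq1 : ∀ y, |q y| ≤ 1)
    (hper : Function.Periodic q 1) {G : ℝ × ℝ → ℝ} (hG : Integrable G)
    (ℓ : ℝ × ℝ →L[ℝ] ℝ) (hℓ : ℓ ≠ 0) :
    Tendsto (fun k : ℕ => ∫ z, q (k * ℓ z) * G z) atTop (𝓝 ((∫ y in (0:ℝ)..1, q y) * ∫ z, G z)) := by
  obtain ⟨e, he⟩ : ∃ e, ℓ e = 1 := by
    obtain ⟨e, he⟩ : ∃ e, ℓ e ≠ 0 := by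
      by_contra h; push Not at h; exact hℓ (ContinuousLinearMap.ext h)
    exact ⟨(ℓ e)⁻¹ • e, by simp [he]⟩
  have hLm : Measurable ℓ := ℓ.continuous.measurable
  rw [Metric.tendsto_atTop]
  intro ε hε
  obtain ⟨δ, hδ, hball⟩ := Metric.eventually_nhds_iff.1
    ((Metric.tendsto_nhds.1 (L1_cont hG)) (ε / 2) (by positivity))
  obtain ⟨K, hK⟩ := exists_nat_gt (‖e‖ / δ)
  refine ⟨K + 1, fun k hk => ?_⟩
  have hk0 : (0:ℝ) < k := by exact_mod_cast (by omega : 0 < k)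
  have hkK : ‖e‖ / δ < k := hK.trans (by exact_mod_cast (by omega : K < k))
  -- translation by `(τ / k) e` shifts the phase by `τ`
  have hshift : ∀ τ : ℝ, ∫ z, q (k * ℓ z) * G z =
      ∫ z, q (k * ℓ z + τ) * G (z + (τ / k) • e) := by
    intro τ
    rw [← integral_add_right_eq_self (fun z => q (k * ℓ z) * G z) ((τ / k) • e)]
    refine integral_congr_ae (Eventually.of_forall fun z => ?_)
    simp only [map_add, map_smul, he, smul_eq_mul, mul_one]
    congr 2
    field_simp
  have hqi : ∀ (τ : ℝ) (F : ℝ × ℝ → ℝ), Integrable F →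
      Integrable fun z => q (k * ℓ z + τ) * F z := by
    intro τ F hF
    refine hF.bdd_mul (c := 1) ?_ (Eventually.of_forall fun z => by
      simpa [Real.norm_eq_abs] using hq1 _)
    exact (hq.comp (by fun_prop)).aestronglyMeasurable
  have hclose : ∀ τ ∈ Ioc (0:ℝ) 1, |(∫ z, q (k * ℓ z) * G z) - ∫ z, q (k * ℓ z + τ) * G z| ≤ ε / 2 := by
    intro τ hτ
    have hτi : Integrable fun z => G (z + (τ / k) • e) := hG.comp_add_right _
    rw [hshift τ, ← integral_sub (hqi τ _ hτi) (hqi τ _ hG)]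
    have hb := hball (y := (1, (τ / k) • e)) (by
      rw [Prod.dist_eq]; simp [norm_smul]
      refine ⟨hδ, ?_⟩
      rw [abs_of_pos hτ.1]
      rw [div_lt_iff₀ hδ] at hkK
      rw [div_mul_eq_mul_div, div_lt_iff₀ hk0]
      have : τ * ‖e‖ ≤ 1 * ‖e‖ := mul_le_mul_of_nonneg_right hτ.2 (norm_nonneg _)
      linarith)
    rw [Real.dist_eq, sub_zero] at hb
    simp only [one_smul] at hb
    refine (abs_integral_le_integral_abs).trans (le_trans ?_ ((le_abs_self _).trans hb.le))
    refine integral_mono ((hqi τ _ hτi).sub (hqi τ _ hG)).abs (hτi.sub hG).abs fun z => ?_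
    rw [← mul_sub, abs_mul]
    exact mul_le_of_le_one_left (abs_nonneg _) (hq1 _)
  have hfub : ∫ τ in (0:ℝ)..1, ∫ z, q (k * ℓ z + τ) * G z = (∫ y in (0:ℝ)..1, q y) * ∫ z, G z := by
    rw [intervalIntegral.integral_of_le zero_le_one]
    rw [integral_integral_swap]
    · rw [← integral_const_mul]
      refine integral_congr_ae (Eventually.of_forall fun z => ?_)
      dsimp only
      rw [integral_mul_const]
      congr 1
      rw [← intervalIntegral.integral_of_le zero_le_one,
        intervalIntegral.integral_comp_add_left (fun y => q y)]
      have := hper.intervalIntegral_add_eq (k * ℓ z) 0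
      simpa using this
    · have : Integrable (fun p : ℝ × (ℝ × ℝ) => G p.2) ((volume.restrict (Ioc (0:ℝ) 1)).prod volume) :=
        hG.comp_snd (volume.restrict (Ioc (0:ℝ) 1))
      refine this.bdd_mul (c := 1) ?_ (Eventually.of_forall fun z => by
        simpa [Real.norm_eq_abs] using hq1 _)
      exact (hq.comp (by fun_prop)).aestronglyMeasurable
  have hmeas : IntervalIntegrable (fun τ => ∫ z, q (k * ℓ z + τ) * G z) volume 0 1 := by
    rw [intervalIntegrable_iff_integrableOn_Ioc_of_le zero_le_one]
    have : Integrable (fun p : ℝ × (ℝ × ℝ) => q (k * ℓ p.2 + p.1) * G p.2) ((volume.restrict (Ioc (0:ℝ) 1)).prod volume) := by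
      have : Integrable (fun p : ℝ × (ℝ × ℝ) => G p.2) ((volume.restrict (Ioc (0:ℝ) 1)).prod volume) :=
        hG.comp_snd (volume.restrict (Ioc (0:ℝ) 1))
      refine this.bdd_mul (c := 1) ?_ (Eventually.of_forall fun z => by
        simpa [Real.norm_eq_abs] using hq1 _)
      exact (hq.comp (by fun_prop)).aestronglyMeasurable
    exact this.integral_prod_left
  have hfin : (∫ z, q (k * ℓ z) * G z) - (∫ y in (0:ℝ)..1, q y) * ∫ z, G z =
      ∫ τ in (0:ℝ)..1, ((∫ z, q (k * ℓ z) * G z) - ∫ z, q (k * ℓ z + τ) * G z) := by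
    rw [intervalIntegral.integral_sub (by simp) hmeas, hfub]; simp
  rw [Real.dist_eq, hfin]
  have := intervalIntegral.norm_integral_le_of_norm_le_const (a := (0:ℝ)) (b := 1) (C := ε / 2)
    (f := fun τ => ((∫ z, q (k * ℓ z) * G z) - ∫ z, q (k * ℓ z + τ) * G z)) (by
      intro τ hτ
      rw [uIoc_of_le zero_le_one] at hτ
      simpa [Real.norm_eq_abs] using hclose τ hτ)
  rw [Real.norm_eq_abs] at this
  simp at this
  linarith

end

/-! ### Periodic profiles -/

section

/-- The `1`-periodic set of reals whose fractional part lies in `(a, b)`. -/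
def frSet (a b : ℝ) : Set ℝ := {y | Int.fract y ∈ Ioo a b}

lemma frSet_open {a b : ℝ} (ha : 0 ≤ a) (hb : b ≤ 1) : IsOpen (frSet a b) := by
  have : frSet a b = ⋃ n : ℤ, Ioo ((n : ℝ) + a) (n + b) := by
    ext y
    simp only [frSet, mem_ofPred_eq, mem_iUnion, mem_Ioo]
    constructor
    · rintro ⟨h1, h2⟩
      refine ⟨⌊y⌋, ?_⟩
      have := Int.floor_add_fract y
      constructor <;> linarith
    · rintro ⟨n, h1, h2⟩
      have : Int.fract y = y - n := by
        rw [Int.fract_eq_iff]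
        exact ⟨by linarith, by linarith, n, by ring⟩
      rw [this]; constructor <;> linarith
  rw [this]
  exact isOpen_iUnion fun _ => isOpen_Ioo

/-- The indicator of `frSet a b`. -/
def frInd (a b : ℝ) : ℝ → ℝ := (frSet a b).indicator fun _ => 1

lemma frInd_meas {a b : ℝ} (ha : 0 ≤ a) (hb : b ≤ 1) : Measurable (frInd a b) :=
  measurable_const.indicator (frSet_open ha hb).measurableSet

lemma frInd_abs (a b y : ℝ) : |frInd a b y| ≤ 1 := by
  unfold frInd indicator; split_ifs <;> simp

lemma frInd_periodic (a b : ℝ) : Function.Periodic (frInd a b) 1 := by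
  intro y
  simp [frInd, indicator, frSet]

lemma frInd_mean {a b : ℝ} (ha : 0 ≤ a) (hab : a ≤ b) (hb : b ≤ 1) :
    ∫ y in (0:ℝ)..1, frInd a b y = b - a := by
  have h1 : ∫ y in (0:ℝ)..1, frInd a b y = ∫ y in (0:ℝ)..1, (Ioo a b).indicator (fun _ => (1:ℝ)) y := by
    rw [intervalIntegral.integral_of_le zero_le_one, intervalIntegral.integral_of_le zero_le_one,
      integral_Ioc_eq_integral_Ioo, integral_Ioc_eq_integral_Ioo]
    refine setIntegral_congr_fun measurableSet_Ioo fun y hy => ?_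
    have : Int.fract y = y := Int.fract_eq_self.2 ⟨hy.1.le, hy.2⟩
    simp [frInd, indicator, frSet, this]
  rw [h1, intervalIntegral.integral_of_le zero_le_one, integral_Ioc_eq_integral_Ioo,
    setIntegral_indicator measurableSet_Ioo]
  have : Ioo (0:ℝ) 1 ∩ Ioo a b = Ioo a b := inter_eq_right.2 (Ioo_subset_Ioo ha hb)
  rw [this]; simp [hab]

/-- A bounded `C²` function whose derivative plus `θ` is a smoothed characteristic function of a
`1`-periodic set of density about `θ`. -/
lemma exists_profile {θ γ : ℝ} (hγ : 0 < γ) (h1 : γ < θ) (h2 : 2 * γ + θ < 1) :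
    ∃ H : ℝ → ℝ, ContDiff ℝ 2 H ∧ (∃ B, ∀ y, |H y| ≤ B) ∧
      (∀ y, deriv H y + θ ∈ Icc (0:ℝ) 1) ∧
      (∀ y ∈ frSet (2 * γ) (γ + θ), deriv H y = 1 - θ) ∧
      (∀ y ∈ frSet (2 * γ + θ) 1, deriv H y = - θ) := by
  let S := Real.smoothTransition
  have hS0 : ∀ x ≤ 0, S x = 0 := fun x hx => Real.smoothTransition.zero_of_nonpos hx
  have hS1 : ∀ x, 1 ≤ x → S x = 1 := fun x hx => Real.smoothTransition.one_of_one_le hx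
  have hSm : Monotone S := Real.smoothTransition.monotone
  have hSc : ContDiff ℝ 1 S := Real.smoothTransition.contDiff (n := 1)
  let g : ℝ → ℝ := fun y => S ((y - γ) / γ)
  have hg : ContDiff ℝ 1 g := hSc.comp (by fun_prop)
  have hg0 : ∀ y ≤ γ, g y = 0 := fun y hy => hS0 _ (div_nonpos_of_nonpos_of_nonneg (by linarith) hγ.le)
  have hg1 : ∀ y, 2 * γ ≤ y → g y = 1 := fun y hy => hS1 _ (by rw [le_div_iff₀ hγ]; linarith)
  have hgm : Monotone g := fun x y h => hSm (by gcongr)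
  have hgl : ∀ y, 0 ≤ g y := fun y => Real.smoothTransition.nonneg _
  have hgu : ∀ y, g y ≤ 1 := fun y => Real.smoothTransition.le_one _
  let τ₀ : ℝ → ℝ := fun y => g y - g (y - θ)
  have hτ₀ : ContDiff ℝ 1 τ₀ := hg.sub (hg.comp (by fun_prop))
  let τ : ℝ → ℝ := fun y => τ₀ (Int.fract y)
  have hτ01 : ∀ y, τ y ∈ Icc (0:ℝ) 1 := fun y =>
    ⟨sub_nonneg.2 (hgm (by linarith)), by have := hgu (Int.fract y); have := hgl (Int.fract y - θ); simp only [τ, τ₀]; linarith⟩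
  -- `τ` vanishes near the integers, hence is smooth
  have hτz : ∀ y, (Int.fract y ≤ γ ∨ 2 * γ + θ ≤ Int.fract y) → τ y = 0 := by
    rintro y (h | h)
    · simp only [τ, τ₀]; rw [hg0 _ h, hg0 _ (by linarith)]; simp
    · simp only [τ, τ₀]; rw [hg1 _ (by linarith), hg1 _ (by linarith)]; simp
  have hτc : ContDiff ℝ 1 τ := by
    rw [contDiff_iff_contDiffAt]
    intro y
    by_cases hy : Int.fract y = 0
    · have : τ =ᶠ[𝓝 y] fun _ => 0 := by
        have hyn : y = ⌊y⌋ := by have := Int.floor_add_fract y; linarith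
        filter_upwards [Ioo_mem_nhds (show y - (1 - (2*γ+θ)) < y by linarith)
          (show y < y + γ by linarith)] with x hx
        apply hτz
        rcases le_or_gt y x with h | h
        · left
          have : Int.fract x = x - ⌊y⌋ := by
            rw [Int.fract_eq_iff]; exact ⟨by linarith, by linarith [hx.2], ⌊y⌋, by ring⟩
          rw [this]; linarith [hx.2]
        · right
          have : Int.fract x = x - (⌊y⌋ - 1) := by
            rw [Int.fract_eq_iff]
            exact ⟨by linarith [hx.1], by linarith, ⌊y⌋ - 1, by push_cast; ring⟩
          rw [this]; linarith [hx.1]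
      exact contDiffAt_const.congr_of_eventuallyEq this
    · have h0 : 0 < Int.fract y := lt_of_le_of_ne (Int.fract_nonneg y) (Ne.symm hy)
      have : τ =ᶠ[𝓝 y] fun x => τ₀ (x - ⌊y⌋) := by
        have hf := Int.floor_add_fract y
        have hl := Int.fract_lt_one y
        filter_upwards [Ioo_mem_nhds (show (⌊y⌋:ℝ) < y by linarith)
          (show y < ⌊y⌋ + 1 by linarith)] with x hx
        have : Int.fract x = x - ⌊y⌋ := by
            rw [Int.fract_eq_iff]; exact ⟨by linarith [hx.1], by linarith [hx.2], ⌊y⌋, by ring⟩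
        simp only [τ, this]
      exact (hτ₀.comp (by fun_prop : ContDiff ℝ 1 fun x : ℝ => x - (⌊y⌋ : ℝ))).contDiffAt.congr_of_eventuallyEq this
  have hτper : Function.Periodic τ 1 := fun y => by simp [τ]
  have hgi : ∀ a b, IntervalIntegrable g volume a b := fun a b => hg.continuous.intervalIntegrable a b
  have hmean : ∫ y in (0:ℝ)..1, τ y = θ := by
    have e1 : ∫ y in (0:ℝ)..1, τ y = ∫ y in (0:ℝ)..1, τ₀ y := by
      rw [intervalIntegral.integral_of_le zero_le_one, intervalIntegral.integral_of_le zero_le_one,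
        integral_Ioc_eq_integral_Ioo, integral_Ioc_eq_integral_Ioo]
      refine setIntegral_congr_fun measurableSet_Ioo fun y hy => ?_
      have : Int.fract y = y := Int.fract_eq_self.2 ⟨hy.1.le, hy.2⟩
      simp only [τ, this]
    have hgi' : IntervalIntegrable (fun y => g (y - θ)) volume 0 1 :=
      (hg.continuous.comp (by fun_prop : Continuous fun y : ℝ => y - θ)).intervalIntegrable _ _
    rw [e1, intervalIntegral.integral_sub (hgi _ _) hgi',
      intervalIntegral.integral_comp_sub_right g θ,
      intervalIntegral.integral_interval_sub_interval_comm (hgi _ _) (hgi _ _) (hgi _ _)]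
    have a1 : ∫ x in (0:ℝ)..(0 - θ), g x = 0 := by
      apply intervalIntegral.integral_zero_ae
      refine Eventually.of_forall fun x hx => hg0 _ ?_
      rw [uIoc_of_ge (by linarith)] at hx
      linarith [hx.2]
    have a2 : ∫ x in (1:ℝ)..(1 - θ), g x = ∫ x in (1:ℝ)..(1 - θ), (1:ℝ) := by
      apply intervalIntegral.integral_congr
      intro x hx
      rw [uIcc_of_ge (by linarith)] at hx
      exact hg1 _ (by linarith [hx.1])
    rw [a1, a2]; simp
  let p : ℝ → ℝ := fun y => τ y - θ
  have hpc : ContDiff ℝ 1 p := hτc.sub contDiff_const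
  let H : ℝ → ℝ := fun y => ∫ s in (0:ℝ)..y, p s
  have hH' : ∀ y, HasDerivAt H (p y) y := fun y =>
    (intervalIntegral.integral_hasStrictDerivAt_right (hpc.continuous.intervalIntegrable _ _)
      (hpc.continuous.stronglyMeasurableAtFilter _ _) hpc.continuous.continuousAt).hasDerivAt
  have hHd : deriv H = p := funext fun y => (hH' y).deriv
  have hHc : Continuous H := continuous_iff_continuousAt.2 fun y => (hH' y).continuousAt
  have hHper : Function.Periodic H 1 := by
    intro y
    have hadd : H y + ∫ s in y..(y+1), p s = H (y+1) :=
      intervalIntegral.integral_add_adjacent_intervals (hpc.continuous.intervalIntegrable _ _)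
        (hpc.continuous.intervalIntegrable _ _)
    have hp1 : Function.Periodic p 1 := fun s => by simp only [p, hτper s]
    have h3 := hp1.intervalIntegral_add_eq y 0
    have h4 : ∫ s in (0:ℝ)..0+1, p s = 0 := by
      rw [zero_add, intervalIntegral.integral_sub (hτc.continuous.intervalIntegrable _ _) (by simp), hmean]
      simp
    rw [h3, h4] at hadd
    linarith
  refine ⟨H, ?_, ?_, ?_, ?_, ?_⟩
  · rw [show (2 : WithTop ℕ∞) = 1 + 1 by norm_num, contDiff_succ_iff_deriv]
    refine ⟨fun y => (hH' y).differentiableAt, by simp, by rw [hHd]; exact hpc⟩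
  · obtain ⟨B, hB⟩ := (isCompact_Icc (a := (0:ℝ)) (b := 1)).exists_bound_of_continuousOn hHc.continuousOn
    refine ⟨B, fun y => ?_⟩
    obtain ⟨x, hx, hxy⟩ := hHper.exists_mem_Ico₀ one_pos y
    rw [hxy]; exact hB x ⟨hx.1, hx.2.le⟩
  · intro y; rw [hHd]; simpa [p] using hτ01 y
  · rintro y ⟨ha, hb⟩
    rw [hHd]; simp only [p, τ, τ₀]
    rw [hg1 _ ha.le, hg0 _ (by linarith)]; ring
  · rintro y ⟨ha, hb⟩
    rw [hHd]; simp only [p]; rw [hτz y (Or.inr ha.le)]; ring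

end

/-! ### Simple laminates -/

section

/-- The space-time gradient `(w_t, w_x)`. -/
def gradF (w : ℝ × ℝ → ℝ) (z : ℝ × ℝ) : ℝ × ℝ := (ptF w z, pxF w z)

lemma gradF_add {u v : ℝ × ℝ → ℝ} {z : ℝ × ℝ} (hu : DifferentiableAt ℝ u z)
    (hv : DifferentiableAt ℝ v z) :
    gradF (fun y => u y + v y) z = gradF u z + gradF v z := by
  have : fderiv ℝ (fun y => u y + v y) z = fderiv ℝ u z + fderiv ℝ v z := fderiv_fun_add hu hv
  simp [gradF, ptF, pxF, this]

lemma gradF_zero_of_notMem {u : ℝ × ℝ → ℝ} {z : ℝ × ℝ} (h : z ∉ tsupport u) : gradF u z = 0 := by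
  have : fderiv ℝ u z = 0 := by
    have := image_eq_zero_of_notMem_tsupport (f := fderiv ℝ u) (x := z)
      (fun h' => h (tsupport_fderiv_subset ℝ h'))
    exact this
  simp [gradF, ptF, pxF, this]

lemma gradF_continuous {u : ℝ × ℝ → ℝ} (h : ContDiff ℝ 1 u) : Continuous (gradF u) := by
  have := h.continuous_fderiv one_ne_zero
  unfold gradF ptF pxF
  fun_prop

/-- An open set is exhausted by compact subsets, up to small mass of `|Ψ|`. -/
lemma exists_inner_compact {Ω : Set (ℝ × ℝ)} (hΩ : IsOpen Ω) {Ψ : ℝ × ℝ → ℝ} (hΨ : Integrable Ψ)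
    {κ : ℝ} (hκ : 0 < κ) :
    ∃ C ⊆ Ω, IsCompact C ∧ ∫ z in Ω \ C, |Ψ z| ≤ κ := by
  let ν : Measure (ℝ × ℝ) := volume.withDensity fun z => ‖Ψ z‖ₑ
  have : IsFiniteMeasure ν := isFiniteMeasure_withDensity hΨ.2.ne
  obtain ⟨C, hC, hCc, hlt⟩ := hΩ.measurableSet.exists_isCompact_sdiff_lt (μ := ν) (measure_ne_top _ _)
    (ε := ENNReal.ofReal κ) (by simpa using hκ)
  refine ⟨C, hC, hCc, ?_⟩
  have hm : MeasurableSet (Ω \ C) := hΩ.measurableSet.diff hCc.measurableSet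
  rw [withDensity_apply _ hm] at hlt
  have : ∫ z in Ω \ C, |Ψ z| = (∫⁻ z in Ω \ C, ‖Ψ z‖ₑ).toReal := by
    simp_rw [← Real.norm_eq_abs]
    exact integral_norm_eq_lintegral_enorm hΨ.1.restrict
  rw [this]
  exact ENNReal.toReal_le_of_le_ofReal hκ.le hlt.le

lemma exists_cutoff {C Ω : Set (ℝ × ℝ)} (hC : IsCompact C) (hΩ : IsOpen Ω) (h : C ⊆ Ω) :
    ∃ χ : ℝ × ℝ → ℝ, ContDiff ℝ (⊤ : ℕ∞) χ ∧ HasCompactSupport χ ∧ tsupport χ ⊆ Ω ∧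
      (∀ z, χ z ∈ Icc (0:ℝ) 1) ∧ ∃ V, IsOpen V ∧ C ⊆ V ∧ V ⊆ Ω ∧ ∀ z ∈ V, χ z = 1 := by
  obtain ⟨L, hL, hCL, hLΩ⟩ := exists_compact_between hC hΩ h
  obtain ⟨f, h1, h2, h3⟩ := exists_contMDiffMap_one_nhds_of_subset_interior
    (n := ⊤) (modelWithCornersSelf ℝ (ℝ × ℝ)) hC.isClosed hCL
  have hts : tsupport f ⊆ L := by
    refine closure_minimal ?_ hL.isClosed
    intro x hx
    by_contra hxL
    exact hx (h2 x hxL)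
  refine ⟨f, f.contMDiff.contDiff, hL.of_isClosed_subset (isClosed_tsupport _) hts,
    hts.trans hLΩ, h3, ?_⟩
  obtain ⟨V, hV, hCV, hV1⟩ := eventually_nhdsSet_iff_exists.1 h1
  exact ⟨V ∩ interior L, hV.inter isOpen_interior, subset_inter hCV hCL,
    inter_subset_right.trans (interior_subset.trans hLΩ), fun z hz => hV1 z hz.1⟩

/-- A simple laminate between `ξ₁` and `ξ₂` inside `Ω`: away from a set of small `ψ j`-mass the
gradient takes the two prescribed values on open sets of the prescribed proportions. -/
lemma laminate {K : Set (ℝ × ℝ)} (hK : Convex ℝ K) {ξ₁ ξ₂ : ℝ × ℝ} (h₁ : ξ₁ ∈ K) (h₂ : ξ₂ ∈ K)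
    {a b : ℝ} (ha : 0 < a) (hb : 0 < b) (hab : a + b = 1) {Ω : Set (ℝ × ℝ)} (hΩ : IsOpen Ω)
    {ι : Type} [Fintype ι] (ψ : ι → ℝ × ℝ → ℝ) (hψ : ∀ j, Integrable (ψ j)) {κ : ℝ} (hκ : 0 < κ) :
    ∃ w : ℝ × ℝ → ℝ, ContDiff ℝ 2 w ∧ HasCompactSupport w ∧ tsupport w ⊆ Ω ∧ (∀ z, |w z| ≤ κ) ∧
      (∀ z, ∃ k ∈ K, ‖a • ξ₁ + b • ξ₂ + gradF w z - k‖ ≤ κ) ∧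
      ∃ Ω₁ Ω₂ : Set (ℝ × ℝ), IsOpen Ω₁ ∧ IsOpen Ω₂ ∧ Ω₁ ⊆ Ω ∧ Ω₂ ⊆ Ω ∧ Disjoint Ω₁ Ω₂ ∧
        (∀ z ∈ Ω₁, a • ξ₁ + b • ξ₂ + gradF w z = ξ₁) ∧
        (∀ z ∈ Ω₂, a • ξ₁ + b • ξ₂ + gradF w z = ξ₂) ∧
        (∀ j, |(∫ z in Ω₁, ψ j z) - a * ∫ z in Ω, ψ j z| ≤ κ) ∧
        (∀ j, |(∫ z in Ω₂, ψ j z) - b * ∫ z in Ω, ψ j z| ≤ κ) := by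
  -- the direction of lamination
  obtain ⟨ℓ, c₀, hℓ, hℓη⟩ : ∃ (ℓ : ℝ × ℝ →L[ℝ] ℝ) (c₀ : ℝ), ℓ ≠ 0 ∧
      (c₀ * ℓ (1, 0), c₀ * ℓ (0, 1)) = ξ₁ - ξ₂ := by
    by_cases h0 : ξ₁ - ξ₂ = 0
    · refine ⟨ContinuousLinearMap.fst ℝ ℝ ℝ, 0, ?_, by simp [h0]⟩
      intro h
      have := DFunLike.congr_fun h (1, 0)
      simp at this
    · let ℓ : ℝ × ℝ →L[ℝ] ℝ := (ξ₁ - ξ₂).1 • ContinuousLinearMap.fst ℝ ℝ ℝ +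
        (ξ₁ - ξ₂).2 • ContinuousLinearMap.snd ℝ ℝ ℝ
      have e : (1 * ℓ (1, 0), 1 * ℓ (0, 1)) = ξ₁ - ξ₂ := by ext <;> simp [ℓ]
      refine ⟨ℓ, 1, ?_, e⟩
      intro h
      rw [h] at e
      exact h0 (e.symm.trans (by simp))
  have hΨ : Integrable fun z => ∑ j, |ψ j z| := integrable_finsetSum _ fun j _ => (hψ j).abs
  set N := ∫ z, ∑ j, |ψ j z| with hN
  have hN0 : 0 ≤ N := integral_nonneg fun z => Finset.sum_nonneg fun j _ => abs_nonneg _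
  have hjle : ∀ j z, |ψ j z| ≤ ∑ j, |ψ j z| := fun j z =>
    Finset.single_le_sum (f := fun j => |ψ j z|) (fun i _ => abs_nonneg _) (Finset.mem_univ j)
  obtain ⟨C, hCΩ, hC, hCκ⟩ := exists_inner_compact hΩ hΨ (show 0 < κ / 3 by positivity)
  obtain ⟨χ, hχ, hχc, hχΩ, hχ01, V, hV, hCV, hVΩ, hχ1⟩ := exists_cutoff hC hΩ hCΩ
  obtain ⟨γ, hγ, hγa, hγb, hγN⟩ : ∃ γ : ℝ, 0 < γ ∧ γ < a ∧ 2 * γ < b ∧ 2 * γ * N ≤ κ / 3 := by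
    refine ⟨min (a / 2) (min (b / 4) (κ / (6 * (N + 1)))), by positivity, ?_, ?_, ?_⟩
    · exact (min_le_left _ _).trans_lt (by linarith)
    · have := (min_le_right (a / 2) (min (b / 4) (κ / (6 * (N + 1))))).trans (min_le_left _ _)
      linarith
    · have := (min_le_right (a / 2) (min (b / 4) (κ / (6 * (N + 1))))).trans (min_le_right _ _)
      rw [le_div_iff₀ (by positivity)] at this
      have h0 : 0 < min (a / 2) (min (b / 4) (κ / (6 * (N + 1)))) := by positivity
      nlinarith
  obtain ⟨H, hH, ⟨B, hB⟩, hH01, hHO1, hHO2⟩ := exists_profile hγ hγa (by linarith)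
  have hB0 : 0 ≤ B := (abs_nonneg _).trans (hB 0)
  -- bound on the gradient of the cutoff
  obtain ⟨Cχ, hCχ⟩ : ∃ Cχ, ∀ z, ‖gradF χ z‖ ≤ Cχ := by
    have hcs : HasCompactSupport (gradF χ) :=
      hχc.mono' fun z hz => by
        by_contra hz'; exact hz (gradF_zero_of_notMem hz')
    exact hcs.exists_bound_of_continuous (gradF_continuous (hχ.of_le (by exact_mod_cast le_top)))
  have hCχ0 : 0 ≤ Cχ := (norm_nonneg _).trans (hCχ 0)
  -- masses of the flat regions
  have hmass : ∀ (x y : ℝ), 0 ≤ x → y ≤ 1 → x ≤ y → ∀ θ : ℝ, 0 ≤ θ → θ ≤ 1 → |y - x - θ| ≤ 2 * γ → ∀ j,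
      ∀ᶠ k : ℕ in atTop, |(∫ z in V ∩ {z | (k * ℓ z : ℝ) ∈ frSet x y}, ψ j z)
        - θ * ∫ z in Ω, ψ j z| ≤ κ := by
    intro x y hx hy hxy θ hθ0 hθ1 hθ j
    have hi : Integrable (V.indicator (ψ j)) := (hψ j).indicator hV.measurableSet
    have hlim := equidist (frInd_meas hx hy) (frInd_abs x y) (frInd_periodic x y) hi ℓ hℓ
    rw [frInd_mean hx hxy hy, integral_indicator hV.measurableSet] at hlim
    have hev := (Metric.tendsto_nhds.1 hlim) (κ / 3) (by positivity)
    filter_upwards [hev] with k hk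
    have hO : MeasurableSet {z | (k * ℓ z : ℝ) ∈ frSet x y} :=
      ((frSet_open hx hy).preimage (by fun_prop : Continuous fun z => (k * ℓ z : ℝ))).measurableSet
    have e1 : ∫ z in V ∩ {z | (k * ℓ z : ℝ) ∈ frSet x y}, ψ j z =
        ∫ z, frInd x y (k * ℓ z) * V.indicator (ψ j) z := by
      rw [← integral_indicator (hV.measurableSet.inter hO)]
      refine integral_congr_ae (Eventually.of_forall fun z => ?_)
      by_cases hz : z ∈ V <;> by_cases hz2 : (k * ℓ z : ℝ) ∈ frSet x y <;>
        simp [indicator, frInd, hz, hz2]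
    rw [Real.dist_eq] at hk
    rw [e1]
    have hVj : |∫ z in V, ψ j z| ≤ N := by
      refine (abs_integral_le_integral_abs).trans ?_
      refine (setIntegral_le_integral (hψ j).abs (Eventually.of_forall fun z => abs_nonneg _)).trans ?_
      exact integral_mono (hψ j).abs hΨ (hjle j)
    have hdiff : |(∫ z in Ω, ψ j z) - ∫ z in V, ψ j z| ≤ κ / 3 := by
      rw [← setIntegral_sdiff hV.measurableSet (hψ j).integrableOn hVΩ]
      refine (abs_integral_le_integral_abs).trans (le_trans ?_ hCκ)
      refine (integral_mono (hψ j).abs.integrableOn hΨ.integrableOn (hjle j)).trans ?_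
      have habs : ∀ z, |(∑ j, |ψ j z|)| = ∑ j, |ψ j z| := fun z =>
        abs_of_nonneg (Finset.sum_nonneg fun j _ => abs_nonneg _)
      simp_rw [habs]
      refine setIntegral_mono_set hΨ.integrableOn
        (Eventually.of_forall fun z => Finset.sum_nonneg fun j _ => abs_nonneg _) ?_
      exact (sdiff_subset_sdiff_right hCV).eventuallyLE
    have h1 : |(y - x - θ) * ∫ z in V, ψ j z| ≤ κ / 3 := by
      rw [abs_mul]
      exact (mul_le_mul hθ hVj (abs_nonneg _) (by positivity)).trans hγN
    have h2 : |θ * ((∫ z in Ω, ψ j z) - ∫ z in V, ψ j z)| ≤ κ / 3 := by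
      rw [abs_mul, abs_of_nonneg hθ0]
      exact (mul_le_of_le_one_left (abs_nonneg _) hθ1).trans hdiff
    rw [abs_le] at *
    rw [abs_lt] at hk
    constructor <;> linarith [hk.1, hk.2]
  have ev1 : ∀ᶠ k : ℕ in atTop, ∀ j, |(∫ z in V ∩ {z | (k * ℓ z : ℝ) ∈ frSet (2 * γ) (γ + a)}, ψ j z)
        - a * ∫ z in Ω, ψ j z| ≤ κ := by
    rw [eventually_all]
    refine hmass _ _ (by linarith) (by linarith) (by linarith) a ha.le (by linarith) ?_
    rw [abs_le]; constructor <;> linarith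
  have ev2 : ∀ᶠ k : ℕ in atTop, ∀ j, |(∫ z in V ∩ {z | (k * ℓ z : ℝ) ∈ frSet (2 * γ + a) 1}, ψ j z)
        - b * ∫ z in Ω, ψ j z| ≤ κ := by
    rw [eventually_all]
    refine hmass _ _ (by linarith) (by linarith) (by linarith) b hb.le (by linarith) ?_
    rw [abs_le]; constructor <;> linarith
  have ev3 : ∀ᶠ k : ℕ in atTop, |c₀| * B * (Cχ + 1) / k ≤ κ := by
    have := tendsto_const_div_atTop_nhds_zero_nat (|c₀| * B * (Cχ + 1))
    exact (this.eventually (gt_mem_nhds hκ)).mono fun k hk => hk.le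
  obtain ⟨k, hk1, hk2, hk3, hk0⟩ := (ev1.and (ev2.and (ev3.and (eventually_gt_atTop 0)))).exists
  have hk0' : (0:ℝ) < k := by exact_mod_cast hk0
  let w : ℝ × ℝ → ℝ := fun z => χ z * (c₀ / k * H (k * ℓ z))
  have hχ2 : ContDiff ℝ 2 χ := contDiff_infty.1 hχ 2
  have hHl : ContDiff ℝ 2 fun z : ℝ × ℝ => c₀ / k * H (k * ℓ z) :=
    contDiff_const.mul (hH.comp (contDiff_const.mul ℓ.contDiff))
  have hw : ContDiff ℝ 2 w := hχ2.mul hHl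
  have hgrad : ∀ z, gradF w z = (c₀ / k * H (k * ℓ z)) • gradF χ z +
      (χ z * deriv H (k * ℓ z)) • (ξ₁ - ξ₂) := by
    intro z
    have d1 : HasFDerivAt χ (fderiv ℝ χ z) z := (hχ2.differentiable two_ne_zero z).hasFDerivAt
    have d2 : HasDerivAt H (deriv H (k * ℓ z)) (k * ℓ z) :=
      (hH.differentiable two_ne_zero _).hasDerivAt
    have d3 : HasFDerivAt (fun z : ℝ × ℝ => (k:ℝ) * ℓ z) ((k:ℝ) • ℓ) z := ℓ.hasFDerivAt.const_mul _
    have d4 := (d2.comp_hasFDerivAt z d3).const_mul (c₀ / k)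
    have d5 := (d1.mul d4).fderiv
    have d6 : fderiv ℝ w z = _ := d5
    rw [← hℓη]
    ext
    · simp only [gradF, ptF, d6]
      simp
      field_simp
      ring
    · simp only [gradF, pxF, d6]
      simp
      field_simp
      ring
  have hsmall : ∀ z, |c₀ / k * H (k * ℓ z)| ≤ |c₀| * B / k := by
    intro z
    rw [abs_mul, abs_div, abs_of_pos hk0', div_mul_eq_mul_div]
    gcongr
    exact hB _
  have hb' : b = 1 - a := by linarith
  refine ⟨w, hw, hχc.mul_right, (tsupport_mul_subset_left).trans hχΩ, ?_, ?_,
    V ∩ {z | (k * ℓ z : ℝ) ∈ frSet (2 * γ) (γ + a)}, V ∩ {z | (k * ℓ z : ℝ) ∈ frSet (2 * γ + a) 1},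
    ?_, ?_, inter_subset_left.trans hVΩ, inter_subset_left.trans hVΩ, ?_, ?_, ?_, hk1, hk2⟩
  · intro z
    simp only [w]
    rw [abs_mul, abs_of_nonneg (hχ01 z).1]
    refine (mul_le_of_le_one_left (abs_nonneg _) (hχ01 z).2).trans ((hsmall z).trans ?_)
    refine le_trans ?_ hk3
    refine div_le_div_of_nonneg_right ?_ hk0'.le
    exact le_mul_of_one_le_right (by positivity) (by linarith)
  · intro z
    have hτ := hH01 (k * ℓ z)
    set p := deriv H (k * ℓ z)
    refine ⟨(a + χ z * p) • ξ₁ + (b - χ z * p) • ξ₂, hK h₁ h₂ ?_ ?_ (by linarith), ?_⟩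
    · nlinarith [hτ.1, (hχ01 z).1, (hχ01 z).2, mul_nonneg (hχ01 z).1 hτ.1]
    · nlinarith [hτ.2, (hχ01 z).1, (hχ01 z).2, mul_nonneg (hχ01 z).1 (sub_nonneg.2 hτ.2)]
    · have : a • ξ₁ + b • ξ₂ + gradF w z - ((a + χ z * p) • ξ₁ + (b - χ z * p) • ξ₂) =
          (c₀ / k * H (k * ℓ z)) • gradF χ z := by
        rw [hgrad]; module
      rw [this, norm_smul, Real.norm_eq_abs]
      calc _ ≤ (|c₀| * B / k) * Cχ := mul_le_mul (hsmall z) (hCχ z) (norm_nonneg _) (by positivity)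
        _ ≤ |c₀| * B * (Cχ + 1) / k := by
          rw [div_mul_eq_mul_div]; gcongr; linarith
        _ ≤ κ := hk3
  · exact hV.inter ((frSet_open (by linarith) (by linarith)).preimage (by fun_prop))
  · exact hV.inter ((frSet_open (by linarith) (by linarith)).preimage (by fun_prop))
  · rw [Set.disjoint_left]
    rintro z ⟨_, h1⟩ ⟨_, h2⟩
    have a1 := h1.2; have a2 := h2.1
    linarith
  · rintro z ⟨hz, hz2⟩
    have hg0 : gradF χ z = 0 := by
      have : χ =ᶠ[𝓝 z] fun _ => 1 := Filter.eventually_of_mem (hV.mem_nhds hz) hχ1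
      simp [gradF, ptF, pxF, this.fderiv_eq]
    rw [hgrad, hg0, hχ1 z hz, hHO1 _ hz2, hb']
    module
  · rintro z ⟨hz, hz2⟩
    have hg0 : gradF χ z = 0 := by
      have : χ =ᶠ[𝓝 z] fun _ => 1 := Filter.eventually_of_mem (hV.mem_nhds hz) hχ1
      simp [gradF, ptF, pxF, this.fderiv_eq]
    rw [hgrad, hg0, hχ1 z hz, hHO2 _ hz2, hb']
    module

end

/-! ### Convexity of the set of realisable measures -/

section

/-- Pairs `(ξ, Λ)` such that, in every open set `Ω`, there are small compactly supported `w` for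
which `ξ + ∇w` stays near `K` and is distributed (against finitely many tests `ψ j ⊗ F j`)
as `Λ`. -/
def Good (K : Set (ℝ × ℝ)) : Set ((ℝ × ℝ) × ((ℝ × ℝ → ℝ) → ℝ)) :=
  {P | P.1 ∈ K ∧ ∀ Ω : Set (ℝ × ℝ), IsOpen Ω → ∀ (ι : Type) [Fintype ι] (ψ F : ι → ℝ × ℝ → ℝ),
    (∀ j, Integrable (ψ j)) → (∀ j, Continuous (F j)) → ∀ ε > 0,
      ∃ w : ℝ × ℝ → ℝ, ContDiff ℝ 2 w ∧ HasCompactSupport w ∧ tsupport w ⊆ Ω ∧ (∀ z, |w z| ≤ ε) ∧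
        (∀ z, ∃ k ∈ K, ‖P.1 + gradF w z - k‖ ≤ ε) ∧
        ∀ j, |(∫ z in Ω, ψ j z * F j (P.1 + gradF w z)) - P.2 (F j) * ∫ z in Ω, ψ j z| ≤ ε}

lemma good_dirac {K : Set (ℝ × ℝ)} {ξ : ℝ × ℝ} (hξ : ξ ∈ K) : (ξ, fun F => F ξ) ∈ Good K := by
  refine ⟨hξ, fun Ω hΩ ι _ ψ F hψ hF ε hε => ⟨fun _ => 0, contDiff_const, ?_, ?_, ?_, ?_, ?_⟩⟩
  · exact HasCompactSupport.zero
  · have : tsupport (fun _ : ℝ × ℝ => (0:ℝ)) = ∅ := by simp [tsupport]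
    rw [this]; exact empty_subset _
  · simp [hε.le]
  · intro z; exact ⟨ξ, hξ, by simp [gradF, ptF, pxF, hε.le]⟩
  · intro j
    have : ∀ z, ψ j z * F j (ξ + gradF (fun _ => 0) z) = ψ j z * F j ξ := by
      intro z
      have : gradF (fun _ => 0) z = 0 := by simp [gradF, ptF, pxF]
      rw [this, add_zero]
    simp only [this]
    rw [integral_mul_const, mul_comm]; simp [hε.le]

/-- Continuous functions of a bounded gradient times an integrable weight are integrable. -/
lemma integrable_weight_comp {K : Set (ℝ × ℝ)} {M : ℝ} {F : ℝ × ℝ → ℝ} {ψ : ℝ × ℝ → ℝ} {g : ℝ × ℝ → ℝ × ℝ}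
    (hF : Continuous F) (hψ : Integrable ψ) (hg : Continuous g)
    (hM : ∀ ξ, (∃ k ∈ K, ‖ξ - k‖ ≤ 1) → |F ξ| ≤ M) (hgK : ∀ z, ∃ k ∈ K, ‖g z - k‖ ≤ 1) :
    Integrable fun z => ψ z * F (g z) :=
  hψ.mul_bdd (c := M) (hF.comp hg).aestronglyMeasurable
    (Eventually.of_forall fun z => hM _ (hgK z))

/-- Laminate between the barycentres of the two measures, then fill each layer, an open set on which
the gradient is constant, with the perturbations realising the corresponding measure. -/
lemma good_convex {K : Set (ℝ × ℝ)} (hK : Convex ℝ K) (hKb : Bornology.IsBounded K) :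
    Convex ℝ (Good K) := by
  rw [convex_iff_forall_pos]
  rintro ⟨ξ₁, Λ₁⟩ ⟨h₁, hG₁⟩ ⟨ξ₂, Λ₂⟩ ⟨h₂, hG₂⟩ a b ha hb hab
  refine ⟨hK h₁ h₂ ha.le hb.le hab, fun Ω hΩ ι _ ψ F hψ hF ε hε => ?_⟩
  simp only at h₁ h₂ hG₁ hG₂
  -- a common bound for everything that multiplies the small parameter
  have hthick : ∃ S : Set (ℝ × ℝ), IsCompact S ∧ ∀ ξ, (∃ k ∈ K, ‖ξ - k‖ ≤ 1) → ξ ∈ S := by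
    obtain ⟨R, hR⟩ := hKb.subset_closedBall (0 : ℝ × ℝ)
    refine ⟨Metric.closedBall 0 (R + 1), isCompact_closedBall _ _, ?_⟩
    rintro ξ ⟨k, hk, hkk⟩
    have := hR hk
    simp only [Metric.mem_closedBall, dist_zero_right] at this ⊢
    have h3 : ‖ξ‖ ≤ ‖ξ - k‖ + ‖k‖ := by simpa using norm_add_le (ξ - k) k
    linarith
  obtain ⟨S, hS, hthick⟩ := hthick
  have hMj : ∀ j, ∃ M, ∀ ξ ∈ S, |F j ξ| ≤ M := fun j => by
    obtain ⟨M, hM⟩ := hS.exists_bound_of_continuousOn (hF j).continuousOn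
    exact ⟨M, hM⟩
  choose M hM using hMj
  let B : ℝ := 1 + ∑ j, (|M j| + |Λ₁ (F j)| + |Λ₂ (F j)|)
  have hBj : ∀ j, |M j| + |Λ₁ (F j)| + |Λ₂ (F j)| ≤ B := fun j => by
    have := Finset.single_le_sum (f := fun j => |M j| + |Λ₁ (F j)| + |Λ₂ (F j)|)
      (fun i _ => by positivity) (Finset.mem_univ j)
    simp only [B]; linarith
  have hB0 : 0 < B := by
    have : 0 ≤ ∑ j, (|M j| + |Λ₁ (F j)| + |Λ₂ (F j)|) := Finset.sum_nonneg fun i _ => by positivity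
    simp only [B]; linarith
  have hFB : ∀ j ξ, (∃ k ∈ K, ‖ξ - k‖ ≤ 1) → |F j ξ| ≤ B := fun j ξ h => by
    have := hM j ξ (hthick ξ h)
    have h1 := le_abs_self (M j)
    have h2 := hBj j
    have h3 := abs_nonneg (Λ₁ (F j)); have h4 := abs_nonneg (Λ₂ (F j))
    linarith
  obtain ⟨κ, hκ, hκε, hκ1, hκB⟩ : ∃ κ > 0, 3 * κ ≤ ε ∧ κ ≤ 1 ∧ 2 * κ + 4 * (B * κ) ≤ ε := by
    refine ⟨min (ε / 3) (min 1 (ε / (2 + 4 * B))), by positivity, ?_, ?_, ?_⟩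
    · have := min_le_left (ε / 3) (min 1 (ε / (2 + 4 * B))); linarith
    · exact (min_le_right _ _).trans (min_le_left _ _)
    · have := (min_le_right (ε / 3) (min 1 (ε / (2 + 4 * B)))).trans (min_le_right _ _)
      rw [le_div_iff₀ (by positivity)] at this
      linarith
  obtain ⟨w, hw, hwc, hwΩ, hwκ, hwK, Ω₁, Ω₂, hΩ₁, hΩ₂, hΩ₁Ω, hΩ₂Ω, hdisj, hg₁, hg₂, hm₁, hm₂⟩ :=
    laminate hK h₁ h₂ ha hb hab hΩ (ι := ι ⊕ ι) (Sum.elim ψ fun j z => |ψ j z|)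
      (by rintro (j | j); exacts [hψ j, (hψ j).abs]) hκ
  obtain ⟨w₁, hw₁, hw₁c, hw₁Ω, hw₁κ, hw₁K, hw₁F⟩ := hG₁ Ω₁ hΩ₁ ι ψ F hψ hF κ hκ
  obtain ⟨w₂, hw₂, hw₂c, hw₂Ω, hw₂κ, hw₂K, hw₂F⟩ := hG₂ Ω₂ hΩ₂ ι ψ F hψ hF κ hκ
  let W : ℝ × ℝ → ℝ := fun z => (w z + w₁ z) + w₂ z
  set ξ := a • ξ₁ + b • ξ₂ with hξ
  have hdw := hw.differentiable two_ne_zero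
  have hdw₁ := hw₁.differentiable two_ne_zero
  have hdw₂ := hw₂.differentiable two_ne_zero
  have hgW : ∀ z, gradF W z = gradF w z + gradF w₁ z + gradF w₂ z := fun z => by
    simp only [W]
    rw [gradF_add ((hdw z).fun_add (hdw₁ z)) (hdw₂ z), gradF_add (hdw z) (hdw₁ z)]
  have hW₁ : ∀ z ∈ Ω₁, ξ + gradF W z = ξ₁ + gradF w₁ z := fun z hz => by
    have : z ∉ tsupport w₂ := fun h => Set.disjoint_left.1 hdisj hz (hw₂Ω h)
    rw [hgW, gradF_zero_of_notMem this, ← hg₁ z hz]; abel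
  have hW₂ : ∀ z ∈ Ω₂, ξ + gradF W z = ξ₂ + gradF w₂ z := fun z hz => by
    have : z ∉ tsupport w₁ := fun h => Set.disjoint_left.1 hdisj (hw₁Ω h) hz
    rw [hgW, gradF_zero_of_notMem this, ← hg₂ z hz]; abel
  have hWr : ∀ z, z ∉ Ω₁ → z ∉ Ω₂ → ξ + gradF W z = ξ + gradF w z := fun z hz1 hz2 => by
    rw [hgW, gradF_zero_of_notMem (fun h => hz1 (hw₁Ω h)),
      gradF_zero_of_notMem (fun h => hz2 (hw₂Ω h))]; simp
  have hWK : ∀ z, ∃ k ∈ K, ‖ξ + gradF W z - k‖ ≤ κ := by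
    intro z
    by_cases hz1 : z ∈ Ω₁
    · rw [hW₁ z hz1]; exact hw₁K z
    by_cases hz2 : z ∈ Ω₂
    · rw [hW₂ z hz2]; exact hw₂K z
    rw [hWr z hz1 hz2]; exact hwK z
  have hWc2 : ContDiff ℝ 2 W := (hw.add hw₁).add hw₂
  have hgc : Continuous fun z => ξ + gradF W z :=
    continuous_const.add (gradF_continuous (hWc2.of_le one_le_two))
  have hinte : ∀ j, Integrable fun z => ψ j z * F j (ξ + gradF W z) := fun j =>
    integrable_weight_comp (hF j) (hψ j) hgc (hFB j) fun z => by
      obtain ⟨k, hk, hk2⟩ := hWK z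
      exact ⟨k, hk, hk2.trans hκ1⟩
  refine ⟨W, hWc2, (hwc.add hw₁c).add hw₂c, ?_, ?_, ?_, ?_⟩
  · have t1 : tsupport W ⊆ (tsupport w ∪ tsupport w₁) ∪ tsupport w₂ := by
      refine (tsupport_add (fun z => w z + w₁ z) w₂).trans ?_
      exact union_subset_union_left _ (tsupport_add _ _)
    exact t1.trans (union_subset (union_subset hwΩ (hw₁Ω.trans hΩ₁Ω)) (hw₂Ω.trans hΩ₂Ω))
  · intro z
    have h3 := abs_add_three (w z) (w₁ z) (w₂ z)
    have := hwκ z; have := hw₁κ z; have := hw₂κ z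
    simp only [W]; linarith
  · intro z
    obtain ⟨k, hk, hk2⟩ := hWK z
    exact ⟨k, hk, hk2.trans (by linarith)⟩
  · intro j
    change |(∫ z in Ω, ψ j z * F j (ξ + gradF W z)) -
      (a * Λ₁ (F j) + b * Λ₂ (F j)) * ∫ z in Ω, ψ j z| ≤ ε
    have hU : Ω₁ ∪ Ω₂ ⊆ Ω := union_subset hΩ₁Ω hΩ₂Ω
    have hsplit : ∀ G : ℝ × ℝ → ℝ, Integrable G → ∫ z in Ω, G z =
        (∫ z in Ω₁, G z) + (∫ z in Ω₂, G z) + ∫ z in Ω \ (Ω₁ ∪ Ω₂), G z := by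
      intro G hG
      rw [setIntegral_sdiff (hΩ₁.union hΩ₂).measurableSet hG.integrableOn hU,
        setIntegral_union hdisj hΩ₂.measurableSet hG.integrableOn hG.integrableOn]
      ring
    have i1 : ∫ z in Ω₁, ψ j z * F j (ξ + gradF W z) = ∫ z in Ω₁, ψ j z * F j (ξ₁ + gradF w₁ z) :=
      setIntegral_congr_fun hΩ₁.measurableSet fun z hz => by simp only [hW₁ z hz]
    have i2 : ∫ z in Ω₂, ψ j z * F j (ξ + gradF W z) = ∫ z in Ω₂, ψ j z * F j (ξ₂ + gradF w₂ z) :=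
      setIntegral_congr_fun hΩ₂.measurableSet fun z hz => by simp only [hW₂ z hz]
    have i3 : |∫ z in Ω \ (Ω₁ ∪ Ω₂), ψ j z * F j (ξ + gradF W z)| ≤ B * (2 * κ) := by
      have e1 := hsplit (fun z => |ψ j z|) (hψ j).abs
      have e2 := hm₁ (Sum.inr j)
      have e3 := hm₂ (Sum.inr j)
      simp only [Sum.elim_inr] at e2 e3
      have e4 : ∫ z in Ω \ (Ω₁ ∪ Ω₂), |ψ j z| ≤ 2 * κ := by
        rw [abs_le] at e2 e3
        have : (∫ z in Ω, |ψ j z|) = a * (∫ z in Ω, |ψ j z|) + b * ∫ z in Ω, |ψ j z| := by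
          rw [← add_mul, hab, one_mul]
        linarith [e2.1, e3.1]
      refine (abs_integral_le_integral_abs).trans ?_
      calc ∫ z in Ω \ (Ω₁ ∪ Ω₂), |ψ j z * F j (ξ + gradF W z)|
          ≤ ∫ z in Ω \ (Ω₁ ∪ Ω₂), B * |ψ j z| := by
            refine integral_mono (hinte j).abs.integrableOn ((hψ j).abs.const_mul B).integrableOn
              fun z => ?_
            simp only
            rw [abs_mul, mul_comm]
            refine mul_le_mul_of_nonneg_right (hFB j _ ?_) (abs_nonneg _)
            obtain ⟨k, hk, hk2⟩ := hWK z
            exact ⟨k, hk, hk2.trans hκ1⟩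
        _ = B * ∫ z in Ω \ (Ω₁ ∪ Ω₂), |ψ j z| := integral_const_mul _ _
        _ ≤ B * (2 * κ) := by gcongr
    rw [hsplit _ (hinte j), i1, i2]
    have f1 := hw₁F j
    have f2 := hw₂F j
    have m1 := hm₁ (Sum.inl j)
    have m2 := hm₂ (Sum.inl j)
    simp only [Sum.elim_inl] at m1 m2
    have hb1 : |Λ₁ (F j)| + |Λ₂ (F j)| ≤ B := by
      have := hBj j; have := abs_nonneg (M j); linarith
    have p1 : |Λ₁ (F j) * ((∫ z in Ω₁, ψ j z) - a * ∫ z in Ω, ψ j z)| ≤ |Λ₁ (F j)| * κ := by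
      rw [abs_mul]; gcongr
    have p2 : |Λ₂ (F j) * ((∫ z in Ω₂, ψ j z) - b * ∫ z in Ω, ψ j z)| ≤ |Λ₂ (F j)| * κ := by
      rw [abs_mul]; gcongr
    have p3 : |Λ₁ (F j)| * κ + |Λ₂ (F j)| * κ ≤ B * κ := by
      rw [← add_mul]; gcongr
    have : 0 ≤ B * κ := by positivity
    rw [abs_le] at f1 f2 p1 p2 i3 ⊢
    constructor <;> nlinarith [f1.1, f1.2, f2.1, f2.2, p1.1, p1.2, p2.1, p2.2, i3.1, i3.2]

/-- Finite convex combinations of Dirac masses are realised by gradients. -/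
lemma good_sum {K : Set (ℝ × ℝ)} (hK : Convex ℝ K) (hKb : Bornology.IsBounded K) {n : ℕ}
    (θ : Fin n → ℝ) (ξ : Fin n → ℝ × ℝ) (hθ : ∀ i, 0 ≤ θ i) (hsum : ∑ i, θ i = 1)
    (hξ : ∀ i, ξ i ∈ K) : (∑ i, θ i • ξ i, fun F => ∑ i, θ i * F (ξ i)) ∈ Good K := by
  have := (good_convex hK hKb).sum_mem (t := Finset.univ) (w := θ)
    (z := fun i => ((ξ i, fun F => F (ξ i)) : (ℝ × ℝ) × ((ℝ × ℝ → ℝ) → ℝ)))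
    (fun i _ => hθ i) hsum (fun i _ => good_dirac (hξ i))
  convert this using 1
  ext1
  · simp [Prod.fst_sum]
  · ext F; simp [Prod.snd_sum]

end

/-! ### Realising a continuous family of finite Young measures -/

section

lemma gradF_sum {ι : Type} (s : Finset ι) {u : ι → ℝ × ℝ → ℝ} {z : ℝ × ℝ}
    (hu : ∀ i ∈ s, DifferentiableAt ℝ (u i) z) :
    gradF (fun y => ∑ i ∈ s, u i y) z = ∑ i ∈ s, gradF (u i) z := by
  have : fderiv ℝ (fun y => ∑ i ∈ s, u i y) z = ∑ i ∈ s, fderiv ℝ (u i) z := fderiv_fun_sum hu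
  ext
  · simp [gradF, ptF, this, Prod.fst_sum]
  · simp [gradF, pxF, this, Prod.snd_sum]

/-- The cells of a fine grid cover a bounded open set up to a null set. -/
lemma exists_cells {Q : Set (ℝ × ℝ)} (hQ : IsOpen Q) (hb : Bornology.IsBounded Q) {δ : ℝ}
    (hδ : 0 < δ) :
    ∃ (s : Finset (ℤ × ℤ)) (c : ℤ × ℤ → Set (ℝ × ℝ)), (∀ i, IsOpen (c i)) ∧ (∀ i, c i ⊆ Q) ∧
      (∀ i, ∀ z ∈ c i, ∀ z' ∈ c i, dist z z' < δ) ∧ (Pairwise fun i j => Disjoint (c i) (c j)) ∧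
      Q =ᵐ[volume] ⋃ i ∈ s, c i := by
  obtain ⟨M, hM⟩ := exists_nat_gt (1 / δ)
  have hM0 : (0:ℝ) < M := lt_trans (by positivity) hM
  obtain ⟨R, hR⟩ := hb.subset_closedBall (0 : ℝ × ℝ)
  let c : ℤ × ℤ → Set (ℝ × ℝ) := fun i => Q ∩ {z | (i.1 : ℝ) < M * z.1 ∧ M * z.1 < i.1 + 1 ∧
    (i.2 : ℝ) < M * z.2 ∧ M * z.2 < i.2 + 1}
  have hfl : ∀ i, ∀ z ∈ c i, i = (⌊M * z.1⌋, ⌊M * z.2⌋) := by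
    rintro i z ⟨_, h1, h2, h3, h4⟩
    ext
    · exact (Int.floor_eq_iff.2 ⟨h1.le, h2⟩).symm
    · exact (Int.floor_eq_iff.2 ⟨h3.le, h4⟩).symm
  let r : ℤ := ⌈M * |R|⌉ + 1
  refine ⟨Finset.Icc (-r) r ×ˢ Finset.Icc (-r) r, c, ?_, fun i => inter_subset_left, ?_, ?_, ?_⟩
  · intro i
    refine hQ.inter ?_
    have e1 : IsOpen {z : ℝ × ℝ | (i.1 : ℝ) < M * z.1} := isOpen_lt (by fun_prop) (by fun_prop)
    have e2 : IsOpen {z : ℝ × ℝ | M * z.1 < (i.1 : ℝ) + 1} := isOpen_lt (by fun_prop) (by fun_prop)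
    have e3 : IsOpen {z : ℝ × ℝ | (i.2 : ℝ) < M * z.2} := isOpen_lt (by fun_prop) (by fun_prop)
    have e4 : IsOpen {z : ℝ × ℝ | M * z.2 < (i.2 : ℝ) + 1} := isOpen_lt (by fun_prop) (by fun_prop)
    exact e1.inter (e2.inter (e3.inter e4))
  · rintro i z ⟨_, h1, h2, h3, h4⟩ z' ⟨_, h1', h2', h3', h4'⟩
    rw [div_lt_iff₀ hδ] at hM
    rw [Prod.dist_eq, max_lt_iff, Real.dist_eq, Real.dist_eq, abs_lt, abs_lt]
    refine ⟨⟨?_, ?_⟩, ⟨?_, ?_⟩⟩ <;> nlinarith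
  · intro i j hij
    rw [Set.disjoint_left]
    intro z hi hj
    exact hij ((hfl i z hi).trans (hfl j z hj).symm)
  · have hnull : ∀ᵐ z : ℝ × ℝ, (∀ n : ℤ, M * z.1 ≠ n) ∧ (∀ n : ℤ, M * z.2 ≠ n) := by
      have h0 : ∀ n : ℤ, ∀ᵐ x : ℝ, M * x ≠ n := by
        intro n
        have : {x : ℝ | ¬ (M * x ≠ n)} ⊆ {(n:ℝ) / M} := by
          intro x hx
          simp only [mem_ofPred_eq, ne_eq, not_not] at hx
          simp only [mem_singleton_iff]; field_simp; linarith
        exact measure_mono_null this (by simp)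
      rw [Measure.volume_eq_prod]
      have ha := (Measure.quasiMeasurePreserving_fst (μ := (volume : Measure ℝ)) (ν := (volume : Measure ℝ))).ae (ae_all_iff.2 h0)
      have hb := (Measure.quasiMeasurePreserving_snd (μ := (volume : Measure ℝ)) (ν := (volume : Measure ℝ))).ae (ae_all_iff.2 h0)
      filter_upwards [ha, hb] with z h1 h2 using ⟨h1, h2⟩
    filter_upwards [hnull] with z hz
    have hiff : z ∈ Q ↔ z ∈ ⋃ i ∈ Finset.Icc (-r) r ×ˢ Finset.Icc (-r) r, c i := by
      simp only [mem_iUnion]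
      constructor
      · intro hzQ
        have hzR := hR hzQ
        simp only [Metric.mem_closedBall, dist_zero_right, Prod.norm_def, max_le_iff,
          Real.norm_eq_abs] at hzR
        have hbd : ∀ x : ℝ, |x| ≤ R → ⌊M * x⌋ ∈ Finset.Icc (-r) r := by
          intro x hx
          have h1 : |M * x| ≤ M * |R| := by
            rw [abs_mul, abs_of_pos hM0]
            exact mul_le_mul_of_nonneg_left (hx.trans (le_abs_self _)) hM0.le
          have h2 := Int.le_ceil (M * |R|)
          rw [abs_le] at h1
          rw [Finset.mem_Icc]
          constructor
          · rw [Int.le_floor]; simp only [r]; push_cast; linarith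
          · have := Int.floor_le (M * x)
            have : ((⌊M * x⌋ : ℤ) : ℝ) ≤ (r : ℝ) := by simp only [r]; push_cast; linarith
            exact_mod_cast this
        refine ⟨(⌊M * z.1⌋, ⌊M * z.2⌋), Finset.mem_product.2 ⟨hbd _ hzR.1, hbd _ hzR.2⟩, hzQ, ?_⟩
        refine ⟨lt_of_le_of_ne (Int.floor_le _) (hz.1 _).symm, Int.lt_floor_add_one _,
          lt_of_le_of_ne (Int.floor_le _) (hz.2 _).symm, Int.lt_floor_add_one _⟩
      · rintro ⟨i, _, h⟩; exact h.1
    exact propext hiff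

/-- A continuous family of finitely supported probability measures is realised on a bounded open
set by the gradients of small perturbations of a field `ξ̄ = ∑ θᵢ ξᵢ`. -/
theorem young_realize {Q : Set (ℝ × ℝ)} (hQ : IsOpen Q) (hQb : Bornology.IsBounded Q)
    {K : Set (ℝ × ℝ)} (hK : Convex ℝ K) (hKb : Bornology.IsBounded K) {n : ℕ}
    (θ : Fin n → ℝ × ℝ → ℝ) (ξ : Fin n → ℝ × ℝ → ℝ × ℝ)
    (hθc : ∀ i, ContinuousOn (θ i) (closure Q)) (hξc : ∀ i, ContinuousOn (ξ i) (closure Q))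
    (hθ : ∀ i, ∀ z ∈ Q, 0 ≤ θ i z) (hsum : ∀ z ∈ Q, ∑ i, θ i z = 1) (hξ : ∀ i, ∀ z ∈ Q, ξ i z ∈ K)
    {ι : Type} [Fintype ι] (ψ F : ι → ℝ × ℝ → ℝ) (hψ : ∀ j, Integrable (ψ j))
    (hF : ∀ j, Continuous (F j)) {ε : ℝ} (hε : 0 < ε) :
    ∃ w : ℝ × ℝ → ℝ, ContDiff ℝ 2 w ∧ HasCompactSupport w ∧ tsupport w ⊆ Q ∧ (∀ z, |w z| ≤ ε) ∧
      (∀ z ∈ Q, ∃ k ∈ K, ‖∑ i, θ i z • ξ i z + gradF w z - k‖ ≤ ε) ∧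
      ∀ j, |(∫ z in Q, ψ j z * F j (∑ i, θ i z • ξ i z + gradF w z)) -
        ∫ z in Q, ψ j z * ∑ i, θ i z * F j (ξ i z)| ≤ ε := by
  set ξb : ℝ × ℝ → ℝ × ℝ := fun z => ∑ i, θ i z • ξ i z with hξb
  set G : ι → ℝ × ℝ → ℝ := fun j z => ∑ i, θ i z * F j (ξ i z) with hG
  have hξbc : ContinuousOn ξb (closure Q) := continuousOn_finsetSum _ fun i _ => (hθc i).smul (hξc i)
  have hGc : ∀ j, ContinuousOn (G j) (closure Q) := fun j =>
    continuousOn_finsetSum _ fun i _ => (hθc i).mul ((hF j).comp_continuousOn (hξc i))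
  have hξbK : ∀ z ∈ Q, ξb z ∈ K := fun z hz =>
    hK.sum_mem (fun i _ => hθ i z hz) (hsum z hz) (fun i _ => hξ i z hz)
  have hQc : IsCompact (closure Q) := hQb.isCompact_closure
  obtain ⟨R, hR⟩ := hKb.subset_closedBall (0 : ℝ × ℝ)
  let S := Metric.closedBall (0 : ℝ × ℝ) (R + 2)
  have hthick : ∀ ξ, (∃ k ∈ K, ‖ξ - k‖ ≤ 2) → ξ ∈ S := by
    rintro ξ ⟨k, hk, hkk⟩
    have := hR hk
    simp only [S, Metric.mem_closedBall, dist_zero_right] at this ⊢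
    have h3 : ‖ξ‖ ≤ ‖ξ - k‖ + ‖k‖ := by simpa using norm_add_le (ξ - k) k
    linarith
  have hS : IsCompact S := isCompact_closedBall _ _
  let FF : ℝ × ℝ → ι → ℝ := fun y j => F j y
  have hFF : ContinuousOn FF S := (continuous_pi hF).continuousOn
  obtain ⟨MF, hMF⟩ := hS.exists_bound_of_continuousOn hFF
  have hMFj : ∀ j, ∀ y ∈ S, |F j y| ≤ MF := fun j y hy => (norm_le_pi_norm (FF y) j).trans (hMF y hy)
  -- total mass of the weights
  let N : ℝ := 1 + ∑ j, ∫ z, |ψ j z|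
  have hNj : ∀ j, ∫ z, |ψ j z| ≤ N := fun j => by
    have := Finset.single_le_sum (f := fun j => ∫ z, |ψ j z|)
      (fun i _ => integral_nonneg fun z => abs_nonneg _) (Finset.mem_univ j)
    simp only [N]; linarith
  have hN0 : 0 < N := by
    have : 0 ≤ ∑ j, ∫ z, |ψ j z| := Finset.sum_nonneg fun i _ => integral_nonneg fun z => abs_nonneg _
    simp only [N]; linarith
  obtain ⟨κ, hκ, hκ1, hκε, hκN⟩ : ∃ κ > 0, κ ≤ 1 ∧ 2 * κ ≤ ε ∧ κ * (2 * N + 1) ≤ ε := by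
    refine ⟨min 1 (min (ε / 2) (ε / (2 * N + 1))), by positivity, min_le_left _ _, ?_, ?_⟩
    · have := (min_le_right 1 (min (ε / 2) (ε / (2 * N + 1)))).trans (min_le_left _ _); linarith
    · have := (min_le_right 1 (min (ε / 2) (ε / (2 * N + 1)))).trans (min_le_right _ _)
      rwa [le_div_iff₀ (by positivity)] at this
  obtain ⟨κ', hκ', hFu⟩ := Metric.uniformContinuousOn_iff.1 (hS.uniformContinuousOn_of_continuous hFF) κ hκ
  let Φ : ℝ × ℝ → (ℝ × ℝ) × (ι → ℝ) := fun z => (ξb z, fun j => G j z)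
  have hΦ : ContinuousOn Φ (closure Q) := hξbc.prodMk (continuousOn_pi.2 hGc)
  obtain ⟨δ, hδ, hΦu⟩ := Metric.uniformContinuousOn_iff.1 (hQc.uniformContinuousOn_of_continuous hΦ)
    (min κ κ') (lt_min hκ hκ')
  obtain ⟨s, c, hco, hcQ, hcd, hcdisj, hcover⟩ := exists_cells hQ hQb hδ
  let κ'' : ℝ := κ / (s.card + 1)
  have hκ'' : 0 < κ'' := by positivity
  have hκ''κ : κ'' ≤ κ := div_le_self hκ.le (by linarith [(Nat.cast_nonneg s.card : (0:ℝ) ≤ s.card)])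
  have hcell : ∀ i, ∃ (z₀ : ℝ × ℝ) (w : ℝ × ℝ → ℝ), (∀ z ∈ c i, z₀ ∈ c i) ∧
      ContDiff ℝ 2 w ∧ HasCompactSupport w ∧ tsupport w ⊆ c i ∧ (∀ z, |w z| ≤ κ'') ∧
      (∀ z ∈ c i, ∃ k ∈ K, ‖ξb z₀ + gradF w z - k‖ ≤ κ'') ∧
      ∀ j, |(∫ z in c i, ψ j z * F j (ξb z₀ + gradF w z)) - G j z₀ * ∫ z in c i, ψ j z| ≤ κ'' := by
    intro i
    rcases (c i).eq_empty_or_nonempty with he | ⟨z₀, hz₀⟩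
    · refine ⟨0, fun _ => 0, by simp [he], contDiff_const, HasCompactSupport.zero, ?_, ?_, ?_, ?_⟩
      · have : tsupport (fun _ : ℝ × ℝ => (0:ℝ)) = ∅ := by simp [tsupport]
        rw [this]; exact empty_subset _
      · simp [hκ''.le]
      · simp [he]
      · simp [he, hκ''.le]
    · have hzQ := hcQ i hz₀
      obtain ⟨w, h1, h2, h3, h4, h5, h6⟩ := (good_sum hK hKb (fun i => θ i z₀) (fun i => ξ i z₀)
        (fun i => hθ i z₀ hzQ) (hsum z₀ hzQ) (fun i => hξ i z₀ hzQ)).2 (c i) (hco i) ι ψ F hψ hF κ'' hκ''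
      exact ⟨z₀, w, fun _ _ => hz₀, h1, h2, h3, h4, fun z _ => h5 z, h6⟩
  choose z₀ w hz₀ hw hwc hwt hwκ hwK hwF using hcell
  let W : ℝ × ℝ → ℝ := fun z => ∑ i ∈ s, w i z
  have hWc2 : ContDiff ℝ 2 W := ContDiff.sum fun i _ => hw i
  have hgW : ∀ z, gradF W z = ∑ i ∈ s, gradF (w i) z := fun z =>
    gradF_sum s fun i _ => (hw i).differentiable two_ne_zero z
  have hgWc : ∀ i ∈ s, ∀ z ∈ c i, gradF W z = gradF (w i) z := by
    intro i hi z hz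
    rw [hgW, Finset.sum_eq_single_of_mem i hi]
    intro j _ hj
    exact gradF_zero_of_notMem fun h => Set.disjoint_left.1 (hcdisj hj) (hwt j h) hz
  have hgW0 : ∀ z, (∀ i ∈ s, z ∉ c i) → gradF W z = 0 := by
    intro z hz
    rw [hgW]
    exact Finset.sum_eq_zero fun i hi => gradF_zero_of_notMem fun h => hz i hi (hwt i h)
  -- variation of the data over one cell
  have hvar : ∀ i, ∀ z ∈ c i, ‖ξb z - ξb (z₀ i)‖ < min κ κ' ∧ ∀ j, |G j z - G j (z₀ i)| < κ := by
    intro i z hz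
    have h := hΦu z (subset_closure (hcQ i hz)) (z₀ i) (subset_closure (hcQ i (hz₀ i z hz)))
      (hcd i z hz _ (hz₀ i z hz))
    rw [Prod.dist_eq, max_lt_iff] at h
    refine ⟨by simpa [dist_eq_norm] using h.1, fun j => ?_⟩
    have h2 := (dist_le_pi_dist (fun j => G j z) (fun j => G j (z₀ i)) j).trans_lt h.2
    rw [Real.dist_eq] at h2
    exact h2.trans_le (min_le_left _ _)
  have hWK : ∀ z ∈ Q, ∃ k ∈ K, ‖ξb z + gradF W z - k‖ ≤ 2 * κ := by
    intro z hz
    by_cases h : ∃ i ∈ s, z ∈ c i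
    · obtain ⟨i, hi, hzi⟩ := h
      obtain ⟨k, hk, hk2⟩ := hwK i z hzi
      refine ⟨k, hk, ?_⟩
      rw [hgWc i hi z hzi]
      have e : ξb z + gradF (w i) z - k = (ξb z - ξb (z₀ i)) + (ξb (z₀ i) + gradF (w i) z - k) := by abel
      rw [e]
      have h1 := (hvar i z hzi).1.trans_le (min_le_left _ _)
      exact (norm_add_le _ _).trans (by linarith)
    · push Not at h
      exact ⟨ξb z, hξbK z hz, by rw [hgW0 z h]; simp; positivity⟩
  have hgc : ContinuousOn (fun z => ξb z + gradF W z) Q :=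
    (hξbc.mono subset_closure).add (gradF_continuous (hWc2.of_le one_le_two)).continuousOn
  have hinte : ∀ j, IntegrableOn (fun z => ψ j z * F j (ξb z + gradF W z)) Q := fun j => by
    refine (hψ j).integrableOn.mul_bdd (c := MF)
      (((hF j).comp_continuousOn hgc).aestronglyMeasurable hQ.measurableSet) ?_
    refine (ae_restrict_iff' hQ.measurableSet).2 (Eventually.of_forall fun z hz => ?_)
    obtain ⟨k, hk, hk2⟩ := hWK z hz
    exact hMFj j _ (hthick _ ⟨k, hk, hk2.trans (by linarith)⟩)
  have hintG : ∀ j, IntegrableOn (fun z => ψ j z * G j z) Q := fun j => by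
    obtain ⟨MG, hMG⟩ := hQc.exists_bound_of_continuousOn (hGc j)
    refine (hψ j).integrableOn.mul_bdd (c := MG)
      (((hGc j).mono subset_closure).aestronglyMeasurable hQ.measurableSet) ?_
    exact (ae_restrict_iff' hQ.measurableSet).2 (Eventually.of_forall fun z hz => hMG z (subset_closure hz))
  refine ⟨W, hWc2, ?_, ?_, ?_, ?_, ?_⟩
  · have : W = fun z => ∑ i ∈ s, w i z := rfl
    refine IsCompact.of_isClosed_subset (s.isCompact_biUnion fun i _ => hwc i) (isClosed_tsupport _) ?_
    refine closure_minimal ?_ (s.isCompact_biUnion fun i _ => hwc i).isClosed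
    intro z hz
    obtain ⟨i, hi, hiz⟩ := Finset.exists_ne_zero_of_sum_ne_zero hz
    exact mem_biUnion hi (subset_tsupport _ hiz)
  · have hsub : tsupport W ⊆ ⋃ i ∈ s, tsupport (w i) := by
      refine closure_minimal ?_ (s.isCompact_biUnion fun i _ => hwc i).isClosed
      intro z hz
      obtain ⟨i, hi, hiz⟩ := Finset.exists_ne_zero_of_sum_ne_zero hz
      exact mem_biUnion hi (subset_tsupport _ hiz)
    exact hsub.trans (iUnion₂_subset fun i _ => (hwt i).trans (hcQ i))
  · intro z
    calc |W z| ≤ ∑ i ∈ s, |w i z| := Finset.abs_sum_le_sum_abs _ _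
      _ ≤ ∑ i ∈ s, κ'' := Finset.sum_le_sum fun i _ => hwκ i z
      _ = s.card * κ'' := by simp
      _ ≤ κ := by
        simp only [κ'']; rw [mul_div_assoc', div_le_iff₀ (by positivity)]; nlinarith
      _ ≤ ε := by linarith
  · intro z hz
    obtain ⟨k, hk, hk2⟩ := hWK z hz
    exact ⟨k, hk, hk2.trans hκε⟩
  · intro j
    have hsp : ∀ H : ℝ × ℝ → ℝ, IntegrableOn H Q → ∫ z in Q, H z = ∑ i ∈ s, ∫ z in c i, H z := by
      intro H hH
      rw [setIntegral_congr_set hcover]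
      exact integral_biUnion_finset s (fun i _ => (hco i).measurableSet)
        (fun i _ k _ hik => hcdisj hik) (fun i _ => hH.mono_set (hcQ i))
    rw [hsp _ (hinte j), hsp _ (hintG j), ← Finset.sum_sub_distrib]
    have hone : ∀ i ∈ s, |(∫ z in c i, ψ j z * F j (ξb z + gradF W z)) - ∫ z in c i, ψ j z * G j z| ≤
        κ'' + 2 * κ * ∫ z in c i, |ψ j z| := by
      intro i hi
      have I0 : IntegrableOn (fun z => ψ j z * F j (ξb (z₀ i) + gradF (w i) z)) (c i) := by
        refine (hψ j).integrableOn.mul_bdd (c := MF) ((hF j).comp (continuous_const.add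
          (gradF_continuous ((hw i).of_le one_le_two)))).aestronglyMeasurable ?_
        refine (ae_restrict_iff' (hco i).measurableSet).2 (Eventually.of_forall fun z hz => ?_)
        obtain ⟨k, hk, hk2⟩ := hwK i z hz
        exact hMFj j _ (hthick _ ⟨k, hk, hk2.trans (by linarith)⟩)
      have I1 := (hinte j).mono_set (hcQ i)
      have I2 := (hintG j).mono_set (hcQ i)
      have I3 : IntegrableOn (fun z => |ψ j z|) (c i) := (hψ j).abs.integrableOn
      have a1 : |(∫ z in c i, ψ j z * F j (ξb z + gradF W z)) -
          ∫ z in c i, ψ j z * F j (ξb (z₀ i) + gradF (w i) z)| ≤ κ * ∫ z in c i, |ψ j z| := by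
        rw [← integral_sub I1 I0, ← integral_const_mul]
        refine (abs_integral_le_integral_abs).trans
          (setIntegral_mono_on (I1.sub I0).abs (I3.const_mul κ) (hco i).measurableSet fun z hz => ?_)
        rw [← mul_sub, abs_mul, mul_comm]
        refine mul_le_mul_of_nonneg_right ?_ (abs_nonneg _)
        obtain ⟨k, hk, hk2⟩ := hWK z (hcQ i hz)
        obtain ⟨k', hk', hk2'⟩ := hwK i z hz
        have hd := hFu (ξb z + gradF W z) (hthick _ ⟨k, hk, hk2.trans (by linarith)⟩)
          (ξb (z₀ i) + gradF (w i) z) (hthick _ ⟨k', hk', hk2'.trans (by linarith)⟩) (by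
            rw [hgWc i hi z hz, dist_add_right, dist_eq_norm]
            exact (hvar i z hz).1.trans_le (min_le_right _ _))
        have := (dist_le_pi_dist _ _ j).trans_lt hd
        rw [Real.dist_eq] at this
        exact this.le
      have a2 : |G j (z₀ i) * (∫ z in c i, ψ j z) - ∫ z in c i, ψ j z * G j z| ≤ κ * ∫ z in c i, |ψ j z| := by
        have I4 : IntegrableOn (fun z => G j (z₀ i) * ψ j z) (c i) := ((hψ j).const_mul _).integrableOn
        rw [← integral_const_mul, ← integral_sub I4 I2, ← integral_const_mul]
        refine (abs_integral_le_integral_abs).trans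
          (setIntegral_mono_on (I4.sub I2).abs (I3.const_mul κ) (hco i).measurableSet fun z hz => ?_)
        rw [mul_comm (ψ j z), ← sub_mul, abs_mul, abs_sub_comm]
        exact mul_le_mul_of_nonneg_right ((hvar i z hz).2 j).le (abs_nonneg _)
      have a3 := hwF i j
      rw [abs_le] at a1 a2 a3 ⊢
      constructor <;> linarith [a1.1, a1.2, a2.1, a2.2, a3.1, a3.2]
    refine (Finset.abs_sum_le_sum_abs _ _).trans ((Finset.sum_le_sum hone).trans ?_)
    rw [Finset.sum_add_distrib, ← Finset.mul_sum, ← hsp _ (hψ j).abs.integrableOn]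
    have b1 : ∑ i ∈ s, κ'' ≤ κ := by
      simp only [κ'', Finset.sum_const, nsmul_eq_mul]
      rw [mul_div_assoc', div_le_iff₀ (by positivity)]; nlinarith
    have b2 : ∫ z in Q, |ψ j z| ≤ N :=
      (setIntegral_le_integral (hψ j).abs (Eventually.of_forall fun z => abs_nonneg _)).trans (hNj j)
    have b3 : 2 * κ * ∫ z in Q, |ψ j z| ≤ 2 * κ * N := by gcongr
    linarith

end

section

/-! ### Moments of Young measures -/

/-- The projection of `ℝ` onto `[0,1]`. -/
def cl (l : ℝ) : ℝ := max 0 (min 1 l)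

lemma cl_mem (l : ℝ) : cl l ∈ Icc (0:ℝ) 1 :=
  ⟨le_max_left _ _, max_le zero_le_one (min_le_left _ _)⟩

lemma cl_eq {l : ℝ} (h : l ∈ Icc (0:ℝ) 1) : cl l = l := by
  simp [cl, h.1, h.2]

lemma cl_cont : Continuous cl := by unfold cl; fun_prop

lemma cl_comp_cont {F : ℝ → ℝ} (h : ContinuousOn F (Icc 0 1)) : Continuous fun l => F (cl l) :=
  h.comp_continuous cl_cont cl_mem

variable {T : ℝ}

lemma YM.ae_mem (μ : YM T) (p : ℝ × ℝ) : ∀ᵐ l ∂μ.m p, l ∈ Icc (0:ℝ) 1 := μ.supp01 p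

lemma mom_congr (μ : YM T) {F G : ℝ → ℝ} (h : ∀ l ∈ Icc (0:ℝ) 1, F l = G l) : μ.mom F = μ.mom G := by
  funext p
  exact integral_congr_ae ((μ.ae_mem p).mono fun l hl => h l hl)

lemma exists_bd {F : ℝ → ℝ} (hF : Continuous F) : ∃ C, 0 ≤ C ∧ ∀ l ∈ Icc (0:ℝ) 1, |F l| ≤ C := by
  obtain ⟨C, hC⟩ := isCompact_Icc.exists_bound_of_continuousOn (s := Icc (0:ℝ) 1) hF.continuousOn
  exact ⟨C, (norm_nonneg _).trans (hC 0 (by simp)), hC⟩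

lemma mom_int (μ : YM T) {F : ℝ → ℝ} (hF : Continuous F) (p : ℝ × ℝ) : Integrable F (μ.m p) := by
  haveI := μ.prob p
  obtain ⟨C, _, hC⟩ := exists_bd hF
  exact Integrable.of_bound hF.aestronglyMeasurable C ((μ.ae_mem p).mono fun l hl => hC l hl)

lemma mom_const (μ : YM T) (c : ℝ) (p : ℝ × ℝ) : μ.mom (fun _ => c) p = c := by
  haveI := μ.prob p
  simp [YM.mom]

lemma mom_mono (μ : YM T) {F G : ℝ → ℝ} (hF : Continuous F) (hG : Continuous G)
    (h : ∀ l ∈ Icc (0:ℝ) 1, F l ≤ G l) (p : ℝ × ℝ) : μ.mom F p ≤ μ.mom G p :=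
  integral_mono_ae (mom_int μ hF p) (mom_int μ hG p) ((μ.ae_mem p).mono fun l hl => h l hl)

lemma mom_nonneg (μ : YM T) {F : ℝ → ℝ} (h : ∀ l ∈ Icc (0:ℝ) 1, 0 ≤ F l) (p : ℝ × ℝ) :
    0 ≤ μ.mom F p :=
  integral_nonneg_of_ae ((μ.ae_mem p).mono fun l hl => h l hl)

lemma mom_abs_le (μ : YM T) {F : ℝ → ℝ} {C : ℝ} (h : ∀ l ∈ Icc (0:ℝ) 1, |F l| ≤ C)
    (p : ℝ × ℝ) : |μ.mom F p| ≤ C := by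
  haveI := μ.prob p
  have := norm_integral_le_of_norm_le_const (μ := μ.m p) (f := F) (C := C) ((μ.ae_mem p).mono fun l hl => h l hl)
  simpa [YM.mom] using this

lemma mom_meas (μ : YM T) {F : ℝ → ℝ} (hF : Continuous F) : Measurable (μ.mom F) := μ.meas F hF

lemma mom_sum (μ : YM T) {n : ℕ} (F : Fin n → ℝ → ℝ) (hF : ∀ i, Continuous (F i)) (c : Fin n → ℝ)
    (p : ℝ × ℝ) : μ.mom (fun l => ∑ i, c i * F i l) p = ∑ i, c i * μ.mom (F i) p := by
  simp only [YM.mom]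
  rw [integral_finsetSum _ fun i _ => (mom_int μ (hF i) p).const_mul _]
  simp [integral_const_mul]

lemma calI_congr {f f' σ σ' : ℝ → ℝ} (hf : ∀ l ∈ Icc (0:ℝ) 1, f l = f' l)
    (hσ : ∀ l ∈ Icc (0:ℝ) 1, σ l = σ' l) (μ : YM T) : calI f σ T μ = calI f' σ' T μ := by
  simp only [calI, mom_congr μ hf, mom_congr μ hσ]

lemma M0_congr {f f' σ σ' : ℝ → ℝ} (hf : ∀ l ∈ Icc (0:ℝ) 1, f l = f' l)
    (hσ : ∀ l ∈ Icc (0:ℝ) 1, σ l = σ' l) (μ : YM T) : M0 f σ T μ ↔ M0 f' σ' T μ := by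
  simp only [M0, Mg, calI_congr hf hσ, mom_congr μ hσ]

/-! ### The metrics are nonnegative -/

lemma negNorm_nonneg (N : ℝ) (w : ℝ → ℝ) : 0 ≤ negNorm N w := by
  unfold negNorm
  by_cases hb : BddAbove { r : ℝ | ∃ φ : STest N, (∫ x, deriv φ.toFun x ^ 2) = 1 ∧ r = ∫ x, w x * φ.toFun x }
  · rcases Set.eq_empty_or_nonempty { r : ℝ | ∃ φ : STest N, (∫ x, deriv φ.toFun x ^ 2) = 1 ∧ r = ∫ x, w x * φ.toFun x } with he | ⟨r, φ, h1, h2⟩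
    · rw [he]; simp
    · have a1 := le_csSup hb ⟨φ, h1, h2⟩
      have a2 := le_csSup hb (a := -r) ⟨⟨fun x => -φ.toFun x, φ.smooth.neg, φ.cpt.comp_left (g := fun x : ℝ => -x) neg_zero, by
        intro x hx; exact φ.supp (by simpa using hx)⟩, by
          have : deriv (fun x => -φ.toFun x) = fun x => - deriv φ.toFun x := by
            funext x; exact deriv.fun_neg
          simp [this, h1], by rw [h2]; simp [integral_neg]⟩
      linarith
  · rw [Real.sSup_of_not_bddAbove hb]

lemma dU_nonneg (u v : ℝ → ℝ) : 0 ≤ dU u v := by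
  refine tsum_nonneg fun n => ?_
  have := negNorm_nonneg ((n:ℝ)+1) (fun x => u x - v x)
  positivity

lemma dcU_nonneg (u v : cU T) : 0 ≤ dcU T u v := by
  refine Real.sSup_nonneg ?_
  rintro r ⟨t, _, rfl⟩; exact dU_nonneg _ _

/-! ### Lower semicontinuity -/

/-- The cost of one test function, the quantity maximised in `calI`. -/
def calIexpr (f σ : ℝ → ℝ) (T : ℝ) (μ : YM T) (φ : TTest T) : ℝ :=
  - pair T (μ.mom (fun l => l)) (ptF φ.toFun) - pair T (μ.mom f) (pxF φ.toFun)
      - 1 / 2 * pair T (fun p => μ.mom σ p * pxF φ.toFun p) (pxF φ.toFun)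

lemma TTest.ptF_cont (φ : TTest T) : Continuous (ptF φ.toFun) :=
  ((φ.smooth.continuous_fderiv (by simp)).clm_apply continuous_const)
lemma TTest.pxF_cont (φ : TTest T) : Continuous (pxF φ.toFun) :=
  ((φ.smooth.continuous_fderiv (by simp)).clm_apply continuous_const)
lemma TTest.ptF_cpt (φ : TTest T) : HasCompactSupport (ptF φ.toFun) :=
  (φ.cpt.fderiv (𝕜 := ℝ)).comp_left (g := fun L : ℝ × ℝ →L[ℝ] ℝ => L (1, 0)) (by simp)
lemma TTest.pxF_cpt (φ : TTest T) : HasCompactSupport (pxF φ.toFun) :=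
  (φ.cpt.fderiv (𝕜 := ℝ)).comp_left (g := fun L : ℝ × ℝ →L[ℝ] ℝ => L (0, 1)) (by simp)

/-- Weak* convergence tested on products `F ⊗ ψ`. -/
lemma tendsto_mom {dw : YM T → YM T → ℝ} (hdw : GeneratesWeakStar T dw) {μ : YM T} {μs : ℕ → YM T}
    (h : Tendsto (fun n => dw (μs n) μ) atTop (𝓝 0)) {F : ℝ → ℝ} (hF : Continuous F)
    {ψ : ℝ × ℝ → ℝ} (hψ : Continuous ψ) (hc : HasCompactSupport ψ) :
    Tendsto (fun n => ∫ p in Icc (0:ℝ) T ×ˢ (univ : Set ℝ), (μs n).mom F p * ψ p) atTop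
      (𝓝 (∫ p in Icc (0:ℝ) T ×ˢ (univ : Set ℝ), μ.mom F p * ψ p)) := by
  let χ : ℝ → ℝ := fun l => max 0 (min 1 (2 - |l|))
  have hχ : Continuous χ := by simp only [χ]; fun_prop
  have hχ1 : ∀ l ∈ Icc (0:ℝ) 1, χ l = 1 := by
    intro l hl
    have : 1 ≤ 2 - |l| := by rw [abs_of_nonneg hl.1]; linarith [hl.2]
    simp [χ, min_eq_left this]
  have hg := (hdw.2.2 μs μ).1 h (fun q => F q.1 * χ q.1 * ψ q.2) (by fun_prop) (by
    refine HasCompactSupport.intro' ((isCompact_closedBall (0:ℝ) 2).prod hc)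
      (Metric.isClosed_closedBall.prod (isClosed_tsupport ψ)) ?_
    rintro ⟨l, p⟩ hlp
    by_cases hl : l ∈ Metric.closedBall (0:ℝ) 2
    · have : p ∉ tsupport ψ := fun hp => hlp ⟨hl, hp⟩
      simp [image_eq_zero_of_notMem_tsupport this]
    · have : (2:ℝ) - |l| ≤ 0 := by
        simp only [Metric.mem_closedBall, dist_zero_right, Real.norm_eq_abs, not_le] at hl; linarith
      have : χ l = 0 := by
        simp only [χ]; exact max_eq_left ((min_le_right _ _).trans this)
      simp [this])
  have key : ∀ ν : YM T, ∀ p, (∫ l, F l * χ l * ψ p ∂ν.m p) = ν.mom F p * ψ p := by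
    intro ν p
    rw [integral_mul_const]
    congr 1
    exact integral_congr_ae ((ν.ae_mem p).mono fun l hl => by simp [hχ1 l hl])
  simpa only [key] using hg

/-- A supremum of functionals that are continuous along `d_𝓜`-convergent sequences. -/
theorem calI_lsc {dw : YM T → YM T → ℝ} (hdw : GeneratesWeakStar T dw) {f σ : ℝ → ℝ}
    (hf : Continuous f) (hσ : Continuous σ) {μ : YM T} {μs : ℕ → YM T}
    (h : Tendsto (fun n => dM T dw (μs n) μ) atTop (𝓝 0)) :
    calI f σ T μ ≤ Filter.liminf (fun n => calI f σ T (μs n)) atTop := by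
  have h' : Tendsto (fun n => dw (μs n) μ) atTop (𝓝 0) :=
    squeeze_zero (fun n => hdw.2.1 _ _)
      (fun n => le_add_of_nonneg_right (dcU_nonneg _ _)) h
  refine iSup_le fun φ => ?_
  have ht : Tendsto (fun n => calIexpr f σ T (μs n) φ) atTop (𝓝 (calIexpr f σ T μ φ)) := by
    have h1 := tendsto_mom hdw h' continuous_id φ.ptF_cont φ.ptF_cpt
    have h2 := tendsto_mom hdw h' hf φ.pxF_cont φ.pxF_cpt
    have h3 := tendsto_mom hdw h' hσ (ψ := fun p => pxF φ.toFun p * pxF φ.toFun p)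
      (φ.pxF_cont.mul φ.pxF_cont) (φ.pxF_cpt.mul_right)
    simp only [← mul_assoc] at h3
    exact (h1.neg.sub h2).sub (h3.const_mul (1/2))
  have ht' := (ENNReal.continuous_ofReal.tendsto _).comp ht
  calc ENNReal.ofReal (calIexpr f σ T μ φ)
      = Filter.liminf (fun n => ENNReal.ofReal (calIexpr f σ T (μs n) φ)) atTop := ht'.liminf_eq.symm
    _ ≤ _ := Filter.liminf_le_liminf (Eventually.of_forall fun n =>
      le_iSup (fun φ : TTest T => ENNReal.ofReal (calIexpr f σ T (μs n) φ)) φ)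

end

section

/-! ### Riesz representation of the cost -/

/-- A linear functional bounded by a Hilbert seminorm `‖q ·‖` is represented by a vector of the Hilbert space:
it factors through the range of `q` and extends by Hahn–Banach. -/
lemma riesz_abstract {V H : Type} [AddCommGroup V] [Module ℝ V] [NormedAddCommGroup H]
    [InnerProductSpace ℝ H] [CompleteSpace H] (q : V →ₗ[ℝ] H) (ℓ : V →ₗ[ℝ] ℝ) {C : ℝ} (hC : 0 ≤ C)
    (h : ∀ v, |ℓ v| ≤ C * ‖q v‖) : ∃ y : H, ‖y‖ ≤ C ∧ ∀ v, ℓ v = inner ℝ y (q v) := by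
  have hker : LinearMap.ker q ≤ LinearMap.ker ℓ := by
    intro v hv
    rw [LinearMap.mem_ker] at hv ⊢
    have := h v
    rw [hv, norm_zero, mul_zero] at this
    exact abs_nonpos_iff.1 this
  let g0 : LinearMap.range q →ₗ[ℝ] ℝ :=
    (Submodule.liftQ (LinearMap.ker q) ℓ hker).comp q.quotKerEquivRange.symm.toLinearMap
  have hg0 : ∀ v, g0 (q.rangeRestrict v) = ℓ v := by
    intro v
    have : q.quotKerEquivRange.symm (q.rangeRestrict v) = Submodule.Quotient.mk v := by
      rw [LinearEquiv.symm_apply_eq]; ext; simp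
    simp [g0, this]
  let g : StrongDual ℝ (LinearMap.range q) := g0.mkContinuous C (by
    rintro ⟨_, v, rfl⟩
    have := hg0 v
    have e : (⟨q v, ⟨v, rfl⟩⟩ : LinearMap.range q) = q.rangeRestrict v := rfl
    rw [e, this]
    exact h v)
  obtain ⟨G, hG, hGn⟩ := exists_extension_norm_eq (LinearMap.range q) g
  refine ⟨(InnerProductSpace.toDual ℝ H).symm G, ?_, fun v => ?_⟩
  · rw [LinearIsometryEquiv.norm_map, hGn]
    exact LinearMap.mkContinuous_norm_le _ hC _
  · rw [InnerProductSpace.toDual_symm_apply]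
    have := hG (q.rangeRestrict v)
    have h2 : G (q v) = g (q.rangeRestrict v) := this
    rw [h2]
    exact (hg0 v).symm

lemma sq_le_of_quadratic {ℓ Q I : ℝ} (hQ : 0 ≤ Q) (hI : 0 ≤ I)
    (h : ∀ t : ℝ, t * ℓ - 1 / 2 * (t ^ 2 * Q) ≤ I) : |ℓ| ≤ Real.sqrt (2 * I) * Real.sqrt Q := by
  rw [← Real.sqrt_mul (by positivity)]
  apply Real.abs_le_sqrt
  rcases hQ.eq_or_lt with h0 | h0
  · by_contra hne
    have hl : ℓ ≠ 0 := by rintro rfl; apply hne; rw [← h0]; simp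
    have := h ((I + 1) / ℓ)
    rw [← h0] at this
    rw [div_mul_cancel₀ _ hl] at this
    linarith
  · have := h (ℓ / Q)
    have e : ℓ / Q * ℓ - 1 / 2 * ((ℓ / Q) ^ 2 * Q) = ℓ ^ 2 / (2 * Q) := by field_simp; ring
    rw [e, div_le_iff₀ (by positivity)] at this
    linarith

variable {T : ℝ}

lemma TTest.pt_zero (φ : TTest T) {p : ℝ × ℝ} (hp : p ∉ Icc (0:ℝ) T ×ˢ (univ : Set ℝ)) :
    ptF φ.toFun p = 0 ∧ pxF φ.toFun p = 0 := by
  have hp' : p ∉ tsupport φ.toFun := fun hh => hp (closure_minimal (φ.supp.trans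
    (prod_mono Ioo_subset_Icc_self subset_rfl)) (isClosed_Icc.prod isClosed_univ) hh)
  have := gradF_zero_of_notMem hp'
  simpa [gradF, Prod.ext_iff] using this

/-- Test functions as a linear subspace of all functions. -/
def testSub (T : ℝ) : Submodule ℝ (ℝ × ℝ → ℝ) where
  carrier := {φ | ContDiff ℝ (⊤ : ℕ∞) φ ∧ HasCompactSupport φ ∧
    Function.support φ ⊆ Ioo (0 : ℝ) T ×ˢ (univ : Set ℝ)}
  add_mem' := by
    rintro a b ⟨h1, h2, h3⟩ ⟨k1, k2, k3⟩
    exact ⟨h1.add k1, h2.add k2, (Function.support_add a b).trans (union_subset h3 k3)⟩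
  zero_mem' := ⟨contDiff_const, HasCompactSupport.zero, by simp⟩
  smul_mem' := by
    rintro c a ⟨h1, h2, h3⟩
    exact ⟨contDiff_const.smul h1, h2.smul_left (f := fun _ => c),
      (Function.support_const_smul_subset c a).trans h3⟩

/-- A member of `testSub` as a test function. -/
def testSub.toT (v : testSub T) : TTest T := ⟨v.1, v.2.1, v.2.2.1, v.2.2.2⟩

lemma testSub.diff (v : testSub T) (p : ℝ × ℝ) : DifferentiableAt ℝ v.1 p :=
  v.2.1.differentiable (by simp) p

lemma pair_int {g ψ : ℝ × ℝ → ℝ} (hg : Measurable g) {C : ℝ} (hC : ∀ p, |g p| ≤ C)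
    (hψ : Continuous ψ) (hc : HasCompactSupport ψ) : Integrable fun p => g p * ψ p :=
  (hψ.integrable_of_hasCompactSupport hc).bdd_mul (c := C) hg.aestronglyMeasurable
    (Eventually.of_forall hC)

/-- A Young measure of finite cost solves the conservation law with the extra flux `√μ(σ) h`, where `h ∈ L²`
vanishes off the strip and satisfies `∫ h² ≤ 2 𝓘(μ)`. -/
theorem riesz_cost {f σ : ℝ → ℝ} (hf : Continuous f) (hσ : Continuous σ)
    (hσ0 : ∀ l ∈ Icc (0:ℝ) 1, 0 ≤ σ l) (μ : YM T) (hI : calI f σ T μ ≠ ⊤) :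
    ∃ h : ℝ × ℝ → ℝ, Measurable h ∧ (∀ p ∉ Icc (0:ℝ) T ×ˢ (univ : Set ℝ), h p = 0) ∧
      Integrable (fun p => h p ^ 2) ∧ ∫ p, h p ^ 2 ≤ 2 * (calI f σ T μ).toReal ∧
      ∀ φ : TTest T, (∫ p, μ.mom (fun l => l) p * ptF φ.toFun p) +
        ∫ p, (μ.mom f p + Real.sqrt (μ.mom σ p) * h p) * pxF φ.toFun p = 0 := by
  set S : Set (ℝ × ℝ) := Icc (0:ℝ) T ×ˢ (univ : Set ℝ) with hS
  have hSm : MeasurableSet S := measurableSet_Icc.prod MeasurableSet.univ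
  obtain ⟨Cf, _, hCf⟩ := exists_bd hf
  obtain ⟨Cσ, hCσ0, hCσ⟩ := exists_bd hσ
  have hm1 : ∀ p, |μ.mom (fun l => l) p| ≤ 1 := fun p =>
    mom_abs_le μ (fun l hl => by rw [abs_of_nonneg hl.1]; exact hl.2) p
  have hmm := mom_meas μ continuous_id'
  have hfm := mom_meas μ hf
  have hσm := mom_meas μ hσ
  have hfb := mom_abs_le μ hCf
  have ha0 : ∀ p, 0 ≤ μ.mom σ p := mom_nonneg μ hσ0
  have hsqm : Measurable fun p => Real.sqrt (μ.mom σ p) := hσm.sqrt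
  have hsqb : ∀ p, |Real.sqrt (μ.mom σ p)| ≤ Real.sqrt Cσ := fun p => by
    rw [abs_of_nonneg (Real.sqrt_nonneg _)]
    exact Real.sqrt_le_sqrt ((le_abs_self _).trans (mom_abs_le μ hCσ p))
  have addpt : ∀ (v w : testSub T) p, ptF (v + w : testSub T).1 p = ptF v.1 p + ptF w.1 p := by
    intro v w p; simp only [ptF, Submodule.coe_add]; rw [fderiv_add (testSub.diff v p) (testSub.diff w p)]; rfl
  have addpx : ∀ (v w : testSub T) p, pxF (v + w : testSub T).1 p = pxF v.1 p + pxF w.1 p := by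
    intro v w p; simp only [pxF, Submodule.coe_add]; rw [fderiv_add (testSub.diff v p) (testSub.diff w p)]; rfl
  have smpt : ∀ (c : ℝ) (v : testSub T) p, ptF (c • v : testSub T).1 p = c * ptF v.1 p := by
    intro c v p; simp only [ptF, Submodule.coe_smul]; rw [fderiv_const_smul (testSub.diff v p)]; rfl
  have smpx : ∀ (c : ℝ) (v : testSub T) p, pxF (c • v : testSub T).1 p = c * pxF v.1 p := by
    intro c v p; simp only [pxF, Submodule.coe_smul]; rw [fderiv_const_smul (testSub.diff v p)]; rfl
  have I1 : ∀ v : testSub T, Integrable fun p => μ.mom (fun l => l) p * ptF v.1 p := fun v =>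
    pair_int hmm hm1 (testSub.toT v).ptF_cont (testSub.toT v).ptF_cpt
  have I2 : ∀ v : testSub T, Integrable fun p => μ.mom f p * pxF v.1 p := fun v =>
    pair_int hfm hfb (testSub.toT v).pxF_cont (testSub.toT v).pxF_cpt
  let ℓ : testSub T →ₗ[ℝ] ℝ :=
    { toFun := fun v => -(∫ p in S, μ.mom (fun l => l) p * ptF v.1 p) - ∫ p in S, μ.mom f p * pxF v.1 p
      map_add' := by
        intro v w
        simp only [addpt, addpx, mul_add]
        rw [integral_add (I1 v).integrableOn (I1 w).integrableOn,
          integral_add (I2 v).integrableOn (I2 w).integrableOn]; ring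
      map_smul' := by
        intro c v
        simp only [smpt, smpx, mul_left_comm _ c, integral_const_mul, RingHom.id_apply, smul_eq_mul]
        ring }
  have hq2 : ∀ v : testSub T, MemLp (fun p => Real.sqrt (μ.mom σ p) * pxF v.1 p) 2 (volume.restrict S) := by
    intro v
    refine MemLp.restrict S ?_
    have h1 : MemLp (pxF v.1) 2 volume := (testSub.toT v).pxF_cont.memLp_of_hasCompactSupport (testSub.toT v).pxF_cpt
    refine MemLp.of_le_mul (c := Real.sqrt Cσ) h1
      (hsqm.aestronglyMeasurable.mul h1.1) (Eventually.of_forall fun p => ?_)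
    rw [norm_mul]
    exact mul_le_mul_of_nonneg_right (hsqb p) (norm_nonneg _)
  let q : testSub T →ₗ[ℝ] Lp ℝ 2 (volume.restrict S) :=
    { toFun := fun v => (hq2 v).toLp _
      map_add' := by
        intro v w
        rw [← MemLp.toLp_add (hq2 v) (hq2 w)]
        congr 1; funext p; simp only [addpx, mul_add, Pi.add_apply]
      map_smul' := by
        intro c v
        rw [RingHom.id_apply, ← MemLp.toLp_const_smul c (hq2 v)]
        congr 1; funext p; simp only [smpx, Pi.smul_apply, smul_eq_mul]; ring }
  have hqn : ∀ v, ‖q v‖ ^ 2 = ∫ p in S, μ.mom σ p * pxF v.1 p * pxF v.1 p := by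
    intro v
    rw [← real_inner_self_eq_norm_sq, L2.inner_def]
    refine integral_congr_ae ?_
    filter_upwards [(hq2 v).coeFn_toLp] with p hp
    change inner ℝ ((hq2 v).toLp _ p) ((hq2 v).toLp _ p) = _
    rw [hp]
    simp only [RCLike.inner_apply, conj_trivial]
    have := Real.mul_self_sqrt (ha0 p)
    linear_combination (pxF v.1 p * pxF v.1 p) * this
  have hI0 : 0 ≤ (calI f σ T μ).toReal := ENNReal.toReal_nonneg
  have hbase : ∀ v, ℓ v - 1 / 2 * ‖q v‖ ^ 2 ≤ (calI f σ T μ).toReal := by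
    intro v
    have h1 : ENNReal.ofReal (calIexpr f σ T μ (testSub.toT v)) ≤ calI f σ T μ :=
      le_iSup (fun φ : TTest T => ENNReal.ofReal (calIexpr f σ T μ φ)) (testSub.toT v)
    have h2 := (ENNReal.ofReal_le_iff_le_toReal hI).1 h1
    rw [hqn]
    exact h2
  obtain ⟨y, hy, hyq⟩ := riesz_abstract q ℓ (Real.sqrt_nonneg (2 * (calI f σ T μ).toReal)) (by
    intro v
    rw [← Real.sqrt_sq (norm_nonneg (q v))]
    refine sq_le_of_quadratic (sq_nonneg _) hI0 fun t => ?_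
    have := hbase (t • v)
    rw [map_smul, map_smul, norm_smul, mul_pow, Real.norm_eq_abs, sq_abs] at this
    exact this)
  have hyL := Lp.memLp y
  have hym : StronglyMeasurable y := Lp.stronglyMeasurable y
  refine ⟨S.indicator y, hym.measurable.indicator hSm, fun p hp => indicator_of_notMem hp _, ?_, ?_, ?_⟩
  · have : (fun p => S.indicator y p ^ 2) = S.indicator (fun p => y p ^ 2) := by
      funext p; by_cases hp : p ∈ S <;> simp [hp]
    rw [this, integrable_indicator_iff hSm]
    exact hyL.integrable_sq
  · have : (fun p => S.indicator y p ^ 2) = S.indicator (fun p => y p ^ 2) := by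
      funext p; by_cases hp : p ∈ S <;> simp [hp]
    rw [this, integral_indicator hSm]
    have h1 : ∫ p in S, y p ^ 2 = ‖y‖ ^ 2 := by
      rw [← real_inner_self_eq_norm_sq, L2.inner_def]
      refine integral_congr_ae (Eventually.of_forall fun p => ?_)
      simp [sq]
    rw [h1]
    calc ‖y‖ ^ 2 ≤ (Real.sqrt (2 * (calI f σ T μ).toReal)) ^ 2 := by gcongr
      _ = _ := Real.sq_sqrt (by positivity)
  · intro φ
    let v : testSub T := ⟨φ.toFun, φ.smooth, φ.cpt, φ.supp⟩
    have h1 := hyq v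
    have h2 : inner ℝ y (q v) = ∫ p in S, Real.sqrt (μ.mom σ p) * S.indicator y p * pxF φ.toFun p := by
      rw [L2.inner_def]
      refine integral_congr_ae ?_
      filter_upwards [(hq2 v).coeFn_toLp, ae_restrict_mem hSm] with p hp hpS
      change inner ℝ (y p) ((hq2 v).toLp _ p) = _
      rw [hp, indicator_of_mem hpS]
      simp only [RCLike.inner_apply, conj_trivial]; ring
    have h3 : ℓ v = -(∫ p in S, μ.mom (fun l => l) p * ptF φ.toFun p) - ∫ p in S, μ.mom f p * pxF φ.toFun p := rfl
    have e1 : ∫ p in S, μ.mom (fun l => l) p * ptF φ.toFun p = ∫ p, μ.mom (fun l => l) p * ptF φ.toFun p :=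
      setIntegral_eq_integral_of_forall_compl_eq_zero fun p hp => by rw [(φ.pt_zero hp).1, mul_zero]
    have e2 : ∫ p in S, (μ.mom f p + Real.sqrt (μ.mom σ p) * S.indicator y p) * pxF φ.toFun p =
        ∫ p, (μ.mom f p + Real.sqrt (μ.mom σ p) * S.indicator y p) * pxF φ.toFun p :=
      setIntegral_eq_integral_of_forall_compl_eq_zero fun p hp => by rw [(φ.pt_zero hp).2, mul_zero]
    rw [← e1, ← e2]
    have J : IntegrableOn (fun p => Real.sqrt (μ.mom σ p) * S.indicator y p * pxF φ.toFun p) S := by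
      have := (L2.integrable_inner (𝕜 := ℝ) y (q v))
      refine this.congr ?_
      filter_upwards [(hq2 v).coeFn_toLp, ae_restrict_mem hSm] with p hp hpS
      change inner ℝ (y p) ((hq2 v).toLp _ p) = _
      rw [hp, indicator_of_mem hpS]
      simp only [RCLike.inner_apply, conj_trivial]; ring
    simp only [add_mul]
    rw [integral_add (I2 v).integrableOn J]
    linarith

end

section

/-! ### Mollification composed with an affine map -/

/-- `ρ` is a mollifier supported in the open ball of radius `r` about the origin. -/
structure IsMoll (ρ : ℝ × ℝ → ℝ) (r : ℝ) : Prop where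
  smooth : ContDiff ℝ (⊤ : ℕ∞) ρ
  cpt : HasCompactSupport ρ
  nonneg : ∀ z, 0 ≤ ρ z
  int1 : ∫ z, ρ z = 1
  supp : ∀ z, r ≤ ‖z‖ → ρ z = 0

lemma exists_moll {r : ℝ} (hr : 0 < r) : ∃ ρ, IsMoll ρ r := by
  let b : ContDiffBump (0 : ℝ × ℝ) := ⟨r / 2, r, by positivity, by linarith⟩
  refine ⟨b.normed volume, b.contDiff_normed, b.hasCompactSupport_normed, b.nonneg_normed,
    b.integral_normed, fun z hz => ?_⟩
  have : z ∉ Function.support (b.normed volume) := by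
    rw [b.support_normed_eq]; simpa [b] using hz
  simpa using this

/-- The convolution `ρ ⋆ g` evaluated at `s z + v`. -/
def moll (ρ : ℝ × ℝ → ℝ) (s : ℝ) (v : ℝ × ℝ) (g : ℝ × ℝ → ℝ) (z : ℝ × ℝ) : ℝ :=
  ∫ y, ρ y * g (s • z + v - y)

variable {ρ : ℝ × ℝ → ℝ} {r s : ℝ} {v : ℝ × ℝ}

lemma moll_eq (ρ : ℝ × ℝ → ℝ) (s : ℝ) (v : ℝ × ℝ) (g : ℝ × ℝ → ℝ) (z : ℝ × ℝ) :
    moll ρ s v g z = (convolution ρ g (ContinuousLinearMap.lsmul ℝ ℝ) volume) (s • z + v) := by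
  simp [moll, convolution]

lemma IsMoll.integrable (h : IsMoll ρ r) : Integrable ρ :=
  h.smooth.continuous.integrable_of_hasCompactSupport h.cpt

lemma moll_contDiff (h : IsMoll ρ r) {g : ℝ × ℝ → ℝ} (hg : LocallyIntegrable g) :
    ContDiff ℝ (⊤ : ℕ∞) (moll ρ s v g) := by
  have h1 := h.cpt.contDiff_convolution_left (ContinuousLinearMap.lsmul ℝ ℝ) h.smooth hg
  have h2 : moll ρ s v g = (convolution ρ g (ContinuousLinearMap.lsmul ℝ ℝ) volume) ∘ fun z => s • z + v := by
    funext z; exact moll_eq _ _ _ _ _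
  rw [h2]
  exact h1.comp (by fun_prop)

lemma moll_integrable (h : IsMoll ρ r) {g : ℝ × ℝ → ℝ} (hg : LocallyIntegrable g) (z : ℝ × ℝ) :
    Integrable fun y => ρ y * g (z - y) := by
  have := h.cpt.convolutionExists_left (ContinuousLinearMap.lsmul ℝ ℝ) h.smooth.continuous hg z
  simpa [ConvolutionExistsAt] using this

lemma moll_fderiv (h : IsMoll ρ r) {g : ℝ × ℝ → ℝ} (hg : LocallyIntegrable g) (z w : ℝ × ℝ) :
    fderiv ℝ (moll ρ s v g) z w = s * ∫ y, g y * fderiv ℝ ρ (s • z + v - y) w := by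
  have h1 := h.cpt.hasFDerivAt_convolution_left (ContinuousLinearMap.lsmul ℝ ℝ)
    (h.smooth.of_le (by simp)) hg (s • z + v)
  have hA : HasFDerivAt (fun z : ℝ × ℝ => s • z + v) (s • ContinuousLinearMap.id ℝ (ℝ × ℝ)) z :=
    ((hasFDerivAt_id z).const_smul s).add_const v
  have h2 := h1.comp z hA
  have h3 : moll ρ s v g = (convolution ρ g (ContinuousLinearMap.lsmul ℝ ℝ) volume) ∘ fun z => s • z + v := by
    funext z; exact moll_eq _ _ _ _ _
  rw [h3, h2.fderiv]
  simp only [ContinuousLinearMap.coe_comp, Function.comp_apply, FunLike.coe_smul,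
    ContinuousLinearMap.coe_id', Pi.smul_apply, id_eq, map_smul, smul_eq_mul]
  congr 1
  have hex : ConvolutionExistsAt (fderiv ℝ ρ) g (s • z + v)
      ((ContinuousLinearMap.lsmul ℝ ℝ : ℝ →L[ℝ] ℝ →L[ℝ] ℝ).precompL (ℝ × ℝ)) volume :=
    (h.cpt.fderiv ℝ).convolutionExists_left _ (h.smooth.continuous_fderiv (by simp)) hg _
  rw [convolution, ContinuousLinearMap.integral_apply hex]
  rw [← integral_sub_left_eq_self (fun y => g y * fderiv ℝ ρ (s • z + v - y) w) volume (s • z + v)]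
  refine integral_congr_ae (Eventually.of_forall fun y => ?_)
  simp [mul_comm]

/-- Mollification turns the weak conservation law into a classical one, at all points whose
`r`-neighbourhood is mapped into the open strip. -/
lemma moll_conservation (h : IsMoll ρ r) {T : ℝ} {g e : ℝ × ℝ → ℝ} (hg : LocallyIntegrable g)
    (he : LocallyIntegrable e)
    (hw : ∀ φ : TTest T, (∫ p, g p * ptF φ.toFun p) + ∫ p, e p * pxF φ.toFun p = 0)
    {z : ℝ × ℝ} (h1 : r ≤ (s • z + v).1) (h2 : (s • z + v).1 ≤ T - r) :
    fderiv ℝ (moll ρ s v g) z (1, 0) + fderiv ℝ (moll ρ s v e) z (0, 1) = 0 := by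
  set a := s • z + v with ha
  let φ : TTest T := ⟨fun y => ρ (a - y), h.smooth.comp (by fun_prop),
    h.cpt.comp_homeomorph (Homeomorph.subLeft a), by
      intro y hy
      have hn : ‖a - y‖ < r := by
        by_contra hh; exact hy (h.supp _ (not_lt.1 hh))
      have := (norm_fst_le (a - y)).trans_lt hn
      rw [Real.norm_eq_abs, abs_lt, Prod.fst_sub] at this
      exact ⟨⟨by linarith [this.2], by linarith [this.1]⟩, trivial⟩⟩
  have hd : ∀ y w, fderiv ℝ φ.toFun y w = - fderiv ℝ ρ (a - y) w := by
    intro y w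
    have hh : HasFDerivAt (fun y => a - y) (-ContinuousLinearMap.id ℝ (ℝ × ℝ)) y := (hasFDerivAt_id y).const_sub a
    have := ((h.smooth.differentiable (by simp) (a - y)).hasFDerivAt.comp y hh).fderiv
    change fderiv ℝ (ρ ∘ fun y => a - y) y w = _
    rw [this]; simp
  have := hw φ
  simp only [ptF, pxF, hd, mul_neg, integral_neg] at this
  rw [moll_fderiv h hg, moll_fderiv h he]
  rw [← mul_add]
  have e : (∫ y, g y * fderiv ℝ ρ (a - y) (1, 0)) + ∫ y, e y * fderiv ℝ ρ (a - y) (0, 1) = 0 := by linarith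
  rw [e, mul_zero]

lemma locInt_of_bdd {g : ℝ × ℝ → ℝ} (hg : Measurable g) {C : ℝ} (hC : ∀ z, |g z| ≤ C) :
    LocallyIntegrable g := by
  have : LocallyIntegrable (fun _ : ℝ × ℝ => C) := locallyIntegrable_const C
  exact this.mono hg.aestronglyMeasurable (Eventually.of_forall fun z => by
    rw [Real.norm_eq_abs, Real.norm_eq_abs]; exact (hC z).trans (le_abs_self _))

lemma moll_mono (h : IsMoll ρ r) {g g' : ℝ × ℝ → ℝ} (hg : LocallyIntegrable g)
    (hg' : LocallyIntegrable g') (hle : ∀ z, g z ≤ g' z) (z : ℝ × ℝ) :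
    moll ρ s v g z ≤ moll ρ s v g' z :=
  integral_mono (moll_integrable h hg _) (moll_integrable h hg' _)
    fun y => mul_le_mul_of_nonneg_left (hle _) (h.nonneg y)

lemma moll_const (h : IsMoll ρ r) (c : ℝ) (z : ℝ × ℝ) : moll ρ s v (fun _ => c) z = c := by
  simp [moll, integral_mul_const, h.int1]

lemma moll_lin (h : IsMoll ρ r) {g g' : ℝ × ℝ → ℝ} (hg : LocallyIntegrable g)
    (hg' : LocallyIntegrable g') (a b : ℝ) (z : ℝ × ℝ) :
    moll ρ s v (fun z => a * g z + b * g' z) z = a * moll ρ s v g z + b * moll ρ s v g' z := by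
  have i1 := (moll_integrable h hg (s • z + v)).const_mul a
  have i2 := (moll_integrable h hg' (s • z + v)).const_mul b
  simp only [moll]
  rw [← integral_const_mul, ← integral_const_mul, ← integral_add i1 i2]
  congr 1; funext y; ring

lemma moll_sum (h : IsMoll ρ r) {n : ℕ} {g : Fin n → ℝ × ℝ → ℝ} (hg : ∀ i, LocallyIntegrable (g i))
    (c : Fin n → ℝ) (z : ℝ × ℝ) :
    moll ρ s v (fun z => ∑ i, c i * g i z) z = ∑ i, c i * moll ρ s v (g i) z := by
  simp only [moll, Finset.mul_sum]
  rw [integral_finsetSum]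
  · refine Finset.sum_congr rfl fun i _ => ?_
    rw [← integral_const_mul]
    congr 1; funext y; ring
  · intro i _
    refine ((moll_integrable h (hg i) (s • z + v)).const_mul (c i)).congr (Eventually.of_forall fun y => ?_)
    simp only; ring

lemma moll_abs_le (h : IsMoll ρ r) {g : ℝ × ℝ → ℝ} (hg : Measurable g) {C : ℝ}
    (hC : ∀ z, |g z| ≤ C) (z : ℝ × ℝ) : |moll ρ s v g z| ≤ C := by
  have l := locInt_of_bdd hg hC
  rw [abs_le]
  constructor
  · rw [← moll_const (s := s) (v := v) h (-C) z]
    exact moll_mono h (locallyIntegrable_const _) l (fun z => (abs_le.1 (hC z)).1) z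
  · rw [← moll_const (s := s) (v := v) h C z]
    exact moll_mono h l (locallyIntegrable_const _) (fun z => (abs_le.1 (hC z)).2) z

lemma moll_int (h : IsMoll ρ r) (hs : s ≠ 0) {g : ℝ × ℝ → ℝ} (hg : Integrable g) :
    Integrable (moll ρ s v g) ∧ ∫ z, moll ρ s v g z = |(s ^ 2)⁻¹| * ∫ z, g z := by
  have h3 : moll ρ s v g = fun z => (convolution ρ g (ContinuousLinearMap.lsmul ℝ ℝ) volume) (s • z + v) := by
    funext z; exact moll_eq _ _ _ _ _
  have h4 := Integrable.integrable_convolution (ContinuousLinearMap.lsmul ℝ ℝ) h.integrable hg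
  rw [h3]
  refine ⟨affine_integrable h4 hs v, ?_⟩
  rw [affine_integral, integral_convolution _ h.integrable hg, h.int1]
  simp

set_option maxHeartbeats 1000000 in
/-- Scaled and shifted copies of `ψ`, with the Jacobian factor, are close to `ψ` in `L¹`. -/
lemma moll_weak_aux {ψ : ℝ × ℝ → ℝ} (hψ : Integrable ψ) {ε : ℝ} (hε : 0 < ε) :
    ∃ κ > 0, κ ≤ 1/2 ∧ ∀ (s : ℝ) (w : ℝ × ℝ), |s - 1| < κ → ‖w‖ < 2 * κ →
      ∫ z, |(s ^ 2)⁻¹ * ψ (s⁻¹ • z + s⁻¹ • w) - ψ z| ≤ ε := by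
  have h1 := L1_cont hψ
  have hA : Tendsto (fun q : ℝ × (ℝ × ℝ) => q.1⁻¹) (𝓝 (1, 0)) (𝓝 1) := by
    have : Tendsto (fun q : ℝ × (ℝ × ℝ) => q.1) (𝓝 (1, 0)) (𝓝 1) := continuousAt_fst
    simpa using this.inv₀ one_ne_zero
  have hB : Tendsto (fun q : ℝ × (ℝ × ℝ) => q.1⁻¹ • q.2) (𝓝 (1, 0)) (𝓝 0) := by
    have : Tendsto (fun q : ℝ × (ℝ × ℝ) => q.2) (𝓝 (1, 0)) (𝓝 0) := continuousAt_snd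
    simpa using hA.smul this
  have h2 : Tendsto (fun q : ℝ × (ℝ × ℝ) => ∫ z, |ψ (q.1⁻¹ • z + q.1⁻¹ • q.2) - ψ z|) (𝓝 (1, 0)) (𝓝 0) :=
    h1.comp (hA.prodMk_nhds hB)
  have h3 : Tendsto (fun q : ℝ × (ℝ × ℝ) => |1 - q.1 ^ 2| * ∫ z, |ψ z|) (𝓝 (1, 0)) (𝓝 0) := by
    have : ContinuousAt (fun q : ℝ × (ℝ × ℝ) => |1 - q.1 ^ 2| * ∫ z, |ψ z|) (1, 0) := by fun_prop
    have := this.tendsto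
    simpa using this
  have h4 := (h2.add h3).eventually (gt_mem_nhds (show (0:ℝ) + 0 < ε by simpa using hε))
  obtain ⟨κ, hκ, hb⟩ := Metric.eventually_nhds_iff.1 h4
  refine ⟨min (κ/2) (1/2), by positivity, min_le_right _ _, fun s w hs hw => ?_⟩
  have a1 := min_le_left (κ/2) (1/2)
  have a2 := min_le_right (κ/2) (1/2)
  have hs0 : 0 < s := by rw [abs_lt] at hs; linarith [hs.1]
  have := hb (y := (s, w)) (by
    rw [Prod.dist_eq, max_lt_iff, Real.dist_eq, dist_zero_right]
    exact ⟨hs.trans_le (by linarith), hw.trans_le (by linarith)⟩)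
  simp only at this
  refine le_trans ?_ this.le
  have i0 : Integrable fun z => ψ (s⁻¹ • z + s⁻¹ • w) := affine_integrable hψ (inv_ne_zero hs0.ne') _
  have e : |1 - s ^ 2| * ∫ z, |ψ z| = ∫ z, |(s ^ 2)⁻¹ - 1| * |ψ (s⁻¹ • z + s⁻¹ • w)| := by
    rw [integral_const_mul, affine_integral (fun z => |ψ z|), ← mul_assoc, ← abs_mul]
    congr 2; field_simp
  have j1 : Integrable fun z => |ψ (s⁻¹ • z + s⁻¹ • w) - ψ z| := (i0.sub hψ).abs
  have j2 : Integrable fun z => |(s ^ 2)⁻¹ - 1| * |ψ (s⁻¹ • z + s⁻¹ • w)| := i0.abs.const_mul _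
  rw [e, ← integral_add j1 j2]
  refine integral_mono ((i0.const_mul _).sub hψ).abs (j1.add j2) fun z => ?_
  simp only
  rw [← abs_mul]
  refine le_trans (le_of_eq ?_) (abs_add_le _ _)
  congr 1; ring

/-- Mollification converges weakly, uniformly over uniformly bounded functions. -/
lemma moll_weak {ψ : ℝ × ℝ → ℝ} (hψ : Integrable ψ) {ε : ℝ} (hε : 0 < ε) :
    ∃ κ > 0, ∀ (ρ : ℝ × ℝ → ℝ) (r s : ℝ) (v : ℝ × ℝ), IsMoll ρ r → r < κ → |s - 1| < κ → ‖v‖ < κ →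
      ∀ (g : ℝ × ℝ → ℝ) (C : ℝ), Measurable g → 0 ≤ C → (∀ z, |g z| ≤ C) →
        |(∫ z, ψ z * moll ρ s v g z) - ∫ z, ψ z * g z| ≤ C * ε := by
  obtain ⟨κ, hκ, hκ2, hk⟩ := moll_weak_aux hψ hε
  refine ⟨κ, hκ, fun ρ r s v hρ hr hs hv g C hg hC0 hC => ?_⟩
  have hs0 : 0 < s := by rw [abs_lt] at hs; linarith [hs.1]
  have hi : Integrable (fun q : (ℝ × ℝ) × (ℝ × ℝ) => ψ q.1 * (ρ q.2 * g (s • q.1 + v - q.2))) (volume.prod volume) := by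
    have : Integrable (fun q : (ℝ × ℝ) × (ℝ × ℝ) => ψ q.1 * ρ q.2) (volume.prod volume) := hψ.mul_prod hρ.integrable
    have h2 := this.mul_bdd (c := C) (g := fun q => g (s • q.1 + v - q.2)) (by
      apply Measurable.aestronglyMeasurable
      exact hg.comp (by fun_prop)) (Eventually.of_forall fun q => hC _)
    refine h2.congr (Eventually.of_forall fun q => ?_)
    simp only; ring
  have e1 : ∫ z, ψ z * moll ρ s v g z = ∫ y, ρ y * ∫ z, ψ z * g (s • z + v - y) := by
    simp only [moll, ← integral_const_mul]
    rw [integral_integral_swap hi]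
    congr 1; funext y; congr 1; funext z; ring
  have e2 : ∫ z, ψ z * g z = ∫ y, ρ y * ∫ z, ψ z * g z := by
    rw [integral_mul_const, hρ.int1, one_mul]
  have inner : ∀ y, ‖y‖ < r → |(∫ z, ψ z * g (s • z + v - y)) - ∫ z, ψ z * g z| ≤ C * ε := by
    intro y hy
    have hb := hk s (y - v) hs ((norm_sub_le _ _).trans_lt (by linarith))
    have i0 : Integrable fun z => ψ (s⁻¹ • z + s⁻¹ • (y - v)) := affine_integrable hψ (inv_ne_zero hs0.ne') _
    have e3 : ∫ z, ψ z * g (s • z + v - y) =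
        ∫ z, ((s ^ 2)⁻¹ * ψ (s⁻¹ • z + s⁻¹ • (y - v))) * g z := by
      have := affine_integral (fun z => ψ (s⁻¹ • z + s⁻¹ • (y - v)) * g z) (s := s) (v - y)
      simp only [mul_assoc, integral_const_mul]
      rw [abs_of_pos (by positivity)] at this
      rw [← this]
      congr 1; funext z; congr 2
      · rw [smul_add, smul_smul, inv_mul_cancel₀ hs0.ne', one_smul, add_assoc, ← smul_add]; simp
      · abel
    have j1 : Integrable fun z => ((s ^ 2)⁻¹ * ψ (s⁻¹ • z + s⁻¹ • (y - v))) * g z :=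
      (i0.const_mul _).mul_bdd (c := C) hg.aestronglyMeasurable (Eventually.of_forall hC)
    have j2 : Integrable fun z => ψ z * g z :=
      hψ.mul_bdd (c := C) hg.aestronglyMeasurable (Eventually.of_forall hC)
    rw [e3, ← integral_sub j1 j2]
    refine (abs_integral_le_integral_abs).trans ?_
    calc _ ≤ ∫ z, C * |(s ^ 2)⁻¹ * ψ (s⁻¹ • z + s⁻¹ • (y - v)) - ψ z| := by
          refine integral_mono (j1.sub j2).abs (((i0.const_mul _).sub hψ).abs.const_mul C) fun z => ?_
          simp only
          rw [← sub_mul, abs_mul, mul_comm]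
          exact mul_le_mul_of_nonneg_right (hC z) (abs_nonneg _)
      _ ≤ C * ε := by rw [integral_const_mul]; exact mul_le_mul_of_nonneg_left hb hC0
  have k1 : Integrable fun y => ρ y * ∫ z, ψ z * g (s • z + v - y) := by
    have := hi.integral_prod_right
    refine this.congr (Eventually.of_forall fun y => ?_)
    simp only [← integral_const_mul]
    congr 1; funext z; ring
  have k2 : Integrable fun y => ρ y * ∫ z, ψ z * g z := hρ.integrable.mul_const _
  rw [e1, e2, ← integral_sub k1 k2]
  refine (abs_integral_le_integral_abs).trans ?_
  calc _ ≤ ∫ y, ρ y * (C * ε) := by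
        refine integral_mono (k1.sub k2).abs (hρ.integrable.mul_const _) fun y => ?_
        simp only
        rw [← mul_sub, abs_mul, abs_of_nonneg (hρ.nonneg y)]
        by_cases hy : ‖y‖ < r
        · exact mul_le_mul_of_nonneg_left (inner y hy) (hρ.nonneg y)
        · rw [hρ.supp y (not_lt.1 hy)]; simp
    _ = C * ε := by rw [integral_mul_const, hρ.int1, one_mul]

end

section

/-! ### The negative Sobolev seminorms -/

/-- The bound `‖w‖_{-1,N} ≤ ε`, stated test function by test function. -/
def nb (N ε : ℝ) (w : ℝ → ℝ) : Prop :=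
  ∀ φ : STest N, (∫ x, deriv φ.toFun x ^ 2) = 1 → ∫ x, w x * φ.toFun x ≤ ε

section STest
variable {N : ℝ} (φ : STest N)

lemma STest.cont : Continuous φ.toFun := φ.smooth.continuous
lemma STest.dcont : Continuous (deriv φ.toFun) := φ.smooth.continuous_deriv (by simp)
lemma STest.diff : Differentiable ℝ φ.toFun := φ.smooth.differentiable (by simp)
lemma STest.integrable : Integrable φ.toFun := φ.cont.integrable_of_hasCompactSupport φ.cpt
lemma STest.zero {x : ℝ} (h : x ∉ Ioo (-N) N) : φ.toFun x = 0 := by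
  by_contra hh; exact h (φ.supp hh)
lemma STest.dcpt : HasCompactSupport (deriv φ.toFun) := φ.cpt.deriv
lemma STest.dsq : Integrable fun x => deriv φ.toFun x ^ 2 := by
  have h : Integrable fun x => deriv φ.toFun x * deriv φ.toFun x :=
    (φ.dcont.mul φ.dcont).integrable_of_hasCompactSupport φ.dcpt.mul_right
  refine h.congr (Eventually.of_forall fun x => ?_)
  simp only [sq]

/-- The opposite test function. -/
def STest.neg : STest N := ⟨fun x => -φ.toFun x, φ.smooth.neg, φ.cpt.comp_left (g := fun x : ℝ => -x) neg_zero,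
  fun x hx => φ.supp (by simpa using hx)⟩

lemma STest.neg_one (h : (∫ x, deriv φ.toFun x ^ 2) = 1) : (∫ x, deriv φ.neg.toFun x ^ 2) = 1 := by
  have : deriv φ.neg.toFun = fun x => - deriv φ.toFun x := by
    funext x; exact deriv.fun_neg
  simp [this, h]

/-- Normalised test functions are `½`-Hölder, by Cauchy–Schwarz applied to the derivative. -/
lemma STest.holder (h : (∫ x, deriv φ.toFun x ^ 2) = 1) (x y : ℝ) :
    |φ.toFun x - φ.toFun y| ≤ Real.sqrt |x - y| := by
  wlog hxy : y ≤ x generalizing x y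
  · rw [abs_sub_comm, abs_sub_comm x]; exact this y x (le_of_not_ge hxy)
  rcases hxy.eq_or_lt with rfl | hlt
  · simp
  rw [abs_of_nonneg (sub_nonneg.2 hxy)]
  have e : φ.toFun x - φ.toFun y = ∫ z in y..x, deriv φ.toFun z :=
    (intervalIntegral.integral_deriv_eq_sub (fun z _ => φ.diff z) (φ.dcont.intervalIntegrable _ _)).symm
  set k := Real.sqrt (x - y) with hk
  have hk0 : 0 < k := Real.sqrt_pos.2 (sub_pos.2 hlt)
  have hkk : k * k = x - y := Real.mul_self_sqrt (sub_nonneg.2 hxy)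
  have h1 : |∫ z in y..x, deriv φ.toFun z| ≤ ∫ z in y..x, (1 / (2 * k) + k / 2 * deriv φ.toFun z ^ 2) := by
    rw [← Real.norm_eq_abs]
    refine intervalIntegral.norm_integral_le_of_norm_le hxy (Eventually.of_forall fun z _ => ?_) ?_
    · rw [Real.norm_eq_abs]
      have := sq_nonneg (k * |deriv φ.toFun z| - 1)
      rw [← sq_abs (deriv φ.toFun z)]
      have e2 : 1 / (2 * k) + k / 2 * |deriv φ.toFun z| ^ 2 - |deriv φ.toFun z| =
        (k * |deriv φ.toFun z| - 1) ^ 2 / (2 * k) := by field_simp; ring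
      have : 0 ≤ (k * |deriv φ.toFun z| - 1) ^ 2 / (2 * k) := by positivity
      linarith
    · exact (continuous_const.add (continuous_const.mul (φ.dcont.pow 2))).intervalIntegrable _ _
  have h2 : ∫ z in y..x, (1 / (2 * k) + k / 2 * deriv φ.toFun z ^ 2) =
      (x - y) * (1 / (2 * k)) + k / 2 * ∫ z in y..x, deriv φ.toFun z ^ 2 := by
    have j1 : IntervalIntegrable (fun _ : ℝ => 1 / (2 * k)) volume y x := intervalIntegrable_const
    have j2 : IntervalIntegrable (fun z : ℝ => k / 2 * deriv φ.toFun z ^ 2) volume y x :=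
      (continuous_const.mul (φ.dcont.pow 2)).intervalIntegrable _ _
    rw [intervalIntegral.integral_add j1 j2, intervalIntegral.integral_const,
      intervalIntegral.integral_const_mul, smul_eq_mul]
  have h3 : ∫ z in y..x, deriv φ.toFun z ^ 2 ≤ 1 := by
    rw [intervalIntegral.integral_of_le hxy, ← h]
    exact setIntegral_le_integral φ.dsq (Eventually.of_forall fun z => sq_nonneg _)
  rw [e]
  refine h1.trans ?_
  rw [h2, ← hkk]
  have e3 : k * k * (1 / (2 * k)) = k / 2 := by field_simp
  rw [e3]
  nlinarith

lemma STest.abs_le (hN : 0 < N) (h : (∫ x, deriv φ.toFun x ^ 2) = 1) (x : ℝ) :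
    |φ.toFun x| ≤ Real.sqrt (2 * N) := by
  by_cases hx : x ∈ Ioo (-N) N
  · have := φ.holder h x (-N)
    rw [φ.zero (x := -N) (by simp), sub_zero] at this
    refine this.trans (Real.sqrt_le_sqrt ?_)
    rw [abs_of_nonneg (by linarith [hx.1])]; linarith [hx.2]
  · rw [φ.zero hx]; simp

lemma STest.l1 (hN : 0 < N) (h : (∫ x, deriv φ.toFun x ^ 2) = 1) :
    ∫ x, |φ.toFun x| ≤ 2 * N * Real.sqrt (2 * N) := by
  have e : ∫ x, |φ.toFun x| = ∫ x in Icc (-N) N, |φ.toFun x| :=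
    (setIntegral_eq_integral_of_forall_compl_eq_zero fun x hx => by
      rw [φ.zero fun hh => hx (Ioo_subset_Icc_self hh), abs_zero]).symm
  rw [e]
  have h1 := norm_setIntegral_le_of_norm_le_const (μ := (volume : Measure ℝ)) (s := Icc (-N) N) (f := fun x => |φ.toFun x|)
    (C := Real.sqrt (2 * N)) (by simp) (fun x _ => by simpa using φ.abs_le hN h x)
  refine (le_abs_self _).trans (h1.trans (le_of_eq ?_))
  simp [Measure.real, Real.volume_Icc]
  rw [ENNReal.toReal_ofReal (by linarith)]; ring

lemma STest.dl1 (hN : 0 < N) (h : (∫ x, deriv φ.toFun x ^ 2) = 1) :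
    ∫ x, |deriv φ.toFun x| ≤ N + 1 / 2 := by
  have e : ∫ x, |deriv φ.toFun x| = ∫ x in Icc (-N) N, |deriv φ.toFun x| :=
    (setIntegral_eq_integral_of_forall_compl_eq_zero fun x hx => by
      have : x ∉ tsupport φ.toFun := fun hh => hx (by
        have := closure_mono φ.supp hh
        exact closure_minimal Ioo_subset_Icc_self isClosed_Icc this)
      have h2 : deriv φ.toFun x = 0 := by
        by_contra hne
        exact this (support_deriv_subset hne)
      rw [h2, abs_zero]).symm
  rw [e]
  have i1 : IntegrableOn (fun _ : ℝ => (1/2 : ℝ)) (Icc (-N) N) := by simp [integrableOn_const_iff]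
  have i2 : IntegrableOn (fun x : ℝ => 1/2 * deriv φ.toFun x ^ 2) (Icc (-N) N) := (φ.dsq.const_mul _).integrableOn
  calc _ ≤ ∫ x in Icc (-N) N, (1/2 + 1/2 * deriv φ.toFun x ^ 2) := by
        refine setIntegral_mono (φ.dcont.integrable_of_hasCompactSupport φ.dcpt).abs.integrableOn (i1.add i2) fun x => ?_
        simp only [Pi.add_apply]
        nlinarith [sq_nonneg (|deriv φ.toFun x| - 1), sq_abs (deriv φ.toFun x)]
    _ = N + 1/2 * ∫ x in Icc (-N) N, deriv φ.toFun x ^ 2 := by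
        rw [integral_add i1 i2, integral_const_mul]
        simp [Measure.real, Real.volume_Icc]
        rw [ENNReal.toReal_ofReal (by linarith)]; ring
    _ ≤ _ := by
        have := setIntegral_le_integral (s := Icc (-N) N) φ.dsq (Eventually.of_forall fun z => sq_nonneg _)
        rw [h] at this; linarith

end STest

lemma STest.int_mul {N : ℝ} (φ : STest N) {w : ℝ → ℝ} (hw : Measurable w) {C : ℝ} (hC : ∀ x, |w x| ≤ C) :
    Integrable fun x => w x * φ.toFun x :=
  φ.integrable.bdd_mul (c := C) hw.aestronglyMeasurable (Eventually.of_forall hC)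

lemma STest.pair_le {N : ℝ} (φ : STest N) (hN : 0 < N) (h : (∫ x, deriv φ.toFun x ^ 2) = 1) {w : ℝ → ℝ}
    (hw : Measurable w) {C : ℝ} (hC : ∀ x, |w x| ≤ C) :
    |∫ x, w x * φ.toFun x| ≤ C * (2 * N * Real.sqrt (2 * N)) := by
  have hC0 : 0 ≤ C := (abs_nonneg _).trans (hC 0)
  calc _ ≤ ∫ x, |w x * φ.toFun x| := abs_integral_le_integral_abs
    _ ≤ ∫ x, C * |φ.toFun x| := integral_mono (φ.int_mul hw hC).abs (φ.integrable.abs.const_mul C) fun x => by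
        simp only; rw [abs_mul]; exact mul_le_mul_of_nonneg_right (hC x) (abs_nonneg _)
    _ ≤ _ := by rw [integral_const_mul]; exact mul_le_mul_of_nonneg_left (φ.l1 hN h) hC0

lemma negNorm_le {N ε : ℝ} (hε : 0 ≤ ε) {w : ℝ → ℝ} (h : nb N ε w) : negNorm N w ≤ ε := by
  refine Real.sSup_le ?_ hε
  rintro r ⟨φ, h1, rfl⟩; exact h φ h1

lemma nb_of_negNorm {N ε : ℝ} (hN : 0 < N) {w : ℝ → ℝ} (hw : Measurable w) {C : ℝ} (hC : ∀ x, |w x| ≤ C)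
    (h : negNorm N w ≤ ε) : nb N ε w := by
  intro φ h1
  have hb : BddAbove {r : ℝ | ∃ φ : STest N, (∫ x, deriv φ.toFun x ^ 2) = 1 ∧ r = ∫ x, w x * φ.toFun x} := by
    refine ⟨C * (2 * N * Real.sqrt (2 * N)), ?_⟩
    rintro r ⟨φ', h', rfl⟩
    exact (le_abs_self _).trans (φ'.pair_le hN h' hw hC)
  exact le_trans (le_csSup hb ⟨φ, h1, rfl⟩) h

lemma nb_mono {N N' ε : ℝ} (h : N ≤ N') {w : ℝ → ℝ} (hw : nb N' ε w) : nb N ε w := fun φ hφ =>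
  hw ⟨φ.toFun, φ.smooth, φ.cpt, φ.supp.trans (Ioo_subset_Ioo (by linarith) h)⟩ hφ

lemma dU_summable (u v : ℝ → ℝ) : Summable fun n : ℕ => (2 : ℝ)⁻¹ ^ (n + 1) *
    (negNorm ((n : ℝ) + 1) (fun x => u x - v x) /
      (1 + negNorm ((n : ℝ) + 1) (fun x => u x - v x))) := by
  have hs : Summable fun n : ℕ => (2 : ℝ)⁻¹ ^ (n + 1) :=
    (summable_nat_add_iff 1).2 (summable_geometric_of_lt_one (by norm_num) (by norm_num))
  refine Summable.of_nonneg_of_le (fun n => ?_) (fun n => ?_) hs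
  · have := negNorm_nonneg ((n:ℝ)+1) (fun x => u x - v x)
    positivity
  · have := negNorm_nonneg ((n:ℝ)+1) (fun x => u x - v x)
    refine mul_le_of_le_one_right (by positivity) ?_
    rw [div_le_one (by positivity)]; linarith

/-- Smallness of one seminorm `‖·‖_{-1,N}` with `N` large makes `d_U` small, since these seminorms increase with `N`. -/
lemma dU_le {u v : ℝ → ℝ} {ε : ℝ} (hε : 0 ≤ ε) (n : ℕ) (h : nb ((n:ℝ) + 1) ε (fun x => u x - v x)) :
    dU u v ≤ ε + (2:ℝ)⁻¹ ^ (n + 1) := by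
  have hs := dU_summable u v
  have hg : HasSum (fun n : ℕ => (2 : ℝ)⁻¹ ^ n) 2 := by
    have := hasSum_geometric_of_lt_one (r := (2:ℝ)⁻¹) (by norm_num) (by norm_num)
    norm_num at this ⊢; exact this
  have hg1 : HasSum (fun k : ℕ => (2 : ℝ)⁻¹ ^ (k + 1)) 1 := by
    have := hg.mul_right (2:ℝ)⁻¹
    simpa [pow_succ] using this
  have hg2 : HasSum (fun k : ℕ => (2 : ℝ)⁻¹ ^ (k + (n + 1) + 1)) ((2:ℝ)⁻¹ ^ (n + 1)) := by
    have := hg1.mul_right ((2:ℝ)⁻¹ ^ (n + 1))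
    rw [one_mul] at this
    refine this.congr_fun ?_ |> id
    intro k; ring
  unfold dU
  rw [← hs.sum_add_tsum_nat_add (n + 1)]
  refine add_le_add ?_ ?_
  · calc _ ≤ ∑ k ∈ Finset.range (n + 1), (2 : ℝ)⁻¹ ^ (k + 1) * ε := by
          refine Finset.sum_le_sum fun k hk => mul_le_mul_of_nonneg_left ?_ (by positivity)
          have h0 := negNorm_nonneg ((k:ℝ)+1) (fun x => u x - v x)
          have h1 : negNorm ((k:ℝ)+1) (fun x => u x - v x) ≤ ε := negNorm_le hε (nb_mono (by
            have : (k:ℝ) ≤ n := by exact_mod_cast Nat.lt_succ_iff.1 (Finset.mem_range.1 hk)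
            linarith) h)
          exact (div_le_self h0 (by linarith)).trans h1
      _ = (∑ k ∈ Finset.range (n + 1), (2 : ℝ)⁻¹ ^ (k + 1)) * ε := by rw [Finset.sum_mul]
      _ ≤ 1 * ε := by
          refine mul_le_mul_of_nonneg_right ?_ hε
          exact sum_le_hasSum _ (fun k _ => by positivity) hg1
      _ = ε := one_mul _
  · rw [← hg2.tsum_eq]
    refine Summable.tsum_le_tsum (fun k => ?_) ((summable_nat_add_iff (n+1)).2 hs) hg2.summable
    have := negNorm_nonneg (((k + (n+1) : ℕ):ℝ)+1) (fun x => u x - v x)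
    refine mul_le_of_le_one_right (by positivity) ?_
    rw [div_le_one (by positivity)]; linarith

lemma nb_of_dU {u v : ℝ → ℝ} (hu : Measurable u) (hv : Measurable v) (hu1 : ∀ x, u x ∈ Icc (0:ℝ) 1)
    (hv1 : ∀ x, v x ∈ Icc (0:ℝ) 1) (n : ℕ) {ε : ℝ} (hε : 0 < ε)
    (h : dU u v < (2:ℝ)⁻¹ ^ (n + 1) * (ε / (1 + ε))) : nb ((n:ℝ) + 1) ε (fun x => u x - v x) := by
  refine nb_of_negNorm (by positivity) (hu.sub hv) (C := 1) (fun x => ?_) ?_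
  · rw [abs_le]; constructor <;> linarith [(hu1 x).1, (hu1 x).2, (hv1 x).1, (hv1 x).2]
  · have h1 := (dU_summable u v).le_tsum n (fun j _ => by
      have := negNorm_nonneg ((j:ℝ)+1) (fun x => u x - v x)
      positivity)
    have h2 := lt_of_mul_lt_mul_left (h1.trans_lt h) (by positivity)
    have h0 := negNorm_nonneg ((n:ℝ)+1) (fun x => u x - v x)
    rw [div_lt_div_iff₀ (by positivity) (by positivity)] at h2
    nlinarith

/-- Continuous curves `[0,T] → U` are uniformly continuous in each negative seminorm. -/
lemma cU_unif {T : ℝ} (u : cU T) (n : ℕ) {ε : ℝ} (hε : 0 < ε) :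
    ∃ κ > 0, ∀ t ∈ Icc (0:ℝ) T, ∀ t' ∈ Icc (0:ℝ) T, |t' - t| < κ →
      nb ((n:ℝ) + 1) ε (fun x => u.toFun (t', x) - u.toFun (t, x)) := by
  have hm : ∀ t, Measurable fun x => u.toFun (t, x) := fun t => u.meas.comp measurable_prodMk_left
  have h0 : ∀ t₀ : Icc (0:ℝ) T, ∃ ζ > 0, ∀ t ∈ Icc (0:ℝ) T, |t - t₀| < ζ →
      nb ((n:ℝ) + 1) (ε/2) (fun x => u.toFun (t, x) - u.toFun (t₀, x)) := by
    intro t₀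
    obtain ⟨ζ, hζ, h⟩ := u.cont t₀ t₀.2 ((2:ℝ)⁻¹ ^ (n + 1) * ((ε/2) / (1 + ε/2))) (by positivity)
    exact ⟨ζ, hζ, fun t ht htt => nb_of_dU (hm _) (hm _) (fun x => u.mem01 _) (fun x => u.mem01 _) n
      (by positivity) (h t ht htt)⟩
  choose ζ hζ hnb using h0
  obtain ⟨κ, hκ, hL⟩ := lebesgue_number_lemma_of_metric (s := Icc (0:ℝ) T) isCompact_Icc
    (c := fun t₀ : Icc (0:ℝ) T => Metric.ball (t₀ : ℝ) (ζ t₀)) (fun i => Metric.isOpen_ball)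
    (fun t ht => mem_iUnion.2 ⟨⟨t, ht⟩, Metric.mem_ball_self (hζ _)⟩)
  refine ⟨κ, hκ, fun t ht t' ht' htt φ hφ => ?_⟩
  obtain ⟨t₀, ht₀⟩ := hL t ht
  have a1 := ht₀ (Metric.mem_ball_self hκ)
  have a2 := ht₀ (show t' ∈ Metric.ball t κ by rw [Metric.mem_ball, Real.dist_eq]; exact htt)
  rw [Metric.mem_ball, Real.dist_eq] at a1 a2
  have b1 := hnb t₀ t ht a1 φ.neg (φ.neg_one hφ)
  have b2 := hnb t₀ t' ht' a2 φ hφ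
  have hb : ∀ t t' x, |u.toFun (t', x) - u.toFun (t, x)| ≤ 1 := fun t t' x => by
    have h1 := u.mem01 (t', x); have h2 := u.mem01 (t, x)
    rw [abs_le]; constructor <;> linarith [h1.1, h1.2, h2.1, h2.2]
  have i1 : Integrable fun x => (u.toFun (t, x) - u.toFun (t₀, x)) * φ.toFun x :=
    φ.int_mul ((hm t).sub (hm t₀)) (hb t₀ t)
  have i2 : Integrable fun x => (u.toFun (t', x) - u.toFun (t₀, x)) * φ.toFun x :=
    φ.int_mul ((hm t').sub (hm t₀)) (hb t₀ t')
  have e : ∫ x, (u.toFun (t', x) - u.toFun (t, x)) * φ.toFun x =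
      (∫ x, (u.toFun (t', x) - u.toFun (t₀, x)) * φ.toFun x) +
      ∫ x, (u.toFun (t, x) - u.toFun (t₀, x)) * φ.neg.toFun x := by
    have e1 : ∫ x, (u.toFun (t, x) - u.toFun (t₀, x)) * φ.neg.toFun x =
        - ∫ x, (u.toFun (t, x) - u.toFun (t₀, x)) * φ.toFun x := by
      rw [← integral_neg]; congr 1; funext x; simp [STest.neg]
    rw [e1, ← sub_eq_add_neg, ← integral_sub i2 i1]
    congr 1; funext x; ring
  rw [e]; linarith

end

/-! ### Mollification in the negative seminorms -/

section

/-- Composing a `[0,1]`-valued function with an affine map close to the identity changes its pairing with the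
normalised test functions by little, uniformly in the test, because the tests are equi-Hölder. -/
lemma STest.affine {N : ℝ} (hN : 0 < N) {ε : ℝ} (hε : 0 < ε) : ∃ κ > 0, κ ≤ 1 / 2 ∧ ∀ (φ : STest N),
    (∫ x, deriv φ.toFun x ^ 2) = 1 → ∀ s a : ℝ, |s - 1| < κ → |a| < 2 * κ → ∀ w : ℝ → ℝ, Measurable w →
    (∀ x, w x ∈ Icc (0:ℝ) 1) → ∫ x, w (s * x + a) * φ.toFun x ≤ (∫ x, w x * φ.toFun x) + ε := by
  set B := 2 * N + 2 with hB
  have hc : Tendsto (fun κ : ℝ => 2 * B * (2 * κ * Real.sqrt (2 * N) + Real.sqrt (2 * κ * (B + 2)))) (𝓝[>] 0) (𝓝 0) := by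
    have : Continuous (fun κ : ℝ => 2 * B * (2 * κ * Real.sqrt (2 * N) + Real.sqrt (2 * κ * (B + 2)))) := by fun_prop
    have h := this.tendsto 0
    simp only [mul_zero, zero_mul, Real.sqrt_zero, add_zero] at h
    exact h.mono_left nhdsWithin_le_nhds
  have hev := (hc.eventually (gt_mem_nhds hε)).and (Ioo_mem_nhdsGT (show (0:ℝ) < 1/2 by norm_num))
  obtain ⟨κ, hκ1, hκ2⟩ := hev.exists
  refine ⟨κ, hκ2.1, hκ2.2.le, fun φ hφ s a hs ha w hw hw1 => ?_⟩
  have hs' := abs_lt.1 hs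
  have hs0 : 1 / 2 < s := by linarith [hκ2.2]
  have hs2 : s < 3 / 2 := by linarith [hκ2.2]
  have hsp : 0 < s := by linarith
  have hsi : s⁻¹ ≤ 2 := by rw [inv_le_comm₀ hsp (by norm_num)]; linarith
  have hsip : 0 < s⁻¹ := inv_pos.2 hsp
  have ha' := abs_lt.1 ha
  -- change of variables
  have e1 : ∫ x, w (s * x + a) * φ.toFun x = ∫ x, w x * (s⁻¹ * φ.toFun (s⁻¹ * (x - a))) := by
    have h1 := integral_add_right_eq_self (μ := (volume : Measure ℝ)) (fun x => w x * (s⁻¹ * φ.toFun (s⁻¹ * (x - a)))) a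
    have h2 := Measure.integral_comp_mul_left (fun x => w (x + a) * (s⁻¹ * φ.toFun (s⁻¹ * (x + a - a)))) s
    rw [← h1]
    rw [abs_of_pos hsip, smul_eq_mul] at h2
    have h3 : ∫ x, w (x + a) * (s⁻¹ * φ.toFun (s⁻¹ * (x + a - a))) =
      s * ∫ x, w (s * x + a) * (s⁻¹ * φ.toFun (s⁻¹ * (s * x + a - a))) := by
      rw [h2]; field_simp
    rw [h3, ← integral_const_mul]
    congr 1; funext x
    have : s⁻¹ * (s * x + a - a) = x := by field_simp; ring
    rw [this]; field_simp
  have iφ : Integrable fun x => φ.toFun (s⁻¹ * (x - a)) := by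
    have := (φ.integrable.comp_mul_left' hsip.ne').comp_sub_right a
    exact this
  have hwb : ∀ x, |w x| ≤ 1 := fun x => by rw [abs_of_nonneg (hw1 x).1]; exact (hw1 x).2
  have i1 : Integrable fun x => w x * (s⁻¹ * φ.toFun (s⁻¹ * (x - a))) :=
    (iφ.const_mul _).bdd_mul (c := 1) hw.aestronglyMeasurable (Eventually.of_forall hwb)
  have i2 : Integrable fun x => w x * φ.toFun x := φ.int_mul hw hwb
  have key : ∀ x ∈ Icc (-B) B, |s⁻¹ * φ.toFun (s⁻¹ * (x - a)) - φ.toFun x| ≤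
      2 * κ * Real.sqrt (2 * N) + Real.sqrt (2 * κ * (B + 2)) := by
    intro x hx
    have q1 : |s⁻¹ - 1| ≤ 2 * κ := by
      have : s⁻¹ - 1 = s⁻¹ * (1 - s) := by field_simp
      rw [this, abs_mul, abs_of_pos hsip, abs_sub_comm]
      exact mul_le_mul hsi hs.le (abs_nonneg _) (by norm_num)
    have q2 : |s⁻¹ * (x - a) - x| ≤ 2 * κ * (B + 2) := by
      have : s⁻¹ * (x - a) - x = s⁻¹ * ((1 - s) * x - a) := by field_simp; ring
      rw [this, abs_mul, abs_of_pos hsip]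
      have q3 : |(1 - s) * x - a| ≤ κ * B + 2 * κ := by
        refine (abs_sub _ _).trans (add_le_add ?_ ha.le)
        rw [abs_mul, abs_sub_comm]
        exact mul_le_mul hs.le (_root_.abs_le.2 hx) (abs_nonneg _) hκ2.1.le
      calc _ ≤ 2 * (κ * B + 2 * κ) := mul_le_mul hsi q3 (abs_nonneg _) (by norm_num)
        _ = _ := by ring
    have : s⁻¹ * φ.toFun (s⁻¹ * (x - a)) - φ.toFun x = (s⁻¹ - 1) * φ.toFun (s⁻¹ * (x - a)) +
      (φ.toFun (s⁻¹ * (x - a)) - φ.toFun x) := by ring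
    rw [this]
    refine (abs_add_le _ _).trans (add_le_add ?_ ((φ.holder hφ _ _).trans (Real.sqrt_le_sqrt q2)))
    rw [abs_mul]
    exact mul_le_mul q1 (φ.abs_le hN hφ _) (abs_nonneg _) (by linarith [hκ2.1])
  have key0 : ∀ x ∉ Icc (-B) B, s⁻¹ * φ.toFun (s⁻¹ * (x - a)) - φ.toFun x = 0 := by
    intro x hx
    rw [φ.zero (x := x), φ.zero, mul_zero, sub_zero]
    · rintro ⟨g1, g2⟩
      apply hx
      have k1 : s * (s⁻¹ * (x - a)) = x - a := by field_simp
      have k2 := mul_lt_mul_of_pos_left g2 hsp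
      have k3 := mul_lt_mul_of_pos_left g1 hsp
      rw [k1] at k2 k3
      constructor <;> nlinarith [hκ2.2]
    · rintro ⟨g1, g2⟩
      exact hx ⟨by linarith, by linarith⟩
  rw [e1, ← sub_le_iff_le_add', ← integral_sub i1 i2]
  have e2 : ∫ x, (w x * (s⁻¹ * φ.toFun (s⁻¹ * (x - a))) - w x * φ.toFun x) =
      ∫ x in Icc (-B) B, (w x * (s⁻¹ * φ.toFun (s⁻¹ * (x - a))) - w x * φ.toFun x) :=
    (setIntegral_eq_integral_of_forall_compl_eq_zero fun x hx => by
      rw [← mul_sub, key0 x hx, mul_zero]).symm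
  rw [e2]
  have h1 := norm_setIntegral_le_of_norm_le_const (μ := (volume : Measure ℝ)) (s := Icc (-B) B)
    (f := fun x => w x * (s⁻¹ * φ.toFun (s⁻¹ * (x - a))) - w x * φ.toFun x)
    (C := 2 * κ * Real.sqrt (2 * N) + Real.sqrt (2 * κ * (B + 2))) (by simp) (fun x hx => by
      rw [← mul_sub, Real.norm_eq_abs, abs_mul]
      calc _ ≤ 1 * _ := mul_le_mul_of_nonneg_right (hwb x) (abs_nonneg _)
        _ ≤ _ := by rw [one_mul]; exact key x hx)
  refine (le_abs_self _).trans (h1.trans (le_trans (le_of_eq ?_) hκ1.le))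
  simp only [Measure.real, Real.volume_Icc]
  rw [ENNReal.toReal_ofReal (by linarith)]; ring

/-- Mollification (with a small affine reparametrisation) is close to the identity in each negative seminorm,
uniformly in time, on continuous curves of `U`. -/
lemma moll_neg {T : ℝ} (u : cU T) (n : ℕ) {ε : ℝ} (hε : 0 < ε) :
    ∃ κ > 0, ∀ (ρ : ℝ × ℝ → ℝ) (r s : ℝ) (v : ℝ × ℝ), IsMoll ρ r → r < κ → |s - 1| < κ → ‖v‖ < κ →
      (∀ t ∈ Icc (0:ℝ) T, ∀ y : ℝ × ℝ, ‖y‖ < r → s * t + v.1 - y.1 ∈ Icc (0:ℝ) T) →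
      ∀ t ∈ Icc (0:ℝ) T, nb ((n:ℝ) + 1) ε (fun x => moll ρ s v u.toFun (t, x) - u.toFun (t, x)) := by
  obtain ⟨κ1, hκ1, hk1, H1⟩ := STest.affine (N := (n:ℝ) + 1) (by positivity) (half_pos hε)
  obtain ⟨κ2, hκ2, H2⟩ := cU_unif u n (half_pos hε)
  refine ⟨min κ1 (κ2 / (|T| + 2)), lt_min hκ1 (by positivity), ?_⟩
  intro ρ r s v hρ hr hs hv hin t ht φ hφ
  have hm : ∀ t, Measurable fun x => u.toFun (t, x) := fun t => u.meas.comp measurable_prodMk_left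
  have hwb : ∀ z, |u.toFun z| ≤ 1 := fun z => by rw [abs_of_nonneg (u.mem01 z).1]; exact (u.mem01 z).2
  have hT : 0 ≤ T := ht.1.trans ht.2
  -- the estimate at a fixed translate
  have hy : ∀ y : ℝ × ℝ, ‖y‖ < r →
      ∫ x, (u.toFun (s • (t, x) + v - y) - u.toFun (t, x)) * φ.toFun x ≤ ε := by
    intro y hyr
    set τ := s * t + v.1 - y.1 with hτ
    have hτT : τ ∈ Icc (0:ℝ) T := hin t ht y hyr
    have n1 : |v.1| ≤ ‖v‖ := norm_fst_le v
    have n2 : |v.2| ≤ ‖v‖ := norm_snd_le v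
    have n3 : |y.1| ≤ ‖y‖ := norm_fst_le y
    have n4 : |y.2| ≤ ‖y‖ := norm_snd_le y
    have a1 := lt_min_iff.1 hr
    have a2 := lt_min_iff.1 hs
    have a3 := lt_min_iff.1 hv
    have hd : |τ - t| < κ2 := by
      have : τ - t = (s - 1) * t + v.1 - y.1 := by rw [hτ]; ring
      rw [this]
      have b1 : |(s - 1) * t| ≤ κ2 / (|T| + 2) * |T| := by
        rw [abs_mul]
        refine mul_le_mul a2.2.le ?_ (abs_nonneg _) (by positivity)
        rw [abs_of_nonneg ht.1, abs_of_nonneg hT]; exact ht.2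
      have b2 : κ2 / (|T| + 2) * |T| + κ2 / (|T| + 2) + κ2 / (|T| + 2) = κ2 := by
        field_simp; ring
      have b3 := abs_add_le ((s - 1) * t) v.1
      have b4 := abs_sub ((s - 1) * t + v.1) y.1
      linarith
    have c1 := H2 t ht τ hτT hd φ hφ
    have c2 := H1 φ hφ s (v.2 - y.2) a2.1 (by
      have := abs_sub v.2 y.2
      linarith) (fun x => u.toFun (τ, x)) (hm τ) (fun x => u.mem01 _)
    have e : ∀ x, s • (t, x) + v - y = (τ, s * x + (v.2 - y.2)) := fun x => by
      ext <;> simp [hτ]; ring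
    have j1 : Integrable fun x => u.toFun (τ, s * x + (v.2 - y.2)) * φ.toFun x :=
      φ.int_mul ((hm τ).comp (by fun_prop)) (fun x => hwb _)
    have j2 : Integrable fun x => u.toFun (τ, x) * φ.toFun x := φ.int_mul (hm τ) (fun x => hwb _)
    have j3 : Integrable fun x => u.toFun (t, x) * φ.toFun x := φ.int_mul (hm t) (fun x => hwb _)
    simp only [e, sub_mul] at c1 ⊢
    rw [integral_sub j1 j3]
    rw [integral_sub j2 j3] at c1
    linarith
  -- Fubini
  have hiF : Integrable (fun q : (ℝ × ℝ) × ℝ => (u.toFun (s • (t, q.2) + v - q.1) - u.toFun (t, q.2)) *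
      (ρ q.1 * φ.toFun q.2)) (volume.prod volume) := by
    refine (Integrable.mul_prod hρ.integrable φ.integrable).bdd_mul (c := 2) ?_ (Eventually.of_forall fun q => ?_)
    · refine Measurable.aestronglyMeasurable (Measurable.sub (u.meas.comp (by fun_prop)) (u.meas.comp (by fun_prop)))
    · rw [Real.norm_eq_abs]
      refine (abs_sub _ _).trans ?_
      linarith [hwb (s • (t, q.2) + v - q.1), hwb (t, q.2)]
  have e : ∫ x, (moll ρ s v u.toFun (t, x) - u.toFun (t, x)) * φ.toFun x =
      ∫ y, ρ y * ∫ x, (u.toFun (s • (t, x) + v - y) - u.toFun (t, x)) * φ.toFun x := by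
    have h1 : ∀ y, ρ y * ∫ x, (u.toFun (s • (t, x) + v - y) - u.toFun (t, x)) * φ.toFun x =
        ∫ x, (u.toFun (s • (t, x) + v - y) - u.toFun (t, x)) * (ρ y * φ.toFun x) := fun y => by
      rw [← integral_const_mul]; congr 1; funext x; ring
    simp_rw [h1]
    rw [integral_integral_swap (f := fun (y : ℝ × ℝ) (x : ℝ) =>
      (u.toFun (s • (t, x) + v - y) - u.toFun (t, x)) * (ρ y * φ.toFun x)) hiF]
    congr 1; funext x
    have k1 : Integrable fun y => ρ y * u.toFun (s • (t, x) + v - y) :=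
      hρ.integrable.mul_bdd (c := 1) (u.meas.comp (by fun_prop)).aestronglyMeasurable (Eventually.of_forall fun y => hwb _)
    have k2 : Integrable fun y => ρ y * u.toFun (t, x) := hρ.integrable.mul_const _
    have : ∀ y, (u.toFun (s • (t, x) + v - y) - u.toFun (t, x)) * (ρ y * φ.toFun x) =
      (ρ y * u.toFun (s • (t, x) + v - y) - ρ y * u.toFun (t, x)) * φ.toFun x := fun y => by ring
    simp_rw [this]
    rw [integral_mul_const, integral_sub k1 k2, integral_mul_const, hρ.int1, one_mul]
    rfl
  rw [e]
  have hi2 : Integrable fun y => ρ y * ∫ x, (u.toFun (s • (t, x) + v - y) - u.toFun (t, x)) * φ.toFun x := by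
    have := hiF.integral_prod_left
    refine this.congr (Eventually.of_forall fun y => ?_)
    simp only
    rw [← integral_const_mul]; congr 1; funext x; ring
  calc _ ≤ ∫ y, ρ y * ε := by
        refine integral_mono hi2 (hρ.integrable.mul_const _) fun y => ?_
        by_cases h : ‖y‖ < r
        · exact mul_le_mul_of_nonneg_left (hy y h) (hρ.nonneg y)
        · simp only [hρ.supp y (not_lt.1 h), zero_mul]; exact le_refl _
    _ = ε := by rw [integral_mul_const, hρ.int1, one_mul]

end

section

/-! ### Cutting off a conserved pair -/

/-- A stream function of a pair satisfying `m_t + E_x = 0`. -/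
lemma exists_stream {T κ : ℝ} (hT : 0 < T) (hκ : 0 < κ) {m E : ℝ × ℝ → ℝ} (hm : ContDiff ℝ (⊤ : ℕ∞) m)
    (hE : ContDiff ℝ (⊤ : ℕ∞) E)
    (hc : ∀ z : ℝ × ℝ, -κ < z.1 → z.1 < T + κ → fderiv ℝ m z (1, 0) + fderiv ℝ E z (0, 1) = 0) :
    ∃ β : ℝ × ℝ → ℝ, β 0 = 0 ∧ ∀ z ∈ Ioo (-κ) (T + κ) ×ˢ (univ : Set ℝ),
      HasFDerivAt β (m z • ContinuousLinearMap.snd ℝ ℝ ℝ - E z • ContinuousLinearMap.fst ℝ ℝ ℝ) z := by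
  have hU : IsOpen (Ioo (-κ) (T + κ) ×ˢ (univ : Set ℝ)) := isOpen_Ioo.prod isOpen_univ
  have hd1 : ∀ z, HasFDerivAt m (fderiv ℝ m z) z := fun z => (hm.differentiable (by simp) z).hasFDerivAt
  have hd2 : ∀ z, HasFDerivAt E (fderiv ℝ E z) z := fun z => (hE.differentiable (by simp) z).hasFDerivAt
  have hω : ∀ z, HasFDerivAt (fun z => m z • ContinuousLinearMap.snd ℝ ℝ ℝ - E z • ContinuousLinearMap.fst ℝ ℝ ℝ)
      ((fderiv ℝ m z).smulRight (ContinuousLinearMap.snd ℝ ℝ ℝ) -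
        (fderiv ℝ E z).smulRight (ContinuousLinearMap.fst ℝ ℝ ℝ)) z := fun z => by
    have a1 : HasFDerivAt (fun z => m z • ContinuousLinearMap.snd ℝ ℝ ℝ) _ z := (hd1 z).smul_const _
    have a2 : HasFDerivAt (fun z => E z • ContinuousLinearMap.fst ℝ ℝ ℝ) _ z := (hd2 z).smul_const _
    exact a1.sub a2
  obtain ⟨β, hβ⟩ := Convex.exists_forall_hasFDerivAt_of_fderiv_symmetric
    ((convex_Ioo (-κ) (T + κ)).prod convex_univ) hU
    (ω := fun z => m z • ContinuousLinearMap.snd ℝ ℝ ℝ - E z • ContinuousLinearMap.fst ℝ ℝ ℝ)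
    (fun z _ => (hω z).differentiableAt.differentiableWithinAt) (by
      intro z hz x y
      have hc' := hc z hz.1.1 hz.1.2
      have dec : ∀ (g : ℝ × ℝ → ℝ) (x : ℝ × ℝ), fderiv ℝ g z x = x.1 * fderiv ℝ g z (1, 0) + x.2 * fderiv ℝ g z (0, 1) := by
        intro g x
        have : x = x.1 • ((1:ℝ), (0:ℝ)) + x.2 • ((0:ℝ), (1:ℝ)) := by ext <;> simp
        conv_lhs => rw [this, map_add, map_smul, map_smul, smul_eq_mul, smul_eq_mul]
      rw [(hω z).fderiv]
      simp only [_root_.sub_apply, ContinuousLinearMap.smulRight_apply, _root_.smul_apply,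
        ContinuousLinearMap.coe_snd', ContinuousLinearMap.coe_fst', smul_eq_mul]
      rw [dec m x, dec m y, dec E x, dec E y]
      linear_combination (x.1 * y.2 - x.2 * y.1) * hc')
  refine ⟨fun z => β z - β 0, by simp, fun z hz => (hβ z hz).sub_const _⟩

/-- Cut-off of a conserved pair with `m` bounded below. The weight `θ` is a function of the stream function `β`,
so `(1 - θ) ∇β` is again the gradient of a function `b` (a primitive composed with `β`); the linear growth of `β` in
`x` makes `θ` vanish for `|x| ≤ R` and equal `1` for large `|x|`. -/
lemma exists_cut {T κ : ℝ} (hT : 0 < T) (hκ : 0 < κ) {m E : ℝ × ℝ → ℝ} (hm : ContDiff ℝ (⊤ : ℕ∞) m)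
    (hE : ContDiff ℝ (⊤ : ℕ∞) E)
    (hc : ∀ z : ℝ × ℝ, -κ < z.1 → z.1 < T + κ → fderiv ℝ m z (1, 0) + fderiv ℝ E z (0, 1) = 0)
    {q C : ℝ} (hq : 0 < q) (hmq : ∀ z, q ≤ m z) (hmC : ∀ z, |m z| ≤ C) (hEC : ∀ z, |E z| ≤ C) {R : ℝ} (hR : 0 ≤ R) :
    ∃ θ b : ℝ × ℝ → ℝ, ContDiff ℝ 1 θ ∧ ContDiff ℝ 1 b ∧ (∀ z, θ z ∈ Icc (0:ℝ) 1) ∧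
      (∀ z : ℝ × ℝ, z.1 ∈ Icc 0 T → |z.2| ≤ R → θ z = 0) ∧
      (∃ L > 0, ∀ z : ℝ × ℝ, z.1 ∈ Icc 0 T → L ≤ |z.2| → θ z = 1) ∧
      ∀ z : ℝ × ℝ, z.1 ∈ Icc 0 T → pxF b z = (1 - θ z) * m z ∧ ptF b z = - ((1 - θ z) * E z) := by
  obtain ⟨β, hβ0, hβ⟩ := exists_stream hT hκ hm hE hc
  set U := Ioo (-κ) (T + κ) ×ˢ (univ : Set ℝ) with hUdef
  have hU : IsOpen U := isOpen_Ioo.prod isOpen_univ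
  have hcont : Continuous (fun z => m z • ContinuousLinearMap.snd ℝ ℝ ℝ - E z • ContinuousLinearMap.fst ℝ ℝ ℝ) := by
    have h1 := hm.continuous; have h2 := hE.continuous
    fun_prop
  have hC0 : 0 ≤ C := (abs_nonneg _).trans (hmC 0)
  have hβ1 : ContDiffOn ℝ 1 β U := by
    have : (1 : WithTop ℕ∞) = 0 + 1 := by simp
    rw [this, contDiffOn_succ_iff_fderiv_of_isOpen hU]
    refine ⟨fun z hz => (hβ z hz).differentiableAt.differentiableWithinAt, by simp, ?_⟩
    refine contDiffOn_zero.2 (hcont.continuousOn.congr fun z hz => (hβ z hz).fderiv)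
  have hIU : ∀ z : ℝ × ℝ, z.1 ∈ Icc 0 T → z ∈ U := fun z hz =>
    ⟨⟨by linarith [hz.1], by linarith [hz.2]⟩, mem_univ _⟩
  -- size of the stream function
  have hup : ∀ z ∈ U, |β z| ≤ 2 * C * ‖z‖ := by
    intro z hz
    have h0 : (0 : ℝ × ℝ) ∈ U := hIU 0 ⟨le_refl _, hT.le⟩
    have := Convex.norm_image_sub_le_of_norm_hasFDerivWithin_le (f := β) (s := U) (C := 2 * C)
      (fun z hz => (hβ z hz).hasFDerivWithinAt) (fun z _ => by
        refine (norm_sub_le _ _).trans ?_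
        rw [norm_smul, norm_smul]
        have a1 := mul_le_mul (hmC z) (ContinuousLinearMap.norm_snd_le ℝ ℝ ℝ) (norm_nonneg _) hC0
        have a2 := mul_le_mul (hEC z) (ContinuousLinearMap.norm_fst_le ℝ ℝ ℝ) (norm_nonneg _) hC0
        simp only [Real.norm_eq_abs]
        linarith) ((convex_Ioo (-κ) (T + κ)).prod convex_univ) h0 hz
    rw [hβ0, sub_zero, sub_zero] at this
    exact this
  have hlow : ∀ z : ℝ × ℝ, z.1 ∈ Icc 0 T → q * |z.2| - 2 * C * T ≤ |β z| := by
    rintro ⟨t, x⟩ ht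
    simp only at ht ⊢
    have hd : ∀ y : ℝ, HasDerivAt (fun y => β (t, y) - q * y) (m (t, y) - q) y := by
      intro y
      have h1 : HasDerivAt (fun y : ℝ => (t, y)) (0, 1) y := (hasDerivAt_const y t).prodMk (hasDerivAt_id y)
      have h2 := (hβ (t, y) (hIU _ ht)).comp_hasDerivAt y h1
      have h3 := h2.sub ((hasDerivAt_id y).const_mul q)
      have e : m (t, y) - q = (m (t, y) • ContinuousLinearMap.snd ℝ ℝ ℝ - E (t, y) • ContinuousLinearMap.fst ℝ ℝ ℝ) (0, 1) - q * 1 := by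
        simp
      rw [e]
      exact h3
    have hmon : Monotone (fun y => β (t, y) - q * y) := monotone_of_deriv_nonneg
      (fun y => (hd y).differentiableAt) (fun y => by rw [(hd y).deriv]; linarith [hmq (t, y)])
    have h0 := hup (t, 0) (hIU _ ht)
    have hn : ‖((t, 0) : ℝ × ℝ)‖ = t := by
      rw [Prod.norm_def]; simp [abs_of_nonneg ht.1, ht.1]
    rw [hn] at h0
    have h1 : 2 * C * t ≤ 2 * C * T := mul_le_mul_of_nonneg_left ht.2 (by linarith)
    have h2 := abs_le.1 (h0.trans h1)
    rcases le_total 0 x with hx | hx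
    · have := hmon hx
      simp only [mul_zero, sub_zero] at this
      rw [abs_of_nonneg hx]
      refine le_trans ?_ (le_abs_self _)
      linarith
    · have := hmon hx
      simp only [mul_zero, sub_zero] at this
      rw [abs_of_nonpos hx]
      refine le_trans ?_ (neg_le_abs _)
      linarith
  -- a global `C¹` function agreeing with the stream function near the strip
  let χ : ContDiffBump (T / 2) := ⟨T / 2 + κ / 4, T / 2 + κ / 2, by linarith, by linarith⟩
  have hg1 : ContDiff ℝ 1 (fun z : ℝ × ℝ => χ z.1 * β z) := by
    rw [contDiff_iff_contDiffAt]
    intro z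
    by_cases hz : z ∈ U
    · exact (χ.contDiff.comp contDiff_fst).contDiffAt.mul (hβ1.contDiffAt (hU.mem_nhds hz))
    · have hV : {z : ℝ × ℝ | T / 2 + κ / 2 < |z.1 - T / 2|} ∈ 𝓝 z := by
        refine IsOpen.mem_nhds ?_ ?_
        · exact isOpen_lt continuous_const (by fun_prop)
        · by_contra hh
          apply hz
          have hh' : |z.1 - T / 2| ≤ T / 2 + κ / 2 := not_lt.1 hh
          have := abs_le.1 hh'
          exact ⟨⟨by linarith, by linarith⟩, mem_univ _⟩
      have : (fun z : ℝ × ℝ => χ z.1 * β z) =ᶠ[𝓝 z] fun _ => 0 := by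
        filter_upwards [hV] with y hy
        rw [χ.zero_of_le_dist (by rw [Real.dist_eq]; exact le_of_lt hy), zero_mul]
      exact contDiffAt_const.congr_of_eventuallyEq this
  have hχ1 : ∀ z : ℝ × ℝ, z.1 ∈ Icc 0 T → (fun z : ℝ × ℝ => χ z.1 * β z) =ᶠ[𝓝 z] β := by
    intro z hz
    have hV : {z : ℝ × ℝ | |z.1 - T / 2| < T / 2 + κ / 4} ∈ 𝓝 z := by
      refine IsOpen.mem_nhds ?_ ?_
      · exact isOpen_lt (by fun_prop) continuous_const
      · show |z.1 - T / 2| < T / 2 + κ / 4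
        rw [abs_lt]; constructor <;> linarith [hz.1, hz.2]
    filter_upwards [hV] with y hy
    rw [χ.one_of_mem_closedBall (by rw [Metric.mem_closedBall, Real.dist_eq]; exact le_of_lt hy), one_mul]
  set R' := 2 * C * (T + R) with hR'
  have hR'0 : 0 ≤ R' := by positivity
  let ω : ContDiffBump (0 : ℝ) := ⟨R' + 1, R' + 2, by linarith, by linarith⟩
  have hωc : Continuous ω := ω.continuous
  have hΓ : ∀ y, HasDerivAt (fun y => ∫ t in (0:ℝ)..y, ω t) (ω y) y := fun y =>
    (hωc.integral_hasStrictDerivAt 0 y).hasDerivAt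
  have hΓ1 : ContDiff ℝ 1 (fun y => ∫ t in (0:ℝ)..y, ω t) := by
    rw [contDiff_one_iff_deriv]
    refine ⟨fun y => (hΓ y).differentiableAt, ?_⟩
    have : deriv (fun y => ∫ t in (0:ℝ)..y, ω t) = ω := funext fun y => (hΓ y).deriv
    rw [this]; exact hωc
  refine ⟨fun z => 1 - ω (χ z.1 * β z), fun z => ∫ t in (0:ℝ)..(χ z.1 * β z), ω t,
    contDiff_const.sub (ω.contDiff.comp hg1), hΓ1.comp hg1,
    fun z => ⟨by linarith [ω.le_one (x := χ z.1 * β z)], by linarith [ω.nonneg (x := χ z.1 * β z)]⟩, ?_, ?_, ?_⟩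
  · intro z hz hzR
    have e : χ z.1 * β z = β z := (hχ1 z hz).eq_of_nhds
    simp only [e]
    rw [ω.one_of_mem_closedBall, sub_self]
    rw [Metric.mem_closedBall, Real.dist_eq, sub_zero]
    have h1 := hup z (hIU z hz)
    have h2 : ‖z‖ ≤ T + R := by
      rw [Prod.norm_def]
      refine max_le ?_ ?_
      · rw [Real.norm_eq_abs, abs_of_nonneg hz.1]; linarith [hz.2]
      · rw [Real.norm_eq_abs]; linarith
    have h3 := mul_le_mul_of_nonneg_left h2 (show 0 ≤ 2 * C by linarith)
    show |β z| ≤ R' + 1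
    linarith
  · refine ⟨(R' + 2 + 2 * C * T) / q, by positivity, fun z hz hzL => ?_⟩
    have e : χ z.1 * β z = β z := (hχ1 z hz).eq_of_nhds
    simp only [e]
    rw [ω.zero_of_le_dist, sub_zero]
    rw [Real.dist_eq, sub_zero]
    have h1 := hlow z hz
    rw [div_le_iff₀ hq] at hzL
    show R' + 2 ≤ |β z|
    linarith
  · intro z hz
    have e : χ z.1 * β z = β z := (hχ1 z hz).eq_of_nhds
    have h1 : HasFDerivAt (fun z : ℝ × ℝ => χ z.1 * β z)
      (m z • ContinuousLinearMap.snd ℝ ℝ ℝ - E z • ContinuousLinearMap.fst ℝ ℝ ℝ) z :=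
      (hβ z (hIU z hz)).congr_of_eventuallyEq (hχ1 z hz)
    have h2 := (hΓ (χ z.1 * β z)).comp_hasFDerivAt z h1
    have h3 : fderiv ℝ (fun z : ℝ × ℝ => ∫ t in (0:ℝ)..(χ z.1 * β z), ω t) z = _ := h2.fderiv
    constructor
    · simp only [pxF]; rw [h3]; simp
    · simp only [ptF]; rw [h3]; simp

end

section

/-! ### Smoothing a Young measure of finite cost -/

/-- A `C¹` family `z ↦ L · z` of probability measures on `[0,1]`, presented as positive normalised
linear functionals on continuous functions. -/
structure PF (L : (ℝ → ℝ) → ℝ × ℝ → ℝ) : Prop where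
  sum : ∀ {n : ℕ} (F : Fin n → ℝ → ℝ), (∀ i, Continuous (F i)) → ∀ (c : Fin n → ℝ) (z : ℝ × ℝ),
    L (fun l => ∑ i, c i * F i l) z = ∑ i, c i * L (F i) z
  mono : ∀ F G : ℝ → ℝ, Continuous F → Continuous G → (∀ l ∈ Icc (0:ℝ) 1, F l ≤ G l) → ∀ z, L F z ≤ L G z
  one : ∀ (c : ℝ) (z : ℝ × ℝ), L (fun _ => c) z = c
  smooth : ∀ F : ℝ → ℝ, Continuous F → ContDiff ℝ 1 (L F)

/-- The mollified measure, mixed with `δ_{1/2}` and cut off to `δ_c` by `θ`. -/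
def Lop {T : ℝ} (μ : YM T) (ρ : ℝ × ℝ → ℝ) (s : ℝ) (v : ℝ × ℝ) (η c : ℝ) (θ : ℝ × ℝ → ℝ) (F : ℝ → ℝ) (z : ℝ × ℝ) : ℝ :=
  (1 - θ z) * ((1 - η) * moll ρ s v (μ.mom F) z + η * F (1 / 2)) + θ z * F c

lemma mom_locInt {T : ℝ} (μ : YM T) {F : ℝ → ℝ} (hF : Continuous F) : LocallyIntegrable (μ.mom F) := by
  obtain ⟨C, _, hC⟩ := exists_bd hF
  exact locInt_of_bdd (mom_meas μ hF) (mom_abs_le μ hC)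

lemma Lop_PF {T : ℝ} (μ : YM T) {ρ : ℝ × ℝ → ℝ} {r : ℝ} (hρ : IsMoll ρ r) (s : ℝ) (v : ℝ × ℝ) {η c : ℝ}
    (hη : η ∈ Icc (0:ℝ) 1) (hc : c ∈ Icc (0:ℝ) 1) {θ : ℝ × ℝ → ℝ} (hθ : ContDiff ℝ 1 θ) (hθ1 : ∀ z, θ z ∈ Icc (0:ℝ) 1) :
    PF (Lop μ ρ s v η c θ) where
  sum F hF k z := by
    have e : μ.mom (fun l => ∑ i, k i * F i l) = fun z => ∑ i, k i * μ.mom (F i) z :=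
      funext fun z => mom_sum μ F hF k z
    simp only [Lop]
    rw [e, moll_sum hρ (fun i => mom_locInt μ (hF i))]
    simp only [Finset.mul_sum, ← Finset.sum_add_distrib]
    refine Finset.sum_congr rfl fun i _ => by ring
  mono F G hF hG h z := by
    have h1 := moll_mono (s := s) (v := v) hρ (mom_locInt μ hF) (mom_locInt μ hG) (mom_mono μ hF hG h) z
    have h2 := h (1/2) (by norm_num)
    have h3 := h c hc
    simp only [Lop]
    refine add_le_add (mul_le_mul_of_nonneg_left (add_le_add (mul_le_mul_of_nonneg_left h1 ?_)
      (mul_le_mul_of_nonneg_left h2 hη.1)) ?_) (mul_le_mul_of_nonneg_left h3 (hθ1 z).1)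
    · linarith [hη.2]
    · linarith [(hθ1 z).2]
  one k z := by
    have e : μ.mom (fun _ => k) = fun _ => k := funext fun z => mom_const μ k z
    simp only [Lop]
    rw [e, moll_const hρ]; ring
  smooth F hF := by
    have h1 : ContDiff ℝ 1 (moll ρ s v (μ.mom F)) := (moll_contDiff hρ (mom_locInt μ hF)).of_le (by simp)
    unfold Lop
    exact ((contDiff_const.sub hθ).mul ((contDiff_const.mul h1).add contDiff_const)).add (hθ.mul contDiff_const)

lemma tail_small {ψ : ℝ × ℝ → ℝ} (hψ : Integrable ψ) {ε : ℝ} (hε : 0 < ε) :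
    ∀ᶠ R : ℝ in atTop, ∫ z in {z : ℝ × ℝ | R < |z.2|}, |ψ z| ≤ ε := by
  have h := tendsto_setIntegral_of_antitone (μ := (volume : Measure (ℝ × ℝ))) (f := fun z => |ψ z|)
    (s := fun R : ℝ => {z : ℝ × ℝ | R < |z.2|})
    (fun R => (isOpen_lt continuous_const (by fun_prop)).measurableSet)
    (fun R R' hR z hz => lt_of_le_of_lt hR hz) ⟨0, hψ.abs.integrableOn⟩
  have e : (⋂ R : ℝ, {z : ℝ × ℝ | R < |z.2|}) = ∅ := by
    rw [eq_empty_iff_forall_notMem]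
    intro z hz
    have h1 : |z.2| < |z.2| := mem_iInter.1 hz (|z.2|)
    exact lt_irrefl _ h1
  rw [e] at h
  simp only [Measure.restrict_empty, integral_zero_measure] at h
  exact (h.eventually (gt_mem_nhds hε)).mono fun R hR => le_of_lt hR

lemma moll_mom_abs {T : ℝ} (μ : YM T) {ρ : ℝ × ℝ → ℝ} {r : ℝ} (hρ : IsMoll ρ r) {s : ℝ} {v : ℝ × ℝ} {F : ℝ → ℝ}
    (hF : Continuous F) {C : ℝ} (hC : ∀ l ∈ Icc (0:ℝ) 1, |F l| ≤ C) (z : ℝ × ℝ) : |moll ρ s v (μ.mom F) z| ≤ C :=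
  moll_abs_le hρ (mom_meas μ hF) (mom_abs_le μ hC) z

/-- Error of `Lop` against a test function: mollification, mixing and tail terms. -/
lemma Lop_test {T : ℝ} (μ : YM T) {ρ : ℝ × ℝ → ℝ} {r : ℝ} (hρ : IsMoll ρ r) {s : ℝ} {v : ℝ × ℝ} {η c : ℝ}
    (hη : η ∈ Icc (0:ℝ) 1) (hc : c ∈ Icc (0:ℝ) 1) {θ : ℝ × ℝ → ℝ} (hθ : ContDiff ℝ 1 θ) (hθ1 : ∀ z, θ z ∈ Icc (0:ℝ) 1)
    {R : ℝ} (hθR : ∀ z : ℝ × ℝ, z.1 ∈ Icc 0 T → |z.2| ≤ R → θ z = 0)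
    {ψ : ℝ × ℝ → ℝ} (hψ : Integrable ψ) {F : ℝ → ℝ} (hF : Continuous F) {C : ℝ} (hC0 : 0 ≤ C)
    (hC : ∀ l ∈ Icc (0:ℝ) 1, |F l| ≤ C) :
    |∫ z in Icc 0 T ×ˢ univ, ψ z * (Lop μ ρ s v η c θ F z - μ.mom F z)| ≤
      |∫ z in Icc 0 T ×ˢ univ, ψ z * (moll ρ s v (μ.mom F) z - μ.mom F z)| + 2 * C * η * (∫ z, |ψ z|) +
        2 * C * ∫ z in {z : ℝ × ℝ | R < |z.2|}, |ψ z| := by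
  set S : Set (ℝ × ℝ) := Icc 0 T ×ˢ univ with hS
  have hSm : MeasurableSet S := measurableSet_Icc.prod MeasurableSet.univ
  set W : Set (ℝ × ℝ) := {z : ℝ × ℝ | R < |z.2|} with hW
  have hWm : MeasurableSet W := (isOpen_lt continuous_const (by fun_prop)).measurableSet
  have hMc : Continuous (moll ρ s v (μ.mom F)) := (moll_contDiff hρ (mom_locInt μ hF)).continuous
  have hMb := moll_mom_abs μ hρ (s := s) (v := v) hF hC
  have hmb := mom_abs_le μ hC
  set D : ℝ × ℝ → ℝ := fun z => η * (F (1/2) - moll ρ s v (μ.mom F) z) +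
    θ z * (F c - ((1 - η) * moll ρ s v (μ.mom F) z + η * F (1/2))) with hD
  have hF2 := abs_le.1 (hC (1/2) (by norm_num))
  have hFc := abs_le.1 (hC c hc)
  have hDb : ∀ z ∈ S, |D z| ≤ 2 * C * η + W.indicator (fun _ => 2 * C) z := by
    intro z hz
    have hM := abs_le.1 (hMb z)
    refine (abs_add_le _ _).trans (add_le_add ?_ ?_)
    · rw [abs_mul, abs_of_nonneg hη.1, mul_comm (2 * C)]
      refine mul_le_mul_of_nonneg_left ?_ hη.1
      rw [abs_le]; constructor <;> linarith
    · by_cases hzW : z ∈ W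
      · rw [indicator_of_mem hzW, abs_mul, abs_of_nonneg (hθ1 z).1]
        have a1 : |F c - ((1 - η) * moll ρ s v (μ.mom F) z + η * F (1/2))| ≤ 2 * C := by
          have k1 : 0 ≤ 1 - η := by linarith [hη.2]
          have k2 : |(1 - η) * moll ρ s v (μ.mom F) z + η * F (1/2)| ≤ C := by
            rw [abs_le]
            constructor
            · nlinarith [hη.1, hη.2]
            · nlinarith [hη.1, hη.2]
          have k3 := abs_le.1 k2
          rw [abs_le]; constructor <;> linarith
        calc _ ≤ 1 * (2 * C) := mul_le_mul (hθ1 z).2 a1 (abs_nonneg _) zero_le_one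
          _ = _ := one_mul _
      · rw [indicator_of_notMem hzW, hθR z hz.1 (not_lt.1 hzW)]; simp
  have hθm := hθ.continuous
  have hDm : Measurable D := by
    have := hMc
    exact Continuous.measurable (by fun_prop)
  have i1 : IntegrableOn (fun z => ψ z * (moll ρ s v (μ.mom F) z - μ.mom F z)) S :=
    (hψ.mul_bdd (c := 2 * C) (hMc.measurable.sub (mom_meas μ hF)).aestronglyMeasurable (Eventually.of_forall fun z => by
      have h1 := abs_le.1 (hMb z); have h2 := abs_le.1 (hmb z)
      rw [Real.norm_eq_abs, abs_le]; constructor <;> simp only [Pi.sub_apply] <;> linarith)).integrableOn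
  have i3 : IntegrableOn (fun z => |ψ z| * (2 * C * η + W.indicator (fun _ => 2 * C) z)) S := by
    refine (hψ.abs.mul_bdd (c := 2 * C * η + 2 * C) ?_ (Eventually.of_forall fun z => ?_)).integrableOn
    · exact (measurable_const.add (measurable_const.indicator hWm)).aestronglyMeasurable
    · have := hη.1
      rw [Real.norm_eq_abs]
      by_cases hzW : z ∈ W
      · rw [indicator_of_mem hzW, abs_of_nonneg (by positivity)]
      · rw [indicator_of_notMem hzW, abs_of_nonneg (by positivity)]; linarith
  have i2 : IntegrableOn (fun z => ψ z * D z) S := by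
    refine Integrable.mono' i3 ?_ ?_
    · exact (hψ.aestronglyMeasurable.mul hDm.aestronglyMeasurable).restrict
    · refine (ae_restrict_iff' hSm).2 (Eventually.of_forall fun z hz => ?_)
      rw [Real.norm_eq_abs, abs_mul]
      exact mul_le_mul_of_nonneg_left (hDb z hz) (abs_nonneg _)
  have e : ∫ z in S, ψ z * (Lop μ ρ s v η c θ F z - μ.mom F z) =
      (∫ z in S, ψ z * (moll ρ s v (μ.mom F) z - μ.mom F z)) + ∫ z in S, ψ z * D z := by
    rw [← integral_add i1 i2]
    congr 1; funext z; simp only [Lop, hD]; ring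
  rw [e, add_assoc]
  refine (abs_add_le _ _).trans (add_le_add le_rfl ?_)
  calc |∫ z in S, ψ z * D z| ≤ ∫ z in S, |ψ z * D z| := abs_integral_le_integral_abs
    _ ≤ ∫ z in S, |ψ z| * (2 * C * η + W.indicator (fun _ => 2 * C) z) := by
        refine setIntegral_mono_on i2.abs i3 hSm fun z hz => ?_
        rw [abs_mul]
        exact mul_le_mul_of_nonneg_left (hDb z hz) (abs_nonneg _)
    _ ≤ ∫ z, |ψ z| * (2 * C * η + W.indicator (fun _ => 2 * C) z) := by
        refine setIntegral_le_integral ?_ (Eventually.of_forall fun z => ?_)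
        · refine hψ.abs.mul_bdd (c := 2 * C * η + 2 * C) ?_ (Eventually.of_forall fun z => ?_)
          · exact (measurable_const.add (measurable_const.indicator hWm)).aestronglyMeasurable
          · have := hη.1
            rw [Real.norm_eq_abs]
            by_cases hzW : z ∈ W
            · rw [indicator_of_mem hzW, abs_of_nonneg (by positivity)]
            · rw [indicator_of_notMem hzW, abs_of_nonneg (by positivity)]; linarith
        · have h1 : 0 ≤ W.indicator (fun _ => 2 * C) z := indicator_nonneg (fun _ _ => by positivity) z
          have := hη.1
          show 0 ≤ |ψ z| * (2 * C * η + W.indicator (fun _ => 2 * C) z)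
          positivity
    _ = _ := by
        have j1 : Integrable fun z => 2 * C * η * |ψ z| := hψ.abs.const_mul _
        have j2 : Integrable fun z => W.indicator (fun z => 2 * C * |ψ z|) z := (hψ.abs.const_mul _).indicator hWm
        have : ∀ z, |ψ z| * (2 * C * η + W.indicator (fun _ => 2 * C) z) =
            2 * C * η * |ψ z| + W.indicator (fun z => 2 * C * |ψ z|) z := fun z => by
          by_cases hzW : z ∈ W
          · rw [indicator_of_mem hzW, indicator_of_mem hzW]; ring
          · rw [indicator_of_notMem hzW, indicator_of_notMem hzW]; ring
        simp_rw [this]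
        rw [integral_add j1 j2, integral_const_mul, integral_indicator hWm, integral_const_mul]

/-- Error of the mean of `Lop` in a negative seminorm whose tests live where `θ = 0`. -/
lemma Lop_nb {T : ℝ} (μ : YM T) {ρ : ℝ × ℝ → ℝ} {r : ℝ} (hρ : IsMoll ρ r) {s : ℝ} {v : ℝ × ℝ} {η c : ℝ}
    (hη : η ∈ Icc (0:ℝ) 1) {θ : ℝ × ℝ → ℝ}
    {R N : ℝ} (hN : 0 < N) (hNR : N ≤ R) (hθR : ∀ z : ℝ × ℝ, z.1 ∈ Icc 0 T → |z.2| ≤ R → θ z = 0)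
    {t : ℝ} (ht : t ∈ Icc 0 T) {ε : ℝ}
    (h : nb N ε fun x => moll ρ s v μ.bar.toFun (t, x) - μ.bar.toFun (t, x)) :
    nb N (ε + η * (2 * N * Real.sqrt (2 * N))) fun x => Lop μ ρ s v η c θ (fun l => l) (t, x) - μ.mom (fun l => l) (t, x) := by
  intro φ hφ
  have hC : ∀ l ∈ Icc (0:ℝ) 1, |l| ≤ (1:ℝ) := fun l hl => by rw [abs_of_nonneg hl.1]; exact hl.2
  have hMc : Continuous (moll ρ s v (μ.mom fun l => l)) := (moll_contDiff hρ (mom_locInt μ continuous_id')).continuous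
  have hMb := moll_mom_abs μ hρ (s := s) (v := v) continuous_id' hC
  have hmb := mom_abs_le μ hC
  have hM0 : ∀ z, 0 ≤ moll ρ s v (μ.mom fun l => l) z := fun z => by
    rw [← moll_const (s := s) (v := v) hρ 0 z]
    exact moll_mono hρ (locallyIntegrable_const _) (mom_locInt μ continuous_id') (mom_nonneg μ fun l hl => hl.1) z
  have h1 := h φ hφ
  have hmm : Measurable fun x => μ.mom (fun l => l) (t, x) := (mom_meas μ continuous_id').comp measurable_prodMk_left
  have i1 : Integrable fun x => (moll ρ s v (μ.mom fun l => l) (t, x) - μ.mom (fun l => l) (t, x)) * φ.toFun x :=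
    φ.int_mul ((hMc.comp (by fun_prop)).measurable.sub hmm) (C := 2) fun x => by
      have h1 := abs_le.1 (hMb (t, x)); have h2 := abs_le.1 (hmb (t, x))
      rw [abs_le]; constructor <;> linarith
  have hb : ∀ x, |η * (1 / 2 - moll ρ s v (μ.mom fun l => l) (t, x))| ≤ η := fun x => by
    have h1 := abs_le.1 (hMb (t, x)); have h2 := hM0 (t, x)
    rw [abs_mul, abs_of_nonneg hη.1]
    refine mul_le_of_le_one_right hη.1 ?_
    rw [abs_le]; constructor <;> linarith
  have hmeas : Measurable fun x => η * (1 / 2 - moll ρ s v (μ.mom fun l => l) (t, x)) :=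
    Continuous.measurable (continuous_const.mul (continuous_const.sub (hMc.comp (by fun_prop))))
  have i2 := φ.int_mul hmeas hb
  have e : ∫ x, (Lop μ ρ s v η c θ (fun l => l) (t, x) - μ.mom (fun l => l) (t, x)) * φ.toFun x =
      (∫ x, (moll ρ s v (μ.mom fun l => l) (t, x) - μ.mom (fun l => l) (t, x)) * φ.toFun x) +
      ∫ x, η * (1 / 2 - moll ρ s v (μ.mom fun l => l) (t, x)) * φ.toFun x := by
    rw [← integral_add i1 i2]
    congr 1; funext x
    by_cases hx : x ∈ Ioo (-N) N
    · simp only [Lop]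
      rw [hθR (t, x) ht (abs_le.2 ⟨by linarith [hx.1], by linarith [hx.2]⟩)]; ring
    · rw [φ.zero hx]; ring
  rw [e]
  exact add_le_add h1 ((le_abs_self _).trans (φ.pair_le hN hφ hmeas hb))

end

section

/-- A quadratic inequality recovered from its linearisations, which pass through averaging. -/
lemma sq_le_of_lin {g a H : ℝ} (ha : 0 ≤ a) (hH : 0 ≤ H) (h : ∀ k : ℝ, 2 * k * g - k ^ 2 * a ≤ H) : g ^ 2 ≤ a * H := by
  rcases ha.eq_or_lt with h0 | h0
  · have hg : g = 0 := by
      by_contra hne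
      have := h ((H + 1) / (2 * g))
      rw [← h0] at this
      have e : 2 * ((H + 1) / (2 * g)) * g = H + 1 := by field_simp
      rw [e] at this; linarith
    rw [hg, ← h0]; simp
  · have := h (g / a)
    have e : 2 * (g / a) * g - (g / a) ^ 2 * a = g ^ 2 / a := by field_simp; ring
    rw [e, div_le_iff₀ h0] at this
    linarith

set_option maxHeartbeats 2000000 in
/-- A Young measure of finite cost is approximated by a `C¹` family of measures, equal to `δ_c` for large `|x|`,
with `Lσ` bounded below, whose barycentre and flux `E` derive from a potential and whose cost density
`(E - Lf)²/Lσ` is dominated by an integrable `H` with `∫ H ≤ 2 𝓘(μ) + ε`. -/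
theorem exists_smoothing {T : ℝ} (hT : 0 < T) {f σ : ℝ → ℝ} (hf : Continuous f) (hσ : Continuous σ)
    (hσ0 : ∀ l ∈ Icc (0:ℝ) 1, 0 ≤ σ l) (hσ1 : ∀ l ∈ Ioo (0:ℝ) 1, 0 < σ l) (μ : YM T) (hI : calI f σ T μ ≠ ⊤)
    {ι : Type*} [Fintype ι] (ψ : ι → ℝ × ℝ → ℝ) (hψ : ∀ j, Integrable (ψ j)) (p : ι → ℝ → ℝ)
    (hp : ∀ j, Continuous (p j)) (N : ℕ) {ε : ℝ} (hε : 0 < ε) :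
    ∃ (L : (ℝ → ℝ) → ℝ × ℝ → ℝ) (E b H : ℝ × ℝ → ℝ) (c Lx r0 : ℝ), PF L ∧ Continuous E ∧ ContDiff ℝ 1 b ∧
      Integrable H ∧ (∀ z, 0 ≤ H z) ∧ c ∈ Ioo (0:ℝ) 1 ∧ 0 < Lx ∧ 0 < r0 ∧
      (∀ z : ℝ × ℝ, z.1 ∈ Icc 0 T → Lx ≤ |z.2| → (∀ F : ℝ → ℝ, L F z = F c) ∧ E z = f c) ∧
      (∀ z : ℝ × ℝ, z.1 ∈ Icc 0 T → L (fun l => l) z = c + pxF b z ∧ E z = f c - ptF b z) ∧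
      (∀ z, (E z - L f z) ^ 2 ≤ L σ z * H z) ∧ (∫ z, H z) ≤ 2 * (calI f σ T μ).toReal + ε ∧
      (∀ j, |∫ z in Icc 0 T ×ˢ univ, ψ j z * (L (p j) z - μ.mom (p j) z)| ≤ ε) ∧
      (∀ t ∈ Icc 0 T, nb ((N:ℝ) + 1) ε fun x => L (fun l => l) (t, x) - μ.mom (fun l => l) (t, x)) ∧
      ∀ z, r0 ≤ L σ z := by
  obtain ⟨h, hhm, hh0, hhi, hh2, hcons⟩ := riesz_cost hf hσ hσ0 μ hI
  obtain ⟨Cf, hCf0, hCf⟩ := exists_bd hf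
  obtain ⟨Cσ, hCσ0, hCσ⟩ := exists_bd hσ
  set I0 := (calI f σ T μ).toReal with hI0
  have hI00 : 0 ≤ I0 := ENNReal.toReal_nonneg
  choose C hC0 hC using fun j => exists_bd (hp j)
  have hSm : MeasurableSet (Icc (0:ℝ) T ×ˢ (univ : Set ℝ)) := measurableSet_Icc.prod MeasurableSet.univ
  -- the radius of the cut-off
  obtain ⟨R, hR1, hR2⟩ : ∃ R : ℝ, (N:ℝ) + 1 ≤ R ∧ ∀ j, ∫ z in {z : ℝ × ℝ | R < |z.2|}, |ψ j z| ≤ ε / (8 * (C j + 1)) := by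
    have h1 : ∀ᶠ R : ℝ in atTop, ∀ j, ∫ z in {z : ℝ × ℝ | R < |z.2|}, |ψ j z| ≤ ε / (8 * (C j + 1)) :=
      eventually_all.2 fun j => tail_small (hψ j) (by have := hC0 j; positivity)
    exact ((eventually_ge_atTop ((N:ℝ) + 1)).and h1).exists
  -- the scale of the mollification
  have hw : ∀ j, ∃ κ > 0, ∀ (ρ : ℝ × ℝ → ℝ) (r s : ℝ) (v : ℝ × ℝ), IsMoll ρ r → r < κ → |s - 1| < κ → ‖v‖ < κ →
      ∀ (g : ℝ × ℝ → ℝ) (K : ℝ), Measurable g → 0 ≤ K → (∀ z, |g z| ≤ K) →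
        |(∫ z, (Icc (0:ℝ) T ×ˢ univ).indicator (ψ j) z * moll ρ s v g z) -
          ∫ z, (Icc (0:ℝ) T ×ˢ univ).indicator (ψ j) z * g z| ≤ K * (ε / (4 * (C j + 1))) := fun j =>
    moll_weak ((hψ j).indicator hSm) (by have := hC0 j; positivity)
  choose κ1 hκ1 hw1 using hw
  obtain ⟨κ2, hκ2, hneg⟩ := moll_neg μ.bar N (half_pos hε)
  have tend : ∀ (g : ℝ → ℝ), Continuous g → ∀ B : ℝ, g 0 < B → ∀ᶠ η : ℝ in 𝓝[>] 0, g η < B := fun g hg B hB =>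
    ((hg.tendsto 0).eventually (gt_mem_nhds hB)).filter_mono nhdsWithin_le_nhds
  have ev1 : ∀ᶠ η : ℝ in 𝓝[>] 0, ∀ j, 2 * C j * (∫ z, |ψ j z|) * η < ε / 4 :=
    eventually_all.2 fun j => tend _ (by fun_prop) _ (by simpa using by positivity)
  have ev2 : ∀ κ > 0, ∀ᶠ η : ℝ in 𝓝[>] 0, η < κ ∧ 2 * η / T < κ := fun κ hκ =>
    (tend (fun η => η) (by fun_prop) _ hκ).and (tend (fun η => 2 * η / T) (by fun_prop) _ (by simpa using hκ))
  have ev3 : ∀ᶠ η : ℝ in 𝓝[>] 0, η * (2 * ((N:ℝ) + 1) * Real.sqrt (2 * ((N:ℝ) + 1))) < ε / 2 :=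
    tend _ (by fun_prop) _ (by simpa using by positivity)
  have ev4 : ∀ᶠ η : ℝ in 𝓝[>] 0, |((1 - 2 * η / T) ^ 2)⁻¹| * (2 * I0) < 2 * I0 + ε := by
    have hca : ContinuousAt (fun η : ℝ => |((1 - 2 * η / T) ^ 2)⁻¹| * (2 * I0)) 0 := by
      refine ContinuousAt.mul (ContinuousAt.abs (ContinuousAt.inv₀ (by fun_prop) (by simp))) continuousAt_const
    refine (hca.tendsto.eventually (gt_mem_nhds ?_)).filter_mono nhdsWithin_le_nhds
    simp; exact hε
  obtain ⟨η, ⟨⟨⟨⟨⟨⟨hη0, h1⟩, h2⟩, h3⟩, h4⟩, h5⟩, h6⟩⟩ := ((((((eventually_mem_nhdsWithin (a := (0:ℝ)) (s := Ioi 0)).and ev1).and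
    (eventually_all.2 fun j => ev2 (κ1 j) (hκ1 j))).and (ev2 κ2 hκ2)).and ev3).and ev4).and
    (ev2 (1/2) (by norm_num)) |>.exists
  have hη0 : 0 < η := hη0
  -- `z ↦ s z + (η, 0)` sends the times `[0, T]` into `[η, T - η]`, leaving room for the mollifier
  set s := 1 - 2 * η / T with hs
  have hs1 : |s - 1| = 2 * η / T := by
    rw [hs, show 1 - 2 * η / T - 1 = -(2 * η / T) by ring, abs_neg, abs_of_nonneg (by positivity)]
  have hs0 : 0 < s := by linarith [h6.2]
  have hsle : s ≤ 1 := by have : 0 ≤ 2 * η / T := by positivity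
                          linarith
  have hsT : s * T = T - 2 * η := by rw [hs]; field_simp
  set v : ℝ × ℝ := (η, 0) with hv
  have hvn : ‖v‖ = η := by rw [hv, Prod.norm_def]; simp [abs_of_pos hη0, hη0.le]
  obtain ⟨ρ, hρ⟩ := exists_moll (r := η / 2) (by positivity)
  -- mixing with `δ_{1/2}` makes the mean at least `η / 2`, so the mean minus `c` stays positive
  set c := η / 4 with hc
  have hηI : η ∈ Icc (0:ℝ) 1 := ⟨hη0.le, by linarith [h6.1]⟩
  have hcI : c ∈ Ioo (0:ℝ) 1 := ⟨by positivity, by linarith [h6.1]⟩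
  have hcI' : c ∈ Icc (0:ℝ) 1 := ⟨hcI.1.le, hcI.2.le⟩
  -- the flux
  set G : ℝ × ℝ → ℝ := fun z => Real.sqrt (μ.mom σ z) * h z with hG
  have ha0 : ∀ z, 0 ≤ μ.mom σ z := mom_nonneg μ hσ0
  have haC : ∀ z, |μ.mom σ z| ≤ Cσ := mom_abs_le μ hCσ
  have hGm : Measurable G := ((mom_meas μ hσ).sqrt).mul hhm
  have hGk : ∀ z k, 2 * k * G z - k ^ 2 * μ.mom σ z ≤ h z ^ 2 := fun z k => by
    have := sq_nonneg (h z - k * Real.sqrt (μ.mom σ z))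
    have e := Real.sq_sqrt (ha0 z)
    simp only [hG]
    nlinarith
  have hhl : LocallyIntegrable (fun z => h z ^ 2) := hhi.locallyIntegrable
  have hGl : LocallyIntegrable G := by
    have h1 : LocallyIntegrable (fun z : ℝ × ℝ => h z ^ 2 + Cσ) := hhl.add (locallyIntegrable_const _)
    refine h1.mono hGm.aestronglyMeasurable (Eventually.of_forall fun z => ?_)
    rw [Real.norm_eq_abs, Real.norm_eq_abs, abs_of_nonneg (by positivity : 0 ≤ h z ^ 2 + Cσ), abs_le]
    have a1 := hGk z 1; have a2 := hGk z (-1)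
    have a3 := abs_le.1 (haC z)
    constructor <;> nlinarith [sq_nonneg (h z)]
  set E0 : ℝ × ℝ → ℝ := fun z => μ.mom f z + G z with hE0
  have hE0l : LocallyIntegrable E0 := (mom_locInt μ hf).add hGl
  set H : ℝ × ℝ → ℝ := moll ρ s v (fun z => h z ^ 2) with hH
  have hH0 : ∀ z, 0 ≤ H z := fun z => by
    rw [← moll_const (s := s) (v := v) hρ 0 z]
    exact moll_mono hρ (locallyIntegrable_const _) hhl (fun z => sq_nonneg _) z
  obtain ⟨hHi, hHint⟩ := moll_int (v := v) hρ hs0.ne' hhi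
  set A : ℝ × ℝ → ℝ := moll ρ s v (μ.mom σ) with hA
  have hA0 : ∀ z, 0 ≤ A z := fun z => by
    rw [← moll_const (s := s) (v := v) hρ 0 z]
    exact moll_mono hρ (locallyIntegrable_const _) (mom_locInt μ hσ) ha0 z
  have hAC : ∀ z, |A z| ≤ Cσ := moll_mom_abs μ hρ hσ hCσ
  -- Jensen for `(g, a) ↦ g² / a`, through the family of linear bounds `hGk`
  have hJ : ∀ z, moll ρ s v G z ^ 2 ≤ A z * H z := fun z => by
    refine sq_le_of_lin (hA0 z) (hH0 z) fun k => ?_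
    have e := moll_lin (s := s) (v := v) hρ hGl (mom_locInt μ hσ) (2 * k) (-(k ^ 2)) z
    have l : LocallyIntegrable fun z => 2 * k * G z + -(k ^ 2) * μ.mom σ z := by
      have l1 : LocallyIntegrable fun z => 2 * k * G z := hGl.smul (2 * k)
      have l2 : LocallyIntegrable fun z => -(k ^ 2) * μ.mom σ z := (mom_locInt μ hσ).smul (-(k ^ 2))
      exact l1.add l2
    have := moll_mono (s := s) (v := v) hρ l hhl (fun z => by linarith [hGk z k]) z
    rw [e] at this
    simp only [hA, hH]; linarith
  have hE0e : ∀ z, moll ρ s v E0 z = moll ρ s v (μ.mom f) z + moll ρ s v G z := fun z => by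
    have e := moll_lin (s := s) (v := v) hρ (mom_locInt μ hf) hGl 1 1 z
    simp only [one_mul] at e
    exact e
  -- boundedness of the mollified flux
  obtain ⟨Mρ, hMρ⟩ := hρ.cpt.exists_bound_of_continuous hρ.smooth.continuous
  have hMρ0 : 0 ≤ Mρ := (norm_nonneg _).trans (hMρ 0)
  have hHb : ∀ z, H z ≤ Mρ * ∫ y, h y ^ 2 := fun z => by
    have e1 : ∫ y, h y ^ 2 = ∫ y, h (s • z + v - y) ^ 2 :=
      (integral_sub_left_eq_self (fun y => h y ^ 2) volume (s • z + v)).symm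
    rw [e1, ← integral_const_mul]
    refine integral_mono (moll_integrable hρ hhl _) ?_ fun y => ?_
    · exact ((hhi.comp_sub_left (s • z + v))).const_mul Mρ
    · exact mul_le_mul_of_nonneg_right ((le_abs_self _).trans (hMρ y)) (sq_nonneg _)
  set K := Mρ * ∫ y, h y ^ 2 with hK
  have hMG : ∀ z, |moll ρ s v G z| ≤ 1 + Cσ * K := fun z => by
    have a1 := hJ z
    have a2 : A z * H z ≤ Cσ * K := mul_le_mul ((le_abs_self _).trans (hAC z)) (hHb z) (hH0 z) hCσ0
    have a3 := sq_abs (moll ρ s v G z)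
    nlinarith [sq_nonneg (|moll ρ s v G z| - 1), abs_nonneg (moll ρ s v G z)]
  have hfb := abs_le.1 (hCf (1/2) (by norm_num))
  have hfc := abs_le.1 (hCf c hcI')
  have hid : ∀ l ∈ Icc (0:ℝ) 1, |l| ≤ (1:ℝ) := fun l hl => by rw [abs_of_nonneg hl.1]; exact hl.2
  have hM0 : ∀ z, 0 ≤ moll ρ s v (μ.mom fun l => l) z := fun z => by
    rw [← moll_const (s := s) (v := v) hρ 0 z]
    exact moll_mono hρ (locallyIntegrable_const _) (mom_locInt μ continuous_id') (mom_nonneg μ fun l hl => hl.1) z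
  have hM1 := moll_mom_abs μ hρ (s := s) (v := v) continuous_id' hid
  have hMfb := moll_mom_abs μ hρ (s := s) (v := v) hf hCf
  have sm1 : ContDiff ℝ (⊤ : ℕ∞) (moll ρ s v (μ.mom fun l => l)) := moll_contDiff hρ (mom_locInt μ continuous_id')
  have sm2 : ContDiff ℝ (⊤ : ℕ∞) (moll ρ s v E0) := moll_contDiff hρ hE0l
  set m' : ℝ × ℝ → ℝ := fun z => (1 - η) * moll ρ s v (μ.mom fun l => l) z + (η * (1 / 2) - c) with hm'
  set E' : ℝ × ℝ → ℝ := fun z => (1 - η) * moll ρ s v E0 z + (η * f (1 / 2) - f c) with hE'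
  have hη1 : 0 ≤ 1 - η := by linarith [hηI.2]
  have hfin : 0 ≤ 1 + Cσ * K := (abs_nonneg _).trans (hMG 0)
  obtain ⟨θ, b, hθ, hb, hθ1, hθR, ⟨Lx, hLx, hθL⟩, hθb⟩ := exists_cut (m := m') (E := E') (κ := η / 2) (q := η / 4)
    (C := 2 + 3 * Cf + (1 + Cσ * K)) (R := R) hT (by positivity)
    ((contDiff_const.mul sm1).add contDiff_const) ((contDiff_const.mul sm2).add contDiff_const) (by
      intro z hz1 hz2
      have e1 : HasFDerivAt m' ((1 - η) • fderiv ℝ (moll ρ s v (μ.mom fun l => l)) z) z :=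
        ((sm1.differentiable (by simp) z).hasFDerivAt.const_mul (1 - η)).add_const _
      have e2 : HasFDerivAt E' ((1 - η) • fderiv ℝ (moll ρ s v E0) z) z :=
        ((sm2.differentiable (by simp) z).hasFDerivAt.const_mul (1 - η)).add_const _
      rw [e1.fderiv, e2.fderiv]
      have hz3 : (s • z + v).1 = s * z.1 + η := by simp [hv]
      have := moll_conservation (s := s) (v := v) hρ (mom_locInt μ continuous_id') hE0l hcons (z := z)
        (by rw [hz3]; nlinarith) (by rw [hz3]; nlinarith)
      simp only [_root_.smul_apply, smul_eq_mul]
      rw [← mul_add, this, mul_zero])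
    (by positivity) (fun z => by
      have := mul_nonneg hη1 (hM0 z)
      simp only [hm', hc]; linarith) (fun z => by
      have a1 := mul_nonneg hη1 (hM0 z)
      have a2 : (1 - η) * moll ρ s v (μ.mom fun l => l) z ≤ 1 :=
        mul_le_one₀ (by linarith) (hM0 z) ((le_abs_self _).trans (hM1 z))
      simp only [hm', hc]
      rw [abs_le]; constructor <;> linarith [hηI.2]) (fun z => by
      have a1 : |moll ρ s v E0 z| ≤ Cf + (1 + Cσ * K) := by
        rw [hE0e]; exact (abs_add_le _ _).trans (add_le_add (hMfb z) (hMG z))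
      have a2 : |(1 - η) * moll ρ s v E0 z| ≤ Cf + (1 + Cσ * K) := by
        rw [abs_mul, abs_of_nonneg hη1]
        exact (mul_le_of_le_one_left (abs_nonneg _) (by linarith)).trans a1
      have a3 : |η * f (1 / 2)| ≤ Cf := by
        rw [abs_mul, abs_of_nonneg hηI.1]
        exact (mul_le_of_le_one_left (abs_nonneg _) hηI.2).trans (hCf _ (by norm_num))
      have a4 := abs_le.1 a2
      have a5 := abs_le.1 a3
      simp only [hE']
      rw [abs_le]; constructor <;> linarith) (by have : (0:ℝ) ≤ N := Nat.cast_nonneg N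
                                                 linarith)
  have hPF := Lop_PF μ hρ s v hηI hcI' hθ hθ1
  have hσh := hσ1 (1/2) (by norm_num)
  have hσc := hσ1 c hcI
  refine ⟨Lop μ ρ s v η c θ, fun z => f c + (1 - θ z) * E' z, b, H, c, Lx, min (η * σ (1/2)) (σ c), hPF,
    ?_, hb, hHi, hH0, hcI, hLx, lt_min (by positivity) hσc, ?_, ?_, ?_, ?_, ?_, ?_, ?_⟩
  · have i1 := sm2.continuous; have i2 := hθ.continuous
    simp only [hE']; fun_prop
  · intro z hz hzL
    have := hθL z hz hzL
    refine ⟨fun F => ?_, ?_⟩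
    · simp [Lop, this]
    · simp [this]
  · intro z hz
    obtain ⟨a1, a2⟩ := hθb z hz
    rw [a1, a2]
    refine ⟨?_, by ring⟩
    simp only [Lop, hm']; ring
  · intro z
    set w := (1 - θ z) * (1 - η) with hw
    have w0 : 0 ≤ w := mul_nonneg (by linarith [(hθ1 z).2]) hη1
    have w1 : w ≤ 1 := mul_le_one₀ (by linarith [(hθ1 z).1]) hη1 (by linarith)
    have e : f c + (1 - θ z) * E' z - Lop μ ρ s v η c θ f z = w * moll ρ s v G z := by
      simp only [Lop, hE', hE0e, hw]; ring
    rw [e, mul_pow]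
    have e2 : Lop μ ρ s v η c θ σ z = w * A z + ((1 - θ z) * (η * σ (1/2)) + θ z * σ c) := by
      simp only [Lop, hw]; ring
    have p1 : 0 ≤ (1 - θ z) * (η * σ (1/2)) + θ z * σ c := by
      have := (hθ1 z).1; have q : 0 ≤ 1 - θ z := by linarith [(hθ1 z).2]
      positivity
    rw [e2]
    have b1 : w ^ 2 * moll ρ s v G z ^ 2 ≤ w ^ 2 * (A z * H z) := mul_le_mul_of_nonneg_left (hJ z) (sq_nonneg _)
    have b2 : w ^ 2 * (A z * H z) ≤ w * (A z * H z) :=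
      mul_le_mul_of_nonneg_right (by nlinarith) (mul_nonneg (hA0 z) (hH0 z))
    have b3 := mul_nonneg p1 (hH0 z)
    nlinarith
  · rw [hHint]
    refine le_trans (mul_le_mul_of_nonneg_left hh2 (abs_nonneg _)) h5.le
  · intro j
    have t1 := Lop_test μ hρ (s := s) (v := v) hηI hcI' hθ hθ1 hθR (hψ j) (hp j) (hC0 j) (hC j)
    have t2 := hw1 j ρ (η / 2) s v hρ (by linarith [(h2 j).1]) (by rw [hs1]; exact (h2 j).2) (by rw [hvn]; exact (h2 j).1)
      (μ.mom (p j)) (C j) (mom_meas μ (hp j)) (hC0 j) (mom_abs_le μ (hC j))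
    have hMc : Continuous (moll ρ s v (μ.mom (p j))) := (moll_contDiff hρ (mom_locInt μ (hp j))).continuous
    have j1 : Integrable fun z => (Icc (0:ℝ) T ×ˢ univ).indicator (ψ j) z * moll ρ s v (μ.mom (p j)) z :=
      ((hψ j).indicator hSm).mul_bdd (c := C j) hMc.aestronglyMeasurable
        (Eventually.of_forall (moll_mom_abs μ hρ (hp j) (hC j)))
    have j2 : Integrable fun z => (Icc (0:ℝ) T ×ˢ univ).indicator (ψ j) z * μ.mom (p j) z :=
      ((hψ j).indicator hSm).mul_bdd (c := C j) (mom_meas μ (hp j)).aestronglyMeasurable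
        (Eventually.of_forall (mom_abs_le μ (hC j)))
    rw [← integral_sub j1 j2] at t2
    have e : ∫ z in Icc 0 T ×ˢ univ, ψ j z * (moll ρ s v (μ.mom (p j)) z - μ.mom (p j) z) =
        ∫ z, ((Icc (0:ℝ) T ×ˢ univ).indicator (ψ j) z * moll ρ s v (μ.mom (p j)) z -
          (Icc (0:ℝ) T ×ˢ univ).indicator (ψ j) z * μ.mom (p j) z) := by
      rw [← integral_indicator hSm]
      congr 1; funext z
      by_cases hz : z ∈ Icc (0:ℝ) T ×ˢ (univ : Set ℝ)
      · simp only [indicator_of_mem hz]; ring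
      · simp only [indicator_of_notMem hz]; ring
    rw [e] at t1
    have hCj := hC0 j
    have u1 : C j * (ε / (4 * (C j + 1))) ≤ ε / 4 := by
      rw [mul_div_assoc', div_le_div_iff₀ (by positivity) (by norm_num)]; nlinarith
    have u2 : 2 * C j * (ε / (8 * (C j + 1))) ≤ ε / 4 := by
      rw [mul_div_assoc', div_le_div_iff₀ (by positivity) (by norm_num)]; nlinarith
    have u3 := mul_le_mul_of_nonneg_left (hR2 j) (by positivity : 0 ≤ 2 * C j)
    have u4 := h1 j
    have u5 : 2 * C j * η * (∫ z, |ψ j z|) = 2 * C j * (∫ z, |ψ j z|) * η := by ring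
    rw [u5] at t1
    linarith
  · intro t ht
    have n1 := hneg ρ (η / 2) s v hρ (by linarith [h3.1]) (by rw [hs1]; exact h3.2) (by rw [hvn]; exact h3.1) (by
      intro t ht y hy
      have hy1 : |y.1| < η / 2 := (norm_fst_le y).trans_lt hy
      have := abs_lt.1 hy1
      have q1 : 0 ≤ s * t := mul_nonneg hs0.le ht.1
      have q2 : s * t ≤ s * T := mul_le_mul_of_nonneg_left ht.2 hs0.le
      simp only [hv]
      constructor <;> linarith) t ht
    have n2 := Lop_nb μ hρ (c := c) hηI (by positivity) hR1 hθR ht n1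
    intro φ hφ
    exact (n2 φ hφ).trans (by linarith)
  · intro z
    have e2 : Lop μ ρ s v η c θ σ z = (1 - θ z) * (1 - η) * A z + ((1 - θ z) * (η * σ (1/2)) + θ z * σ c) := by
      simp only [Lop]; ring
    rw [e2]
    have k1 := (hθ1 z).1
    have k2 : 0 ≤ 1 - θ z := by linarith [(hθ1 z).2]
    have p1 := mul_nonneg (mul_nonneg k2 hη1) (hA0 z)
    have p2 := mul_le_mul_of_nonneg_left (min_le_left (η * σ (1/2)) (σ c)) k2
    have p3 := mul_le_mul_of_nonneg_left (min_le_right (η * σ (1/2)) (σ c)) k1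
    linarith

end

/-! ### Bernstein polynomials -/

section

/-- The Bernstein basis polynomial `C(n,i) lⁱ (1-l)ⁿ⁻ⁱ`, as a function on all of `ℝ`. -/
def bp (n i : ℕ) (l : ℝ) : ℝ := (n.choose i : ℝ) * l ^ i * (1 - l) ^ (n - i)

lemma bp_cont (n i : ℕ) : Continuous (bp n i) := by unfold bp; fun_prop

lemma bp_nonneg (n i : ℕ) {l : ℝ} (hl : l ∈ Icc (0:ℝ) 1) : 0 ≤ bp n i l := by
  have := hl.1
  have : 0 ≤ 1 - l := by linarith [hl.2]
  unfold bp; positivity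

lemma bp_eval (n i : ℕ) (l : ℝ) : (bernsteinPolynomial ℝ n i).eval l = bp n i l := by
  simp [bernsteinPolynomial, bp]

lemma bp_sum (n : ℕ) (l : ℝ) : ∑ i : Fin (n+1), bp n i l = 1 := by
  have h := congrArg (Polynomial.eval l) (bernsteinPolynomial.sum ℝ n)
  rw [Polynomial.eval_finsetSum] at h
  simp only [bp_eval, Polynomial.eval_one] at h
  rw [Finset.sum_range] at h
  exact h

lemma bp_mean {n : ℕ} (hn : n ≠ 0) (l : ℝ) : ∑ i : Fin (n+1), bp n i l * ((i : ℕ) / (n:ℝ)) = l := by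
  have h := congrArg (Polynomial.eval l) (bernsteinPolynomial.sum_smul ℝ n)
  rw [Polynomial.eval_finsetSum] at h
  simp only [nsmul_eq_mul, Polynomial.eval_mul, Polynomial.eval_natCast, bp_eval, Polynomial.eval_X] at h
  rw [Finset.sum_range] at h
  have hn' : (n:ℝ) ≠ 0 := by exact_mod_cast hn
  calc _ = (∑ i : Fin (n+1), ((i:ℕ):ℝ) * bp n i l) / n := by
        rw [Finset.sum_div]; exact Finset.sum_congr rfl fun i _ => by ring
    _ = l := by
        rw [show (∑ i : Fin (n+1), ((i:ℕ):ℝ) * bp n i l) = n * l from h]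
        field_simp

/-- Uniform convergence of Bernstein approximations on `[0,1]`. -/
lemma bernstein_vec {V : Type*} [NormedAddCommGroup V] [NormedSpace ℝ V]
    (F : ℝ → V) (hF : Continuous F) {κ : ℝ} (hκ : 0 < κ) :
    ∀ᶠ n : ℕ in atTop, ∀ l ∈ Icc (0:ℝ) 1,
      ‖∑ i : Fin (n+1), bp n i l • F ((i:ℕ) / (n:ℝ)) - F l‖ ≤ κ := by
  let G : C(unitInterval, V) := ⟨fun x => F x, by fun_prop⟩
  have h := bernsteinApproximation_uniform G
  rw [Metric.tendsto_atTop] at h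
  obtain ⟨N, hN⟩ := h κ hκ
  filter_upwards [eventually_ge_atTop N] with n hn l hl
  have h1 := (ContinuousMap.dist_lt_iff hκ).1 (hN n hn) ⟨l, hl⟩
  rw [dist_eq_norm] at h1
  refine le_of_eq_of_le ?_ h1.le
  congr 1
  simp [bernsteinApproximation.apply, G, bernstein_apply, bp, bernstein.z]

/-- The contraction `l ↦ δ + (1-2δ) l` of `[0,1]` onto `[δ,1-δ]`. -/
def tl (δ l : ℝ) : ℝ := δ + (1 - 2 * δ) * l

lemma tl_mem {δ l : ℝ} (hδ : 0 < δ) (h2 : δ < 1/2) (hl : l ∈ Icc (0:ℝ) 1) :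
    tl δ l ∈ Icc δ (1 - δ) := by
  unfold tl
  have := hl.1; have := hl.2
  constructor <;> nlinarith

/-- Bernstein approximation with the nodes moved into `[δ, 1-δ]`, for finitely many functions at once. -/
lemma exists_bernstein {J : Type*} [Fintype J] (F : J → ℝ → ℝ) (hF : ∀ j, Continuous (F j))
    {κ : ℝ} (hκ : 0 < κ) : ∃ δ : ℝ, 0 < δ ∧ δ < 1/2 ∧ δ ≤ κ ∧
      (∀ j, ∀ l ∈ Icc (0:ℝ) 1, |F j (tl δ l) - F j l| ≤ κ) ∧
      ∃ n : ℕ, n ≠ 0 ∧ ∀ j, ∀ l ∈ Icc (0:ℝ) 1,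
        |∑ i : Fin (n+1), F j (tl δ ((i:ℕ) / (n:ℝ))) * bp n i l - F j l| ≤ κ := by
  have key : ∀ᶠ δ : ℝ in 𝓝[>] 0, ∀ j, ∀ l ∈ Icc (0:ℝ) 1, |F j (tl δ l) - F j l| ≤ κ / 2 := by
    refine eventually_all.2 fun j => ?_
    have huc := (isCompact_Icc (a := (0:ℝ)) (b := 1)).uniformContinuousOn_of_continuous
      (hF j).continuousOn
    rw [Metric.uniformContinuousOn_iff] at huc
    obtain ⟨η, hη, h⟩ := huc (κ/2) (by positivity)
    have : ∀ᶠ δ : ℝ in 𝓝[>] 0, δ < min η (1/2) :=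
      (eventually_lt_nhds (by positivity)).filter_mono nhdsWithin_le_nhds
    filter_upwards [this, self_mem_nhdsWithin] with δ h1 h2 l hl
    have h2' : 0 < δ := h2
    have hm := tl_mem h2' (h1.trans_le (min_le_right _ _)) hl
    have := h (tl δ l) ⟨by linarith [hm.1], by linarith [hm.2]⟩ l hl (by
      rw [Real.dist_eq]
      refine lt_of_le_of_lt ?_ (h1.trans_le (min_le_left _ _))
      have := hl.1; have := hl.2
      unfold tl
      rw [abs_le]; constructor <;> nlinarith)
    rw [Real.dist_eq] at this
    exact this.le
  have h1 : ∀ᶠ δ : ℝ in 𝓝[>] 0, δ < min κ (1/2) :=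
      (eventually_lt_nhds (by positivity)).filter_mono nhdsWithin_le_nhds
  obtain ⟨δ, hδ, h1, h0⟩ := (key.and (h1.and self_mem_nhdsWithin)).exists
  have h0' : 0 < δ := h0
  refine ⟨δ, h0', h1.trans_le (min_le_right _ _), (h1.trans_le (min_le_left _ _)).le,
    fun j l hl => (hδ j l hl).trans (by linarith), ?_⟩
  have hB : ∀ᶠ n : ℕ in atTop, ∀ j, ∀ l ∈ Icc (0:ℝ) 1,
      ‖∑ i : Fin (n+1), bp n i l • F j (tl δ ((i:ℕ) / (n:ℝ))) - F j (tl δ l)‖ ≤ κ/2 :=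
    eventually_all.2 fun j => bernstein_vec (fun l => F j (tl δ l))
      ((hF j).comp (by unfold tl; fun_prop)) (by positivity)
  obtain ⟨n, hn, hn0⟩ := (hB.and (eventually_ne_atTop 0)).exists
  refine ⟨n, hn0, fun j l hl => ?_⟩
  have e1 := hn j l hl
  have e2 := hδ j l hl
  simp only [smul_eq_mul, Real.norm_eq_abs] at e1
  have : ∑ i : Fin (n+1), F j (tl δ ((i:ℕ) / (n:ℝ))) * bp n i l
      = ∑ i : Fin (n+1), bp n i l * F j (tl δ ((i:ℕ) / (n:ℝ))) :=
    Finset.sum_congr rfl fun i _ => mul_comm _ _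
  rw [this]
  rw [abs_le] at *
  constructor <;> linarith [e1.1, e1.2, e2.1, e2.2]

/-- Perturbation of the quotient `g²/a`. -/
lemma quot_close {M r η g g' a a' : ℝ} (hr : 0 < r) (hg : |g| ≤ M) (hη1 : η ≤ 1)
    (hη2 : η ≤ r / 2) (hgg : |g' - g| ≤ η) (ha : r ≤ a) (haa : |a' - a| ≤ η) :
    g' ^ 2 / a' ≤ g ^ 2 / a + ((2 * M + 1) * 2 / r + M ^ 2 * 2 / r ^ 2) * η := by
  have h0 : 0 ≤ η := (abs_nonneg _).trans hgg
  have hM : 0 ≤ M := (abs_nonneg _).trans hg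
  rw [abs_le] at *
  have ha' : r / 2 ≤ a' := by linarith [haa.1]
  have hap : 0 < a' := by linarith
  have hp : 0 < a := by linarith
  have e1 : g' ^ 2 - g ^ 2 ≤ (2 * M + 1) * η := by
    have h3 : g' ^ 2 - g ^ 2 = (g' - g) * (g' + g) := by ring
    rw [h3]
    have : |(g' - g) * (g' + g)| ≤ η * (2 * M + 1) := by
      rw [abs_mul]
      refine mul_le_mul (abs_le.2 hgg) ?_ (abs_nonneg _) h0
      rw [abs_le]; constructor <;> linarith [hg.1, hg.2, hgg.1, hgg.2]
    linarith [le_abs_self ((g' - g) * (g' + g))]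
  have e2 : g' ^ 2 / a' - g ^ 2 / a' ≤ ((2 * M + 1) * 2 / r) * η := by
    rw [← sub_div]
    calc (g' ^ 2 - g ^ 2) / a' ≤ (2 * M + 1) * η / a' := by gcongr
      _ ≤ (2 * M + 1) * η / (r / 2) := by gcongr
      _ = _ := by field_simp
  have e3 : g ^ 2 / a' - g ^ 2 / a ≤ (M ^ 2 * 2 / r ^ 2) * η := by
    have : g ^ 2 / a' - g ^ 2 / a = g ^ 2 * (a - a') / (a' * a) := by field_simp
    rw [this]
    have hg2 : g ^ 2 ≤ M ^ 2 := by nlinarith [hg.1, hg.2]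
    calc g ^ 2 * (a - a') / (a' * a) ≤ M ^ 2 * η / (a' * a) := by
          refine div_le_div_of_nonneg_right ?_ (by positivity)
          calc g ^ 2 * (a - a') ≤ g ^ 2 * η := by
                apply mul_le_mul_of_nonneg_left _ (sq_nonneg g); linarith [haa.1]
            _ ≤ _ := by gcongr
      _ ≤ M ^ 2 * η / (r / 2 * r) := by gcongr
      _ = _ := by field_simp
  linarith

end

/-! ### Positive normalised families -/

section

lemma PF.add_const {L : (ℝ → ℝ) → ℝ × ℝ → ℝ} (hL : PF L) {F : ℝ → ℝ} (hF : Continuous F) (κ : ℝ) (z : ℝ × ℝ) :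
    L (fun l => F l + κ) z = L F z + κ := by
  have h := hL.sum ![F, fun _ => 1] (by
    intro i; fin_cases i
    · exact hF
    · exact continuous_const) ![1, κ] z
  simpa [Fin.sum_univ_two, hL.one] using h

lemma PF.le_add {L : (ℝ → ℝ) → ℝ × ℝ → ℝ} (hL : PF L) {F G : ℝ → ℝ} (hF : Continuous F) (hG : Continuous G)
    {κ : ℝ} (h : ∀ l ∈ Icc (0:ℝ) 1, |F l - G l| ≤ κ) (z : ℝ × ℝ) : L F z ≤ L G z + κ := by
  rw [← hL.add_const hG]
  exact hL.mono _ _ hF (by fun_prop) (fun l hl => by linarith [le_abs_self (F l - G l), h l hl]) z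

lemma PF.close {L : (ℝ → ℝ) → ℝ × ℝ → ℝ} (hL : PF L) {F G : ℝ → ℝ} (hF : Continuous F) (hG : Continuous G)
    {κ : ℝ} (h : ∀ l ∈ Icc (0:ℝ) 1, |F l - G l| ≤ κ) (z : ℝ × ℝ) : |L F z - L G z| ≤ κ := by
  rw [abs_le]
  constructor
  · linarith [hL.le_add hG hF (κ := κ) (fun l hl => by rw [abs_sub_comm]; exact h l hl) z]
  · linarith [hL.le_add hF hG h z]

lemma PF.mem01 {L : (ℝ → ℝ) → ℝ × ℝ → ℝ} (hL : PF L) (z : ℝ × ℝ) : L (fun l => l) z ∈ Icc (0:ℝ) 1 := by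
  constructor
  · rw [← hL.one 0 z]; exact hL.mono _ _ continuous_const continuous_id (fun l hl => hl.1) z
  · conv_rhs => rw [← hL.one 1 z]
    exact hL.mono _ _ continuous_id continuous_const (fun l hl => hl.2) z

lemma PF.abs_le {L : (ℝ → ℝ) → ℝ × ℝ → ℝ} (hL : PF L) {F : ℝ → ℝ} (hF : Continuous F) {C : ℝ}
    (h : ∀ l ∈ Icc (0:ℝ) 1, |F l| ≤ C) (z : ℝ × ℝ) : |L F z| ≤ C := by
  have := hL.close hF (continuous_const (y := (0:ℝ))) (κ := C) (fun l hl => by simpa using h l hl) z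
  simpa [hL.one] using this

/-- A uniformly small potential has small `x`-derivative in the negative norms. -/
lemma pair_px {w : ℝ × ℝ → ℝ} (hw : ContDiff ℝ 1 w) {e : ℝ} (he : ∀ z, |w z| ≤ e) {N : ℝ} (hN : 0 < N)
    (φ : STest N) (h1 : (∫ x, deriv φ.toFun x ^ 2) = 1) (t : ℝ) :
    ∫ x, pxF w (t, x) * φ.toFun x ≤ e * (N + 1/2) := by
  have he0 : 0 ≤ e := (abs_nonneg _).trans (he 0)
  have hd : ∀ x, HasDerivAt (fun x => w (t, x)) (pxF w (t, x)) x := by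
    intro x
    have h2 := (hw.differentiable one_ne_zero (t, x)).hasFDerivAt
    have h3 : HasDerivAt (fun x : ℝ => (t, x)) ((0:ℝ), (1:ℝ)) x :=
      (hasDerivAt_const x t).prodMk (hasDerivAt_id x)
    exact h2.comp_hasDerivAt x h3
  have hpc : Continuous fun x => pxF w (t, x) := by
    have := hw.continuous_fderiv one_ne_zero
    unfold pxF; fun_prop
  have hwc : Continuous fun x => w (t, x) := hw.continuous.comp (by fun_prop)
  have i1 : Integrable ((fun x => w (t, x)) * deriv φ.toFun) :=
    (hwc.mul φ.dcont).integrable_of_hasCompactSupport φ.dcpt.mul_left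
  have i2 : Integrable ((fun x => pxF w (t, x)) * φ.toFun) :=
    (hpc.mul φ.cont).integrable_of_hasCompactSupport φ.cpt.mul_left
  have i3 : Integrable ((fun x => w (t, x)) * φ.toFun) :=
    (hwc.mul φ.cont).integrable_of_hasCompactSupport φ.cpt.mul_left
  have := integral_mul_deriv_eq_deriv_mul_of_integrable (u := fun x => w (t, x)) (v := φ.toFun)
    (fun x _ => hd x) (fun x _ => (φ.diff x).hasDerivAt) i1 i2 i3
  have e1 : ∫ x, pxF w (t, x) * φ.toFun x = - ∫ x, w (t, x) * deriv φ.toFun x := by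
    rw [this]; simp
  rw [e1, ← integral_neg]
  have i4 : Integrable fun x => |deriv φ.toFun x| :=
    (φ.dcont.integrable_of_hasCompactSupport φ.dcpt).abs
  calc ∫ x, -(w (t, x) * deriv φ.toFun x) ≤ ∫ x, e * |deriv φ.toFun x| := by
        refine integral_mono i1.neg (i4.const_mul e) fun x => ?_
        calc -(w (t, x) * deriv φ.toFun x) ≤ |w (t, x) * deriv φ.toFun x| := neg_le_abs _
          _ = |w (t, x)| * |deriv φ.toFun x| := abs_mul _ _
          _ ≤ _ := by gcongr; exact he _
    _ = e * ∫ x, |deriv φ.toFun x| := integral_const_mul _ _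
    _ ≤ _ := by gcongr; exact φ.dl1 hN h1

lemma ev_small (g : ℝ → ℝ) (hg : Continuous g) {B : ℝ} (h : g 0 < B) : ∀ᶠ κ : ℝ in 𝓝[>] 0, g κ < B :=
  (hg.continuousAt.eventually (eventually_lt_nhds h)).filter_mono nhdsWithin_le_nhds

end

/-! ### From a smooth family to a function -/

section

lemma gradF_const_mul_add {b w : ℝ × ℝ → ℝ} (hb : ContDiff ℝ 1 b) (hw : ContDiff ℝ 1 w) (k : ℝ) (z : ℝ × ℝ) :
    ptF (fun y => k * b y + w y) z = k * ptF b z + ptF w z ∧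
    pxF (fun y => k * b y + w y) z = k * pxF b z + pxF w z := by
  have h1 := (hb.differentiable one_ne_zero z)
  have h2 := (hw.differentiable one_ne_zero z)
  have : fderiv ℝ (fun y => k * b y + w y) z = k • fderiv ℝ b z + fderiv ℝ w z := by
    rw [fderiv_fun_add (h1.const_mul k) h2, fderiv_const_mul h1]
  simp [ptF, pxF, this]

set_option maxHeartbeats 2000000 in
/-- The finite convex combinations of Dirac masses given by Bernstein's operators turn the smooth family `L` into the
mean of a finite gradient Young measure, which `young_realize` replaces by a genuine function `u`. -/
theorem exists_field {T : ℝ} {f σ : ℝ → ℝ} (hf : Continuous f) (hσ : Continuous σ)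
    (hσ1 : ∀ l ∈ Ioo (0:ℝ) 1, 0 < σ l) {L : (ℝ → ℝ) → ℝ × ℝ → ℝ} {E b H : ℝ × ℝ → ℝ} {c Lx r0 : ℝ}
    (hT : 0 < T) (hL : PF L) (hE : Continuous E) (hb : ContDiff ℝ 1 b) (hHi : Integrable H) (hH0 : ∀ z, 0 ≤ H z)
    (hc : c ∈ Ioo (0:ℝ) 1) (hLx : 0 < Lx) (hr0 : 0 < r0)
    (hout : ∀ z : ℝ × ℝ, z.1 ∈ Icc 0 T → Lx ≤ |z.2| → (∀ F : ℝ → ℝ, L F z = F c) ∧ E z = f c)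
    (hin : ∀ z : ℝ × ℝ, z.1 ∈ Icc 0 T → L (fun l => l) z = c + pxF b z ∧ E z = f c - ptF b z)
    (hcost : ∀ z, (E z - L f z) ^ 2 ≤ L σ z * H z) (hlow : ∀ z, r0 ≤ L σ z)
    {ι : Type} [Fintype ι] (ψ : ι → ℝ × ℝ → ℝ) (hψ : ∀ j, Integrable (ψ j)) (p : ι → ℝ → ℝ)
    (hp : ∀ j, Continuous (p j)) (N : ℕ) {ε : ℝ} (hε : 0 < ε) :
    ∃ (u B Ef : ℝ × ℝ → ℝ) (a δ : ℝ), ContDiff ℝ 1 u ∧ ContDiff ℝ 1 B ∧ Continuous Ef ∧ 0 < δ ∧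
      (∀ z, u z ∈ Icc δ (1 - δ)) ∧
      (∀ z : ℝ × ℝ, z.1 ∈ Icc 0 T → u z = a + pxF B z ∧ Ef z = f a - ptF B z) ∧
      (∀ z : ℝ × ℝ, z.1 ∈ Icc 0 T → Lx ≤ |z.2| → u z = a ∧ Ef z = f a) ∧
      (∫ z in Ioo 0 T ×ˢ Ioo (-Lx) Lx, (Ef z - f (u z)) ^ 2 / σ (u z)) ≤ (∫ z, H z) + ε ∧
      (∀ j, |∫ z in Icc 0 T ×ˢ univ, ψ j z * (p j (u z) - L (p j) z)| ≤ ε) ∧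
      ∀ t ∈ Icc 0 T, nb ((N:ℝ) + 1) ε fun x => u (t, x) - L (fun l => l) (t, x) := by
  set Q : Set (ℝ × ℝ) := Ioo 0 T ×ˢ Ioo (-Lx) Lx with hQdef
  set QC : Set (ℝ × ℝ) := Icc 0 T ×ˢ Icc (-Lx) Lx with hQCdef
  have hQC : IsCompact QC := isCompact_Icc.prod isCompact_Icc
  have hQo : IsOpen Q := isOpen_Ioo.prod isOpen_Ioo
  have hQm : MeasurableSet Q := hQo.measurableSet
  have hQQ : Q ⊆ QC := prod_mono Ioo_subset_Icc_self Ioo_subset_Icc_self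
  have hcl : closure Q = QC := by
    rw [hQdef, closure_prod_eq, closure_Ioo hT.ne, closure_Ioo (by linarith)]
  have hQb : Bornology.IsBounded Q := hQC.isBounded.subset hQQ
  have hQv : volume Q ≠ ⊤ := (hQb.measure_lt_top).ne
  obtain ⟨ME, hME⟩ := hQC.exists_bound_of_continuousOn (f := fun z => E z - f c) (by fun_prop)
  simp only [Real.norm_eq_abs] at hME
  have hME0 : 0 ≤ ME := (abs_nonneg _).trans (hME (0, 0) ⟨⟨le_rfl, hT.le⟩, by constructor <;> simp [hLx.le]⟩)
  obtain ⟨Cf, hCf0, hCf⟩ := exists_bd hf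
  obtain ⟨Cσ, hCσ0, hCσ⟩ := exists_bd hσ
  set M := ME + |f c| + Cf with hM
  have hgM : ∀ z ∈ QC, |E z - L f z| ≤ M := by
    intro z hz
    have h1 := hME z hz
    have h2 := hL.abs_le hf hCf z
    have h3 := le_abs_self (f c)
    have h4 := neg_abs_le (f c)
    rw [_root_.abs_le] at *
    constructor <;> linarith [h1.1, h1.2, h2.1, h2.2]
  set CC := (2 * M + 1) * 2 / r0 + M ^ 2 * 2 / r0 ^ 2 with hCC
  set V := volume.real Q with hV
  obtain ⟨κ, k1, k2, k3, k4, hκ0⟩ : ∃ κ : ℝ, κ * (2 * ME + 2) < min 1 (r0 / 2) ∧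
      CC * (κ * (2 * ME + 2)) * V < ε / 2 ∧ (∀ j, κ * ∫ z, |ψ j z| < ε / 4) ∧
      κ * (2 * ((N:ℝ) + 1) * Real.sqrt (2 * ((N:ℝ) + 1))) < ε / 2 ∧ 0 < κ := by
    have e1 := ev_small (fun κ => κ * (2 * ME + 2)) (by fun_prop) (B := min 1 (r0 / 2)) (by simp [hr0])
    have e2 := ev_small (fun κ => CC * (κ * (2 * ME + 2)) * V) (by fun_prop) (B := ε / 2) (by simp [hε])
    have e3 : ∀ᶠ κ : ℝ in 𝓝[>] 0, ∀ j, κ * ∫ z, |ψ j z| < ε / 4 := eventually_all.2 fun j =>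
      ev_small (fun κ => κ * ∫ z, |ψ j z|) (by fun_prop) (by simp [hε])
    have e4 := ev_small (fun κ => κ * (2 * ((N:ℝ) + 1) * Real.sqrt (2 * ((N:ℝ) + 1)))) (by fun_prop)
      (B := ε / 2) (by simp [hε])
    have e5 : ∀ᶠ κ : ℝ in 𝓝[>] 0, 0 < κ := self_mem_nhdsWithin
    exact (e1.and (e2.and (e3.and (e4.and e5)))).exists
  obtain ⟨δ, hδ0, hδ1, hδκ, hδF, n, hn0, hnF⟩ := exists_bernstein
    (J := Option (Option ι)) (fun o => o.elim f fun o' => o'.elim σ p)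
    (by rintro (_ | _ | j); exacts [hf, hσ, hp j]) hκ0
  -- the weights and the atoms
  set lam : Fin (n+1) → ℝ := fun i => tl δ ((i:ℕ) / (n:ℝ)) with hlamdef
  have hlam : ∀ i, lam i ∈ Icc δ (1 - δ) := by
    intro i
    refine tl_mem hδ0 hδ1 ⟨by positivity, ?_⟩
    have hn' : (0:ℝ) < n := by exact_mod_cast Nat.pos_of_ne_zero hn0
    rw [div_le_one hn']
    exact_mod_cast Nat.lt_succ_iff.1 i.2
  have hlam01 : ∀ i, lam i ∈ Icc (0:ℝ) 1 := fun i => ⟨by linarith [(hlam i).1], by linarith [(hlam i).2]⟩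
  set θ : Fin (n+1) → ℝ × ℝ → ℝ := fun i => L (bp n i) with hθdef
  have hθc : ∀ i, Continuous (θ i) := fun i => (hL.smooth _ (bp_cont n i)).continuous
  have hθ0 : ∀ i z, 0 ≤ θ i z := fun i z => by
    rw [← hL.one 0 z]
    exact hL.mono _ _ continuous_const (bp_cont n i) (fun l hl => bp_nonneg n i hl) z
  have hθs : ∀ k : Fin (n+1) → ℝ, ∀ z, ∑ i, k i * θ i z = L (fun l => ∑ i, k i * bp n i l) z := fun k z =>
    (hL.sum (fun i : Fin (n+1) => bp n i) (fun i => bp_cont n i) k z).symm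
  have hθ1 : ∀ z, ∑ i, θ i z = 1 := fun z => by
    have := hθs (fun _ => 1) z
    simp only [one_mul, bp_sum, hL.one] at this
    exact this
  have happ : ∀ F : ℝ → ℝ, Continuous F → (∀ l ∈ Icc (0:ℝ) 1, |∑ i, F (lam i) * bp n i l - F l| ≤ κ) → ∀ z,
      |∑ i, F (lam i) * θ i z - L F z| ≤ κ := fun F hF h z => by
    rw [hθs]
    exact hL.close (by have := fun i => bp_cont n i; fun_prop) hF h z
  have hmean : ∀ z, ∑ i, lam i * θ i z = tl δ (L (fun l => l) z) := fun z => by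
    have h1 : ∑ i : Fin (n+1), ((i:ℕ) / (n:ℝ)) * θ i z = L (fun l => l) z := by
      rw [hθs]
      congr 1
      funext l
      conv_rhs => rw [← bp_mean hn0 l]
      exact Finset.sum_congr rfl fun i _ => mul_comm _ _
    calc ∑ i, lam i * θ i z = δ * ∑ i, θ i z + (1 - 2 * δ) * ∑ i : Fin (n+1), ((i:ℕ) / (n:ℝ)) * θ i z := by
          rw [Finset.mul_sum, Finset.mul_sum, ← Finset.sum_add_distrib]
          exact Finset.sum_congr rfl fun i _ => by simp only [hlamdef, tl]; ring
      _ = _ := by rw [hθ1, h1]; simp [tl]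
  set fn : ℝ × ℝ → ℝ := fun z => ∑ i, f (lam i) * θ i z with hfn
  set an : ℝ × ℝ → ℝ := fun z => ∑ i, σ (lam i) * θ i z with han
  have hfnc : Continuous fn := continuous_finsetSum _ fun i _ => continuous_const.mul (hθc i)
  have hanc : Continuous an := continuous_finsetSum _ fun i _ => continuous_const.mul (hθc i)
  have hfnL : ∀ z, |fn z - L f z| ≤ κ := happ f hf (hnF none)
  have hanL : ∀ z, |an z - L σ z| ≤ κ := happ σ hσ (hnF (some none))
  have hpL : ∀ j z, |∑ i, p j (lam i) * θ i z - L (p j) z| ≤ κ := fun j => happ (p j) (hp j) (hnF (some (some j)))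
  have hκη : κ ≤ κ * (2 * ME + 2) := by nlinarith
  have hanpos : ∀ z, 0 < an z := fun z => by
    have h1 := (_root_.abs_le.1 (hanL z)).1
    have h2 := hlow z
    have h3 := k1.trans_le (min_le_right _ _)
    linarith
  set a := tl δ c with hadef
  set E4 : ℝ × ℝ → ℝ := fun z => (1 - 2 * δ) * (E z - f c) + f a with hE4
  have hE4c : Continuous E4 := by fun_prop
  have hgg : ∀ z ∈ QC, |(E4 z - fn z) - (E z - L f z)| ≤ κ * (2 * ME + 2) := fun z hz => by
    have e : (E4 z - fn z) - (E z - L f z) = -(2 * δ) * (E z - f c) + (f a - f c) - (fn z - L f z) := by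
      simp only [hE4]; ring
    have h1 : |-(2 * δ) * (E z - f c)| ≤ κ * (2 * ME) := by
      rw [abs_mul, abs_neg, abs_of_pos (by positivity : 0 < 2 * δ)]
      calc 2 * δ * |E z - f c| ≤ 2 * κ * ME := by gcongr; exact hME z hz
        _ = _ := by ring
    have h2 : |f a - f c| ≤ κ := hδF none c ⟨hc.1.le, hc.2.le⟩
    have h3 := hfnL z
    rw [e]
    rw [_root_.abs_le] at *
    constructor <;> linarith [h1.1, h1.2, h2.1, h2.2, h3.1, h3.2]
  -- the fluxes `f(λᵢ) + σ(λᵢ) P` average to `E4`, at the averaged cost `(E4 - fn)² / an`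
  set P : ℝ × ℝ → ℝ := fun z => (E4 z - fn z) / an z with hP
  have hPc : Continuous P := (hE4c.sub hfnc).div hanc fun z => (hanpos z).ne'
  obtain ⟨MP, hMP⟩ := hQC.exists_bound_of_continuousOn hPc.continuousOn
  simp only [Real.norm_eq_abs] at hMP
  set ξ : Fin (n+1) → ℝ × ℝ → ℝ × ℝ := fun i z => (-(f (lam i) + σ (lam i) * P z), lam i) with hξdef
  have hξc : ∀ i, Continuous (ξ i) := fun i => by fun_prop
  set K : Set (ℝ × ℝ) := Icc (-(Cf + Cσ * MP)) (Cf + Cσ * MP) ×ˢ Icc δ (1 - δ) with hK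
  have hξK : ∀ i, ∀ z ∈ Q, ξ i z ∈ K := by
    intro i z hz
    refine ⟨_root_.abs_le.1 ?_, hlam i⟩
    simp only [hξdef, abs_neg]
    refine (abs_add_le _ _).trans (add_le_add (hCf _ (hlam01 i)) ?_)
    rw [abs_mul]
    exact mul_le_mul (hCσ _ (hlam01 i)) (hMP z (hQQ hz)) (abs_nonneg _) hCσ0
  have hξs : ∀ z, ∑ i, θ i z • ξ i z = (-E4 z, tl δ (L (fun l => l) z)) := fun z => by
    refine Prod.ext ?_ ?_
    · rw [Prod.fst_sum]
      simp only [hξdef, Prod.smul_fst, smul_eq_mul]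
      have h1 : ∑ i, θ i z * -(f (lam i) + σ (lam i) * P z) = -(fn z + an z * P z) := by
        simp only [hfn, han]
        rw [Finset.sum_mul, ← Finset.sum_add_distrib, ← Finset.sum_neg_distrib]
        exact Finset.sum_congr rfl fun i _ => by ring
      rw [h1, show an z * P z = E4 z - fn z from mul_div_cancel₀ _ (hanpos z).ne']
      ring
    · rw [Prod.snd_sum]
      simp only [hξdef, Prod.smul_snd, smul_eq_mul]
      rw [← hmean]
      exact Finset.sum_congr rfl fun i _ => mul_comm _ _
  -- the tests: the cost density and the given ones
  set cδ : ℝ → ℝ := fun l => max (δ/2) (min (1 - δ/2) l) with hcδ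
  have hcδm : ∀ l, cδ l ∈ Ioo (0:ℝ) 1 := fun l =>
    ⟨lt_of_lt_of_le (by linarith) (le_max_left _ _),
      lt_of_le_of_lt (max_le (by linarith) (min_le_left _ _)) (by linarith : 1 - δ/2 < 1)⟩
  have hcδe : ∀ l ∈ Icc (δ/2) (1 - δ/2), cδ l = l := fun l hl => by simp [hcδ, hl.1, hl.2]
  set Fc : ℝ × ℝ → ℝ := fun y => (y.1 + f y.2) ^ 2 / σ (cδ y.2) with hFc
  have hFcc : Continuous Fc := by
    refine Continuous.div (by fun_prop) (by fun_prop) fun y => (hσ1 _ (hcδm _)).ne'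
  obtain ⟨ε', hε'0, hε'1, hε'2, hε'3⟩ : ∃ ε' : ℝ, 0 < ε' ∧ ε' ≤ δ/2 ∧ ε' ≤ ε/4 ∧ ε' * ((N:ℝ) + 1 + 1/2) < ε / 2 := by
    have e1 := ev_small (fun κ => κ) (by fun_prop) (B := min (δ/2) (ε/4)) (by positivity)
    have e2 := ev_small (fun κ => κ * ((N:ℝ) + 1 + 1/2)) (by fun_prop) (B := ε / 2) (by simp [hε])
    have e3 : ∀ᶠ κ : ℝ in 𝓝[>] 0, 0 < κ := self_mem_nhdsWithin
    obtain ⟨κ', h1, h2, h3⟩ := (e1.and (e2.and e3)).exists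
    exact ⟨κ', h3, (h1.trans_le (min_le_left _ _)).le, (h1.trans_le (min_le_right _ _)).le, h2⟩
  obtain ⟨w, hw2, hwc, hwQ, hwe, hwK, hwF⟩ := young_realize hQo hQb ((convex_Icc _ _).prod (convex_Icc _ _) : Convex ℝ K)
    ((Metric.isBounded_Icc _ _).prod (Metric.isBounded_Icc _ _)) θ ξ (fun i => (hθc i).continuousOn)
    (fun i => (hξc i).continuousOn) (fun i z _ => hθ0 i z) (fun z _ => hθ1 z) hξK
    (ι := Option ι) (fun o => o.elim (Q.indicator fun _ => 1) ψ) (fun o => o.elim Fc fun j y => p j y.2)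
    (by
      rintro (_ | j)
      · exact (integrable_indicator_iff hQm).2 (integrableOn_const hQv)
      · exact hψ j)
    (by
      rintro (_ | j)
      · exact hFcc
      · exact (hp j).comp continuous_snd) hε'0
  have hw1 : ContDiff ℝ 1 w := hw2.of_le (by norm_num)
  have hwz : ∀ z, z ∉ Q → ptF w z = 0 ∧ pxF w z = 0 := fun z hz => by
    have := gradF_zero_of_notMem (u := w) (z := z) fun h => hz (hwQ h)
    simpa [gradF, Prod.ext_iff] using this
  set u : ℝ × ℝ → ℝ := fun z => tl δ (L (fun l => l) z) + pxF w z with hu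
  set Ef : ℝ × ℝ → ℝ := fun z => E4 z - ptF w z with hEf
  have hG : ∀ z, ∑ i, θ i z • ξ i z + gradF w z = (-Ef z, u z) := fun z => by
    rw [hξs]
    simp only [gradF, hEf, hu, Prod.mk_add_mk]
    congr 1; ring
  simp only [hG] at hwK hwF
  have hpxw : ContDiff ℝ 1 (pxF w) := by
    have h1 : ContDiff ℝ 1 (fderiv ℝ w) := hw2.fderiv_right (by norm_num)
    exact h1.clm_apply contDiff_const
  have huC : ContDiff ℝ 1 u := by
    have := hL.smooth _ continuous_id
    have h2 : ContDiff ℝ 1 fun z => tl δ (L (fun l => l) z) := by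
      unfold tl
      exact contDiff_const.add (contDiff_const.mul this)
    exact h2.add hpxw
  have hptw : Continuous (ptF w) := by
    have := hw1.continuous_fderiv one_ne_zero
    unfold ptF; fun_prop
  have hEfc : Continuous Ef := hE4c.sub hptw
  have hmm : ∀ z, tl δ (L (fun l => l) z) ∈ Icc δ (1 - δ) := fun z => tl_mem hδ0 hδ1 (hL.mem01 z)
  have hum : ∀ z, u z ∈ Icc (δ/2) (1 - δ/2) := fun z => by
    by_cases hz : z ∈ Q
    · obtain ⟨k, hk, hkk⟩ := hwK z hz
      have h1 : |u z - k.2| ≤ ε' := (norm_snd_le ((-Ef z, u z) - k)).trans hkk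
      have h2 := hk.2
      rw [_root_.abs_le] at h1
      exact ⟨by linarith [h2.1, h1.1], by linarith [h2.2, h1.2]⟩
    · have h2 := hmm z
      simp only [hu, (hwz z hz).2, add_zero]
      exact ⟨by linarith [h2.1], by linarith [h2.2]⟩
  have houtu : ∀ z : ℝ × ℝ, z.1 ∈ Icc 0 T → Lx ≤ |z.2| → u z = a ∧ Ef z = f a := fun z hz hx => by
    have hzQ : z ∉ Q := fun h => by
      have := abs_lt.2 h.2
      linarith
    have h1 := hout z hz hx
    constructor
    · simp only [hu, (hwz z hzQ).2, h1.1, add_zero, hadef]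
    · simp only [hEf, hE4, (hwz z hzQ).1, h1.2]; ring
  refine ⟨u, fun y => (1 - 2 * δ) * b y + w y, Ef, a, δ/2, huC, (contDiff_const.mul hb).add hw1, hEfc, by positivity,
    hum, ?_, houtu, ?_, ?_, ?_⟩
  · intro z hz
    have h1 := gradF_const_mul_add hb hw1 (1 - 2 * δ) z
    have h2 := hin z hz
    rw [h1.1, h1.2]
    constructor
    · simp only [hu, h2.1, hadef, tl]; ring
    · simp only [hEf, hE4, h2.2]; ring
  · have h0 := hwF none
    simp only [Option.elim] at h0
    have hE1 : ∫ z in Q, (Ef z - f (u z)) ^ 2 / σ (u z) =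
        ∫ z in Q, Q.indicator (fun _ => (1:ℝ)) z * Fc (-Ef z, u z) := by
      refine setIntegral_congr_fun hQm fun z hz => ?_
      simp only [indicator_of_mem hz, one_mul, hFc]
      rw [hcδe _ (hum z)]; congr 1; ring
    have hE2 : ∫ z in Q, Q.indicator (fun _ => (1:ℝ)) z * ∑ i, θ i z * Fc (ξ i z) =
        ∫ z in Q, (E4 z - fn z) ^ 2 / an z := by
      refine setIntegral_congr_fun hQm fun z hz => ?_
      simp only [indicator_of_mem hz, one_mul]
      have h1 : ∀ i, Fc (ξ i z) = σ (lam i) * P z ^ 2 := fun i => by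
        simp only [hFc, hξdef]
        rw [hcδe _ ⟨by linarith [(hlam i).1], by linarith [(hlam i).2]⟩]
        have := hσ1 (lam i) ⟨by linarith [(hlam i).1], by linarith [(hlam i).2]⟩
        field_simp; ring
      simp only [h1]
      calc ∑ i, θ i z * (σ (lam i) * P z ^ 2) = an z * P z ^ 2 := by
            simp only [han]
            rw [Finset.sum_mul]
            exact Finset.sum_congr rfl fun i _ => by ring
        _ = _ := by
            have := hanpos z
            simp only [hP]
            field_simp
    have hE3 : ∫ z in Q, (E4 z - fn z) ^ 2 / an z ≤ ∫ z in Q, (H z + CC * (κ * (2 * ME + 2))) := by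
      have hcont : Continuous fun z => (E4 z - fn z) ^ 2 / an z :=
        ((hE4c.sub hfnc).pow 2).div hanc fun z => (hanpos z).ne'
      refine setIntegral_mono_on ((hcont.continuousOn.integrableOn_compact hQC).mono_set hQQ)
        (hHi.integrableOn.add (integrableOn_const hQv)) hQm fun z hz => ?_
      have h1 := quot_close hr0 (hgM z (hQQ hz)) (k1.le.trans (min_le_left _ _)) (k1.le.trans (min_le_right _ _))
        (hgg z (hQQ hz)) (hlow z) ((hanL z).trans hκη)
      have h2 : (E z - L f z) ^ 2 / L σ z ≤ H z := by
        rw [div_le_iff₀ (hr0.trans_le (hlow z))]; linarith [hcost z]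
      linarith
    rw [integral_add hHi.integrableOn (integrableOn_const hQv), setIntegral_const, smul_eq_mul] at hE3
    have hE5 : ∫ z in Q, H z ≤ ∫ z, H z := setIntegral_le_integral hHi (ae_of_all _ hH0)
    rw [← hE1, hE2] at h0
    have h2 := (_root_.abs_le.1 h0).2
    have h3 : V * (CC * (κ * (2 * ME + 2))) < ε / 2 := by linarith [k2]
    linarith
  · intro j
    have hSS : (Icc 0 T ×ˢ univ : Set (ℝ × ℝ)) =ᵐ[volume] (Ioo 0 T ×ˢ univ : Set (ℝ × ℝ)) := by
      rw [Measure.volume_eq_prod]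
      exact Measure.set_prod_ae_eq Ioo_ae_eq_Icc.symm (ae_eq_refl _)
    rw [setIntegral_congr_set hSS]
    set S' : Set (ℝ × ℝ) := Ioo 0 T ×ˢ univ
    have hS' : MeasurableSet S' := measurableSet_Ioo.prod MeasurableSet.univ
    have hQS : Q ⊆ S' := prod_mono le_rfl (subset_univ _)
    obtain ⟨C, hC0, hC⟩ := exists_bd (hp j)
    have hLc : Continuous (L (p j)) := (hL.smooth _ (hp j)).continuous
    have hu01 : ∀ z, u z ∈ Icc (0:ℝ) 1 := fun z => ⟨by linarith [(hum z).1], by linarith [(hum z).2]⟩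
    have j1 : Integrable fun z => ψ j z * p j (u z) :=
      (hψ j).mul_bdd (c := C) ((hp j).comp huC.continuous).aestronglyMeasurable
        (ae_of_all _ fun z => hC _ (hu01 z))
    have j2 : Integrable fun z => ψ j z * L (p j) z :=
      (hψ j).mul_bdd (c := C) hLc.aestronglyMeasurable (ae_of_all _ fun z => hL.abs_le (hp j) hC z)
    have hac : Continuous fun z => ∑ i, p j (lam i) * θ i z := by fun_prop
    have hcomm : ∀ z, ∑ i, θ i z * p j (lam i) = ∑ i, p j (lam i) * θ i z := fun z =>
      Finset.sum_congr rfl fun i _ => mul_comm _ _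
    have j3 : Integrable fun z => ψ j z * ∑ i, p j (lam i) * θ i z :=
      (hψ j).mul_bdd (c := C + κ) hac.aestronglyMeasurable (ae_of_all _ fun z => by
        have h1 := hL.abs_le (hp j) hC z
        have h2 := hpL j z
        rw [Real.norm_eq_abs]
        rw [_root_.abs_le] at *
        constructor <;> linarith [h1.1, h1.2, h2.1, h2.2])
    have hsm : ∀ (A : Set (ℝ × ℝ)) (q : ℝ × ℝ → ℝ), MeasurableSet A → (∀ z ∈ A, |q z| ≤ κ) →
        |∫ z in A, ψ j z * q z| ≤ ε / 4 := fun A q hA hq => by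
      have h1 : ‖∫ z in A, ψ j z * q z‖ ≤ ∫ z in A, κ * |ψ j z| := by
        refine norm_integral_le_of_norm_le ((hψ j).abs.const_mul κ).integrableOn ?_
        refine (ae_restrict_iff' hA).2 (ae_of_all _ fun z hz => ?_)
        rw [Real.norm_eq_abs, abs_mul, mul_comm]
        exact mul_le_mul_of_nonneg_right (hq z hz) (abs_nonneg _)
      have h2 : ∫ z in A, κ * |ψ j z| ≤ ∫ z, κ * |ψ j z| :=
        setIntegral_le_integral ((hψ j).abs.const_mul κ) (ae_of_all _ fun z => by positivity)
      have h3 : ∫ z, κ * |ψ j z| = κ * ∫ z, |ψ j z| := integral_const_mul _ _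
      rw [h3] at h2
      exact h1.trans (h2.trans (k3 j).le)
    have h0 := hwF (some j)
    simp only [Option.elim] at h0
    have hY : |(∫ z in Q, ψ j z * p j (u z)) - ∫ z in Q, ψ j z * ∑ i, p j (lam i) * θ i z| ≤ ε' := by
      have : ∫ z in Q, ψ j z * ∑ i, p j (lam i) * θ i z = ∫ z in Q, ψ j z * ∑ i, θ i z * p j ((ξ i z).2) := by
        simp only [hξdef, hcomm]
      rw [this]; exact h0
    have hA := hsm Q (fun z => (∑ i, p j (lam i) * θ i z) - L (p j) z) hQm fun z _ => hpL j z
    have hB := hsm (S' \ Q) (fun z => p j (u z) - L (p j) z) (hS'.diff hQm) fun z hz => by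
      have hz1 : z.1 ∈ Ioo 0 T := hz.1.1
      have hz2 : Lx ≤ |z.2| := by
        by_contra hh
        push Not at hh
        exact hz.2 ⟨hz1, abs_lt.1 hh⟩
      have hz3 : z.1 ∈ Icc 0 T := Ioo_subset_Icc_self hz1
      rw [(houtu z hz3 hz2).1, (hout z hz3 hz2).1]
      exact hδF (some (some j)) c ⟨hc.1.le, hc.2.le⟩
    have j4 : Integrable fun z => ψ j z * (p j (u z) - L (p j) z) :=
      (j1.sub j2).congr (ae_of_all _ fun z => by simp only [Pi.sub_apply]; ring)
    have hD := setIntegral_sdiff (μ := volume) (f := fun z => ψ j z * (p j (u z) - L (p j) z)) hQm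
      j4.integrableOn hQS
    have e1 : ∫ z in Q, ψ j z * (p j (u z) - L (p j) z) = (∫ z in Q, ψ j z * p j (u z)) - ∫ z in Q, ψ j z * L (p j) z := by
      rw [← integral_sub j1.integrableOn j2.integrableOn]
      exact integral_congr_ae (ae_of_all _ fun z => by simp only; ring)
    have e2 : ∫ z in Q, ψ j z * ((∑ i, p j (lam i) * θ i z) - L (p j) z) =
        (∫ z in Q, ψ j z * ∑ i, p j (lam i) * θ i z) - ∫ z in Q, ψ j z * L (p j) z := by
      rw [← integral_sub j3.integrableOn j2.integrableOn]
      exact integral_congr_ae (ae_of_all _ fun z => by simp only; ring)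
    rw [e2] at hA
    rw [hD, e1] at hB
    rw [_root_.abs_le] at *
    constructor <;> linarith [hA.1, hA.2, hB.1, hB.2, hY.1, hY.2]
  · intro t ht φ hφ
    have hN1 : (0:ℝ) < (N:ℝ) + 1 := by positivity
    have hLc : Continuous (L fun l => l) := (hL.smooth _ continuous_id).continuous
    have hc1 : Continuous fun x : ℝ => tl δ (L (fun l => l) (t, x)) - L (fun l => l) (t, x) := by
      unfold tl; fun_prop
    have hb1 : ∀ x : ℝ, |tl δ (L (fun l => l) (t, x)) - L (fun l => l) (t, x)| ≤ κ := fun x => by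
      have h := hL.mem01 (t, x)
      have h1 := h.1
      have h2 := h.2
      unfold tl
      rw [_root_.abs_le]; constructor <;> nlinarith
    have hc2 : Continuous fun x : ℝ => pxF w (t, x) := hpxw.continuous.comp (by fun_prop)
    have i1 : Integrable fun x => (tl δ (L (fun l => l) (t, x)) - L (fun l => l) (t, x)) * φ.toFun x :=
      φ.int_mul hc1.measurable hb1
    have i2 : Integrable fun x => pxF w (t, x) * φ.toFun x :=
      (hc2.mul φ.cont).integrable_of_hasCompactSupport φ.cpt.mul_left
    have e : ∫ x, (u (t, x) - L (fun l => l) (t, x)) * φ.toFun x =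
        (∫ x, (tl δ (L (fun l => l) (t, x)) - L (fun l => l) (t, x)) * φ.toFun x) +
          ∫ x, pxF w (t, x) * φ.toFun x := by
      rw [← integral_add i1 i2]
      exact integral_congr_ae (ae_of_all _ fun x => by simp only [hu]; ring)
    rw [e]
    have h1 := (le_abs_self _).trans (φ.pair_le hN1 hφ hc1.measurable hb1)
    have h2 := pair_px hw1 hwe hN1 φ hφ t
    linarith

end

/-! ### Young measures concentrated on a function -/

section

lemma TTest.fderiv_dir {T : ℝ} (φ : TTest T) (v w z : ℝ × ℝ) :
    fderiv ℝ (fun y => fderiv ℝ φ.toFun y v) z w = fderiv ℝ (fderiv ℝ φ.toFun) z w v := by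
  have h1 : ContDiff ℝ 1 (fderiv ℝ φ.toFun) := φ.smooth.fderiv_right (by norm_cast)
  have h2 : DifferentiableAt ℝ (fderiv ℝ φ.toFun) z := h1.differentiable one_ne_zero z
  have h3 := h2.hasFDerivAt.clm_apply (hasFDerivAt_const v z)
  rw [h3.fderiv]
  simp

/-- A gradient is curl free in the weak sense. -/
lemma curl_free {T : ℝ} {B : ℝ × ℝ → ℝ} (hB : ContDiff ℝ 1 B) (φ : TTest T) :
    ∫ z, pxF B z * ptF φ.toFun z = ∫ z, ptF B z * pxF φ.toFun z := by
  have hBf := hB.continuous_fderiv one_ne_zero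
  have hφ1 : ContDiff ℝ 1 (fderiv ℝ φ.toFun) := φ.smooth.fderiv_right (by norm_cast)
  have hp : ∀ v w : ℝ × ℝ, ∫ z, B z * fderiv ℝ (fun y => fderiv ℝ φ.toFun y v) z w =
      - ∫ z, fderiv ℝ B z w * fderiv ℝ φ.toFun z v := by
    intro v w
    have hg1 : ContDiff ℝ 1 (fun y => fderiv ℝ φ.toFun y v) := hφ1.clm_apply contDiff_const
    have hgc : HasCompactSupport (fun y => fderiv ℝ φ.toFun y v) :=
      (φ.cpt.fderiv (𝕜 := ℝ)).comp_left (g := fun L : ℝ × ℝ →L[ℝ] ℝ => L v) (by simp)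
    have hgf := hg1.continuous_fderiv one_ne_zero
    have hgdc : HasCompactSupport (fun z => fderiv ℝ (fun y => fderiv ℝ φ.toFun y v) z w) :=
      (hgc.fderiv (𝕜 := ℝ)).comp_left (g := fun L : ℝ × ℝ →L[ℝ] ℝ => L w) (by simp)
    have hBc := hB.continuous
    have hgcont := hg1.continuous
    refine integral_mul_fderiv_eq_neg_fderiv_mul_of_integrable ?_ ?_ ?_ ?_ ?_
    · exact ((hBf.clm_apply continuous_const).mul hgcont).integrable_of_hasCompactSupport hgc.mul_left
    · exact (hBc.mul (hgf.clm_apply continuous_const)).integrable_of_hasCompactSupport hgdc.mul_left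
    · exact (hBc.mul hgcont).integrable_of_hasCompactSupport hgc.mul_left
    · exact fun z _ => hB.differentiable one_ne_zero z
    · exact fun z _ => hg1.differentiable one_ne_zero z
  have h1 := hp (1, 0) (0, 1)
  have h2 := hp (0, 1) (1, 0)
  have h3 : ∀ z, fderiv ℝ (fun y => fderiv ℝ φ.toFun y (1, 0)) z (0, 1) =
      fderiv ℝ (fun y => fderiv ℝ φ.toFun y (0, 1)) z (1, 0) := fun z => by
    rw [φ.fderiv_dir, φ.fderiv_dir]
    exact (φ.smooth.contDiffAt.isSymmSndFDerivAt (by simp; norm_cast)) (0, 1) (1, 0)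
  simp only [h3] at h1
  simp only [ptF, pxF]
  linarith

/-- The Young measure `δ_u` of a continuous function with values in `[0,1]`. -/
def YM.ofFun (T : ℝ) (u : ℝ × ℝ → ℝ) (hu : Continuous u) (h01 : ∀ z, u z ∈ Icc (0:ℝ) 1) : YM T where
  m z := Measure.dirac (u z)
  prob z := inferInstance
  supp01 z := by
    rw [Measure.dirac_apply' _ measurableSet_Icc.compl]
    simp only [indicator_apply_eq_zero, mem_compl_iff]
    exact fun h => absurd (h01 z) h
  meas F hF := by
    simp only [integral_dirac]
    exact (hF.comp hu).measurable
  bar_mem z := by simpa using h01 z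
  bar_cont t₀ ht₀ δ hδ := by
    simp only [integral_dirac]
    obtain ⟨n, hn⟩ := exists_pow_lt_of_lt_one (half_pos hδ) (by norm_num : (2:ℝ)⁻¹ < 1)
    have hn' : (2:ℝ)⁻¹ ^ (n + 1) < δ / 2 := lt_of_le_of_lt
      (pow_le_pow_of_le_one (by norm_num) (by norm_num) (Nat.le_succ n)) hn
    set N : ℝ := (n:ℝ) + 1 with hN
    have hN0 : 0 < N := by positivity
    set A := 2 * N * Real.sqrt (2 * N) with hA
    have hA0 : 0 ≤ A := by positivity
    set η := δ / (4 * (A + 1)) with hη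
    have hη0 : 0 < η := by positivity
    have huc := (isCompact_Icc.prod isCompact_Icc :
      IsCompact (Icc (0:ℝ) T ×ˢ Icc (-N) N)).uniformContinuousOn_of_continuous hu.continuousOn
    rw [Metric.uniformContinuousOn_iff] at huc
    obtain ⟨ζ, hζ, h⟩ := huc η hη0
    refine ⟨ζ, hζ, fun t ht htt => ?_⟩
    have hnb : nb N (η * A) (fun x => u (t, x) - u (t₀, x)) := by
      intro φ hφ
      have e : ∫ x, (u (t, x) - u (t₀, x)) * φ.toFun x =
          ∫ x, (Ioo (-N) N).indicator (fun x => u (t, x) - u (t₀, x)) x * φ.toFun x := by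
        refine integral_congr_ae (ae_of_all _ fun x => ?_)
        by_cases hx : x ∈ Ioo (-N) N
        · simp only [indicator_of_mem hx]
        · simp only [φ.zero hx, mul_zero]
      rw [e]
      have hm : Measurable fun x => u (t, x) - u (t₀, x) := by
        have : Continuous fun x => u (t, x) - u (t₀, x) := by fun_prop
        exact this.measurable
      refine (le_abs_self _).trans (φ.pair_le hN0 hφ (hm.indicator measurableSet_Ioo) fun x => ?_)
      by_cases hx : x ∈ Ioo (-N) N
      · rw [indicator_of_mem hx]
        have := h (t, x) ⟨ht, Ioo_subset_Icc_self hx⟩ (t₀, x) ⟨ht₀, Ioo_subset_Icc_self hx⟩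
          (by simpa [Prod.dist_eq, Real.dist_eq, hζ] using htt)
        rw [Real.dist_eq] at this
        exact this.le
      · rw [indicator_of_notMem hx]; simpa using hη0.le
    have h1 := dU_le (by positivity) n hnb
    have h2 : η * A < δ / 2 := by
      rw [hη, div_mul_eq_mul_div, div_lt_iff₀ (by positivity)]
      nlinarith
    linarith

lemma YM.ofFun_mom {T : ℝ} {u : ℝ × ℝ → ℝ} (hu : Continuous u) (h01 : ∀ z, u z ∈ Icc (0:ℝ) 1) (F : ℝ → ℝ) (z : ℝ × ℝ) :
    (YM.ofFun T u hu h01).mom F z = F (u z) := by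
  simp [YM.mom, YM.ofFun]

/-- The cost of `δ_u` when `(u, E)` derives from a potential. -/
theorem calI_ofFun_le {T : ℝ} {f σ : ℝ → ℝ} (hf : Continuous f) (hσ : Continuous σ)
    {u B Ef : ℝ × ℝ → ℝ} {a Lx : ℝ} (hu : Continuous u) (h01 : ∀ z, u z ∈ Icc (0:ℝ) 1)
    (hpos : ∀ z, 0 < σ (u z)) (hB : ContDiff ℝ 1 B) (hEf : Continuous Ef)
    (hin : ∀ z : ℝ × ℝ, z.1 ∈ Icc 0 T → u z = a + pxF B z ∧ Ef z = f a - ptF B z)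
    (hout : ∀ z : ℝ × ℝ, z.1 ∈ Icc 0 T → Lx ≤ |z.2| → u z = a ∧ Ef z = f a) :
    calI f σ T (YM.ofFun T u hu h01) ≤
      ENNReal.ofReal (1 / 2 * ∫ z in Ioo 0 T ×ˢ Ioo (-Lx) Lx, (Ef z - f (u z)) ^ 2 / σ (u z)) := by
  refine iSup_le fun φ => ENNReal.ofReal_le_ofReal ?_
  set S : Set (ℝ × ℝ) := Icc (0:ℝ) T ×ˢ univ with hS
  set QC : Set (ℝ × ℝ) := Icc (0:ℝ) T ×ˢ Icc (-Lx) Lx with hQC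
  have hSm : MeasurableSet S := measurableSet_Icc.prod MeasurableSet.univ
  have hQS : QC ⊆ S := prod_mono le_rfl (subset_univ _)
  have hQCm : MeasurableSet QC := measurableSet_Icc.prod measurableSet_Icc
  simp only [pair, YM.ofFun_mom]
  set h : ℝ × ℝ → ℝ := fun z => (Ef z - f (u z)) ^ 2 / σ (u z) with hh
  have hhc : Continuous h := Continuous.div (by fun_prop) (by fun_prop) fun z => (hpos z).ne'
  have hQh : ∫ z in Ioo 0 T ×ˢ Ioo (-Lx) Lx, h z = ∫ z in QC, h z := by
    refine setIntegral_congr_set ?_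
    rw [Measure.volume_eq_prod]
    exact Measure.set_prod_ae_eq Ioo_ae_eq_Icc Ioo_ae_eq_Icc
  have hz : ∀ z ∈ S \ QC, h z = 0 := by
    rintro z ⟨hz1, hz2⟩
    have hz3 : Lx ≤ |z.2| := by
      by_contra hc
      push Not at hc
      exact hz2 ⟨hz1.1, abs_le.1 hc.le⟩
    have h2 := hout z hz1.1 hz3
    simp [hh, h2.1, h2.2]
  have hSh : ∫ z in S, h z = ∫ z in QC, h z :=
    (setIntegral_eq_of_subset_of_forall_sdiff_eq_zero hSm hQS hz)
  have hhi : IntegrableOn h S := by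
    have h1 : IntegrableOn h QC := hhc.continuousOn.integrableOn_compact (isCompact_Icc.prod isCompact_Icc)
    have h2 : IntegrableOn h (S \ QC) := (integrableOn_zero).congr_fun (fun z hz' => (hz z hz').symm) (hSm.diff hQCm)
    have := h1.union h2
    rwa [union_sdiff_cancel hQS] at this
  -- the weak equation
  set B' : ℝ × ℝ → ℝ := fun z => B z + (a * z.2 - f a * z.1) with hB'
  have hl : ContDiff ℝ 1 fun z : ℝ × ℝ => a * z.2 - f a * z.1 := by fun_prop
  have hB'c : ContDiff ℝ 1 B' := hB.add hl
  have hfd : ∀ z, fderiv ℝ B' z = fderiv ℝ B z +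
      (a • ContinuousLinearMap.snd ℝ ℝ ℝ - f a • ContinuousLinearMap.fst ℝ ℝ ℝ) := fun z => by
    have h1 := (hB.differentiable one_ne_zero z).hasFDerivAt
    have h2 : HasFDerivAt (fun z : ℝ × ℝ => a * z.2 - f a * z.1)
      (a • ContinuousLinearMap.snd ℝ ℝ ℝ - f a • ContinuousLinearMap.fst ℝ ℝ ℝ) z :=
      (hasFDerivAt_snd.const_mul a).sub (hasFDerivAt_fst.const_mul (f a))
    exact (h1.add h2).fderiv
  have hcurl := curl_free hB'c φ
  have c1 : ∫ z in S, u z * ptF φ.toFun z = ∫ z, pxF B' z * ptF φ.toFun z := by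
    rw [← setIntegral_eq_integral_of_forall_compl_eq_zero (s := S) (f := fun z => pxF B' z * ptF φ.toFun z) fun z hz => by
      rw [(φ.pt_zero hz).1, mul_zero]]
    refine setIntegral_congr_fun hSm fun z hz => ?_
    simp only [(hin z hz.1).1, pxF, hfd]
    simp [add_comm]
  have c2 : ∫ z in S, Ef z * pxF φ.toFun z = - ∫ z, ptF B' z * pxF φ.toFun z := by
    rw [← setIntegral_eq_integral_of_forall_compl_eq_zero (s := S) (f := fun z => ptF B' z * pxF φ.toFun z) fun z hz => by
      rw [(φ.pt_zero hz).2, mul_zero], ← integral_neg]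
    refine setIntegral_congr_fun hSm fun z hz => ?_
    simp only [(hin z hz.1).2, ptF, hfd]
    simp
    ring
  have i1 : Integrable fun z => Ef z * pxF φ.toFun z :=
    (hEf.mul φ.pxF_cont).integrable_of_hasCompactSupport φ.pxF_cpt.mul_left
  have i2 : Integrable fun z => f (u z) * pxF φ.toFun z :=
    ((hf.comp hu).mul φ.pxF_cont).integrable_of_hasCompactSupport φ.pxF_cpt.mul_left
  have i3 : Integrable fun z => σ (u z) * pxF φ.toFun z * pxF φ.toFun z :=
    (((hσ.comp hu).mul φ.pxF_cont).mul φ.pxF_cont).integrable_of_hasCompactSupport φ.pxF_cpt.mul_left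
  have key : (∫ z in S, Ef z * pxF φ.toFun z) - (∫ z in S, f (u z) * pxF φ.toFun z)
      - 1 / 2 * (∫ z in S, σ (u z) * pxF φ.toFun z * pxF φ.toFun z) ≤ ∫ z in S, 1 / 2 * h z := by
    have i4 : Integrable fun z => Ef z * pxF φ.toFun z - f (u z) * pxF φ.toFun z := i1.sub i2
    rw [← integral_const_mul, ← integral_sub i1.integrableOn i2.integrableOn,
      ← integral_sub i4.integrableOn (i3.const_mul _).integrableOn]
    refine integral_mono (i4.sub (i3.const_mul _)).integrableOn (hhi.const_mul _) fun z => ?_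
    have hp := hpos z
    simp only [hh]
    set s := σ (u z)
    set q := pxF φ.toFun z
    set g := Ef z - f (u z) with hg
    have : Ef z * q - f (u z) * q - 1 / 2 * (s * q * q) = 1 / 2 * (g ^ 2 / s) - (g - s * q) ^ 2 / (2 * s) := by
      rw [hg]; field_simp; ring
    rw [this]
    have : 0 ≤ (g - s * q) ^ 2 / (2 * s) := by positivity
    linarith
  have e5 : ∫ z in S, 1 / 2 * h z = 1 / 2 * ∫ z in S, h z := integral_const_mul _ _
  rw [hQh, ← hSh, ← e5]
  have e6 : - ∫ z in S, u z * ptF φ.toFun z = ∫ z in S, Ef z * pxF φ.toFun z := by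
    rw [c1, c2, hcurl]
  linarith

/-- A `C¹` function with values in `[δ, 1-δ]`, constant for large `|x|` and of finite cost, lies in `𝓜₀`. -/
lemma M0_ofFun {T : ℝ} {f σ : ℝ → ℝ} (hσ : Continuous σ) (hσ1 : ∀ l ∈ Ioo (0:ℝ) 1, 0 < σ l) {u : ℝ × ℝ → ℝ} {a Lx δ : ℝ}
    (hLx : 0 < Lx) (huC : ContDiff ℝ 1 u) (hδ : 0 < δ) (hum : ∀ z, u z ∈ Icc δ (1 - δ))
    (h01 : ∀ z, u z ∈ Icc (0:ℝ) 1)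
    (hout : ∀ z : ℝ × ℝ, z.1 ∈ Icc 0 T → Lx ≤ |z.2| → u z = a)
    (hI : calI f σ T (YM.ofFun T u huC.continuous h01) ≠ ⊤) (hT : 0 < T) :
    M0 f σ T (YM.ofFun T u huC.continuous h01) := by
  refine ⟨⟨hI, ?_⟩, u, huC, h01, fun p => rfl⟩
  have hne : (Icc δ (1 - δ)).Nonempty := ⟨_, hum 0⟩
  obtain ⟨l0, hl0, hmin⟩ := isCompact_Icc.exists_isMinOn hne hσ.continuousOn
  have hs0 : 0 < σ l0 := hσ1 _ ⟨by linarith [hl0.1], by linarith [hl0.2]⟩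
  have ha : a ∈ Icc (0:ℝ) 1 := by
    rw [← hout (0, Lx) ⟨le_rfl, hT.le⟩ (le_abs_self _)]; exact h01 _
  refine ⟨min δ (σ l0), lt_min hδ hs0, Lx, hLx, Measure.dirac a, inferInstance, ?_, fun p _ => ?_, fun p hp hx => ?_⟩
  · rw [Measure.dirac_apply' _ measurableSet_Icc.compl]
    simp only [indicator_apply_eq_zero, mem_compl_iff]
    exact fun h => absurd ha h
  · rw [YM.ofFun_mom, YM.ofFun_mom]
    exact ⟨(min_le_left _ _).trans (hum p).1, (min_le_right _ _).trans (hmin (hum p))⟩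
  · change Measure.dirac (u p) = _
    rw [hout p hp hx.le]

end

/-! ### Approximation up to finitely many tests -/

section

/-- Recovery up to `ε`, tested on finitely many functions. -/
theorem approx {T : ℝ} (hT : 0 < T) {f σ : ℝ → ℝ} (hf : Continuous f) (hσ : Continuous σ)
    (hσ0 : ∀ l ∈ Icc (0:ℝ) 1, 0 ≤ σ l) (hσ1 : ∀ l ∈ Ioo (0:ℝ) 1, 0 < σ l) (μ : YM T) (hI : calI f σ T μ ≠ ⊤)
    {ι : Type} [Fintype ι] (ψ : ι → ℝ × ℝ → ℝ) (hψ : ∀ j, Integrable (ψ j)) (p : ι → ℝ → ℝ)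
    (hp : ∀ j, Continuous (p j)) (N : ℕ) {ε : ℝ} (hε : 0 < ε) :
    ∃ ν : YM T, M0 f σ T ν ∧ calI f σ T ν ≤ calI f σ T μ + ENNReal.ofReal ε ∧
      (∀ j, |∫ z in Icc 0 T ×ˢ univ, ψ j z * (ν.mom (p j) z - μ.mom (p j) z)| ≤ ε) ∧
      ∀ t ∈ Icc 0 T, nb ((N:ℝ) + 1) ε fun x => ν.mom (fun l => l) (t, x) - μ.mom (fun l => l) (t, x) := by
  obtain ⟨L, E, b, H, c, Lx, r0, hL, hE, hb, hHi, hH0, hc, hLx, hr0, hout, hin, hcost, hH, htest, hnb, hlow⟩ :=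
    exists_smoothing hT hf hσ hσ0 hσ1 μ hI ψ hψ p hp N (half_pos hε)
  obtain ⟨u, B, Ef, a, δ, huC, hB, hEf, hδ, hum, hin', hout', hcost', htest', hnb'⟩ :=
    exists_field hf hσ hσ1 hT hL hE hb hHi hH0 hc hLx hr0 hout hin hcost hlow ψ hψ p hp N (half_pos hε)
  have h01 : ∀ z, u z ∈ Icc (0:ℝ) 1 := fun z => ⟨by linarith [(hum z).1], by linarith [(hum z).2]⟩
  have hpos : ∀ z, 0 < σ (u z) := fun z => hσ1 _ ⟨by linarith [(hum z).1], by linarith [(hum z).2]⟩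
  have hC := calI_ofFun_le (T := T) hf hσ huC.continuous h01 hpos hB hEf hin' hout'
  refine ⟨YM.ofFun T u huC.continuous h01, M0_ofFun hσ hσ1 hLx huC hδ hum h01 (fun z h1 h2 => (hout' z h1 h2).1)
    (ne_top_of_le_ne_top ENNReal.ofReal_ne_top hC) hT, ?_, fun j => ?_, fun t ht φ hφ => ?_⟩
  · refine hC.trans ?_
    calc _ ≤ ENNReal.ofReal ((calI f σ T μ).toReal + ε) := ENNReal.ofReal_le_ofReal (by linarith)
      _ = _ := by rw [ENNReal.ofReal_add ENNReal.toReal_nonneg hε.le, ENNReal.ofReal_toReal hI]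
  · simp only [YM.ofFun_mom]
    obtain ⟨C, hC0, hC⟩ := exists_bd (hp j)
    have j1 : Integrable fun z => ψ j z * (p j (u z) - L (p j) z) :=
      (hψ j).mul_bdd (c := C + C) (((hp j).comp huC.continuous).sub
        (hL.smooth _ (hp j)).continuous).aestronglyMeasurable
        (ae_of_all _ fun z => (norm_sub_le _ _).trans (add_le_add (hC _ (h01 z)) (hL.abs_le (hp j) hC z)))
    have j2 : Integrable fun z => ψ j z * (L (p j) z - μ.mom (p j) z) :=
      (hψ j).mul_bdd (c := C + C) (((hL.smooth _ (hp j)).continuous.measurable).sub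
        (mom_meas μ (hp j))).aestronglyMeasurable
        (ae_of_all _ fun z => (norm_sub_le _ _).trans (add_le_add (hL.abs_le (hp j) hC z) (mom_abs_le μ hC z)))
    have e : ∫ z in Icc 0 T ×ˢ univ, ψ j z * (p j (u z) - μ.mom (p j) z) =
        (∫ z in Icc 0 T ×ˢ univ, ψ j z * (p j (u z) - L (p j) z)) +
          ∫ z in Icc 0 T ×ˢ univ, ψ j z * (L (p j) z - μ.mom (p j) z) := by
      rw [← integral_add j1.integrableOn j2.integrableOn]
      exact integral_congr_ae (ae_of_all _ fun z => by simp only; ring)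
    rw [e]
    refine (abs_add_le _ _).trans ?_
    linarith [htest j, htest' j]
  · simp only [YM.ofFun_mom]
    have m1 : Measurable fun x : ℝ => u (t, x) := huC.continuous.measurable.comp measurable_prodMk_left
    have m2 : Measurable fun x : ℝ => L (fun l => l) (t, x) :=
      (hL.smooth _ continuous_id).continuous.measurable.comp measurable_prodMk_left
    have m3 : Measurable fun x : ℝ => μ.mom (fun l => l) (t, x) :=
      (mom_meas μ continuous_id).comp measurable_prodMk_left
    have b3 : ∀ x, μ.mom (fun l => l) (t, x) ∈ Icc (0:ℝ) 1 := fun x => μ.bar_mem _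
    have j1 : Integrable fun x => (u (t, x) - L (fun l => l) (t, x)) * φ.toFun x :=
      φ.int_mul (m1.sub m2) (C := 1) fun x => by
        have := h01 (t, x); have := hL.mem01 (t, x)
        rw [abs_le]; constructor <;> linarith [(h01 (t, x)).1, (h01 (t, x)).2, (hL.mem01 (t, x)).1, (hL.mem01 (t, x)).2]
    have j2 : Integrable fun x => (L (fun l => l) (t, x) - μ.mom (fun l => l) (t, x)) * φ.toFun x :=
      φ.int_mul (m2.sub m3) (C := 1) fun x => by
        rw [abs_le]; constructor <;> linarith [(b3 x).1, (b3 x).2, (hL.mem01 (t, x)).1, (hL.mem01 (t, x)).2]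
    have e : ∫ x, (u (t, x) - μ.mom (fun l => l) (t, x)) * φ.toFun x =
        (∫ x, (u (t, x) - L (fun l => l) (t, x)) * φ.toFun x) +
          ∫ x, (L (fun l => l) (t, x) - μ.mom (fun l => l) (t, x)) * φ.toFun x := by
      rw [← integral_add j1 j2]
      exact integral_congr_ae (ae_of_all _ fun x => by simp only; ring)
    rw [e]
    have := hnb t ht φ hφ
    have := hnb' t ht φ hφ
    linarith

/-- Bernstein's operators in the `λ` variable reduce a test function on `[0,1] × ℝ²` to finitely many products. -/
lemma bern_test {T : ℝ} {g : ℝ × (ℝ × ℝ) → ℝ} (hg : Continuous g) (hc : HasCompactSupport g) :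
    ∃ K : Set (ℝ × ℝ), IsCompact K ∧ ∀ κ > 0, ∀ᶠ n : ℕ in atTop, ∀ (ν : YM T) (z : ℝ × ℝ),
      |∑ i : Fin (n+1), g ((i:ℕ) / (n:ℝ), z) * ν.mom (bp n i) z - ∫ l, g (l, z) ∂ν.m z| ≤
        K.indicator (fun _ => κ) z := by
  set K := Prod.snd '' tsupport g with hK
  have hKc : IsCompact K := hc.isCompact.image continuous_snd
  have hg0 : ∀ z ∉ K, ∀ l, g (l, z) = 0 := fun z hz l =>
    image_eq_zero_of_notMem_tsupport fun h => hz ⟨_, h, rfl⟩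
  refine ⟨K, hKc, fun κ hκ => ?_⟩
  haveI : CompactSpace K := isCompact_iff_compactSpace.1 hKc
  let G : C(ℝ × K, ℝ) := ⟨fun y => g (y.1, y.2.1), by fun_prop⟩
  have hG := bernstein_vec (fun l => G.curry l) G.curry.continuous hκ
  filter_upwards [hG] with n hn ν z
  by_cases hz : z ∈ K
  · rw [indicator_of_mem hz]
    have hp : ∀ l ∈ Icc (0:ℝ) 1, |∑ i : Fin (n+1), g ((i:ℕ) / (n:ℝ), z) * bp n i l - g (l, z)| ≤ κ := fun l hl => by
      have h1 := (ContinuousMap.norm_coe_le_norm _ (⟨z, hz⟩ : K)).trans (hn l hl)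
      rw [Real.norm_eq_abs] at h1
      refine le_of_eq_of_le ?_ h1
      congr 1
      simp [ContinuousMap.sum_apply, G, mul_comm]
    have hgz : Continuous fun l => g (l, z) := by fun_prop
    have hs : Continuous fun l => ∑ i : Fin (n+1), g ((i:ℕ) / (n:ℝ), z) * bp n i l := by
      have := fun i => bp_cont n i
      fun_prop
    have h2 := mom_abs_le ν hp z
    rw [← mom_sum ν (fun i : Fin (n+1) => bp n i) (fun i => bp_cont n i) (fun i => g ((i:ℕ) / (n:ℝ), z)) z]
    have h3 : ν.mom (fun l => ∑ i : Fin (n+1), g ((i:ℕ) / (n:ℝ), z) * bp n i l - g (l, z)) z =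
        ν.mom (fun l => ∑ i : Fin (n+1), g ((i:ℕ) / (n:ℝ), z) * bp n i l) z - ∫ l, g (l, z) ∂ν.m z :=
      integral_sub (mom_int ν hs z) (mom_int ν hgz z)
    rw [← h3]
    exact h2
  · rw [indicator_of_notMem hz]
    simp [hg0 z hz]

lemma mom_diff_int {T : ℝ} (ν μ : YM T) {ψ : ℝ × ℝ → ℝ} {q : ℝ → ℝ} (hq : Continuous q) (hψ : Integrable ψ) :
    Integrable fun z => ψ z * (ν.mom q z - μ.mom q z) := by
  obtain ⟨C, hC0, hC⟩ := exists_bd hq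
  exact hψ.mul_bdd (c := C + C) ((mom_meas ν hq).sub (mom_meas μ hq)).aestronglyMeasurable
    (ae_of_all _ fun z => (norm_sub_le _ _).trans (add_le_add (mom_abs_le ν hC z) (mom_abs_le μ hC z)))

end

/-! ### The recovery sequence -/

section

/-- Convergence against a dense sequence of `L¹` extends to all of `L¹`. -/
lemma tendsto_all_L1 {T : ℝ} (νs : ℕ → YM T) (μ : YM T) {q : ℝ → ℝ} (hq : Continuous q)
    {E : ℕ → Lp ℝ 1 (volume : Measure (ℝ × ℝ))} (hE : DenseRange E)
    (h : ∀ m : ℕ, Tendsto (fun k => ∫ z in Icc 0 T ×ˢ univ, (E m : ℝ × ℝ → ℝ) z *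
        ((νs k).mom q z - μ.mom q z)) atTop (𝓝 0))
    {ψ : ℝ × ℝ → ℝ} (hψ : Integrable ψ) :
    Tendsto (fun k => ∫ z in Icc 0 T ×ˢ univ, ψ z * ((νs k).mom q z - μ.mom q z)) atTop (𝓝 0) := by
  obtain ⟨C, hC0, hC⟩ := exists_bd hq
  rw [Metric.tendsto_atTop]
  intro η hη
  have hr : 0 < η / (2 * (2 * C + 1)) := by positivity
  obtain ⟨m, hm⟩ := hE.exists_dist_lt (hψ.toL1 ψ) hr
  set D := E m with hD
  have hDi : Integrable (D : ℝ × ℝ → ℝ) := L1.integrable_coeFn D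
  have hdist : ∫ z, |ψ z - D z| < η / (2 * (2 * C + 1)) := by
    rw [dist_eq_norm, L1.norm_eq_integral_norm] at hm
    refine lt_of_eq_of_lt (integral_congr_ae ?_) hm
    filter_upwards [Lp.coeFn_sub (hψ.toL1 ψ) D, hψ.coeFn_toL1] with z h1 h2
    rw [h1, Pi.sub_apply, h2, Real.norm_eq_abs]
  obtain ⟨k0, hk0⟩ := (Metric.tendsto_atTop.1 (h m)) (η / 2) (half_pos hη)
  refine ⟨k0, fun k hk => ?_⟩
  have h1 := hk0 k hk
  rw [Real.dist_eq, sub_zero] at h1 ⊢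
  have i1 := mom_diff_int (νs k) μ hq hψ
  have i2 := mom_diff_int (νs k) μ hq hDi
  have hdi : Integrable fun z => |ψ z - D z| := (hψ.sub hDi).abs
  have h2 : |∫ z in Icc 0 T ×ˢ univ, (ψ z * ((νs k).mom q z - μ.mom q z) - D z * ((νs k).mom q z - μ.mom q z))|
      ≤ (2 * C) * ∫ z, |ψ z - D z| := by
    have h3 : ‖∫ z in Icc 0 T ×ˢ univ, (ψ z * ((νs k).mom q z - μ.mom q z) - D z * ((νs k).mom q z - μ.mom q z))‖
        ≤ ∫ z in Icc 0 T ×ˢ univ, (2 * C) * |ψ z - D z| := by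
      refine norm_integral_le_of_norm_le (hdi.const_mul _).integrableOn (ae_of_all _ fun z => ?_)
      rw [← sub_mul, norm_mul, Real.norm_eq_abs, mul_comm]
      refine mul_le_mul_of_nonneg_right ?_ (abs_nonneg _)
      exact ((norm_sub_le _ _).trans (add_le_add (mom_abs_le (νs k) hC z) (mom_abs_le μ hC z))).trans_eq (by ring)
    have h4 : ∫ z in Icc 0 T ×ˢ univ, (2 * C) * |ψ z - D z| ≤ ∫ z, (2 * C) * |ψ z - D z| :=
      setIntegral_le_integral (hdi.const_mul _) (ae_of_all _ fun z => by positivity)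
    have h5 : ∫ z, (2 * C) * |ψ z - D z| = (2 * C) * ∫ z, |ψ z - D z| := integral_const_mul _ _
    rw [h5] at h4
    exact h3.trans h4
  rw [integral_sub i1.integrableOn i2.integrableOn] at h2
  have h6 : (2 * C) * ∫ z, |ψ z - D z| ≤ (2 * C) * (η / (2 * (2 * C + 1))) := by gcongr
  have h7 : (2 * C) * (η / (2 * (2 * C + 1))) ≤ η / 2 := by
    rw [mul_div_assoc', div_le_iff₀ (by positivity)]
    nlinarith
  set x1 := ∫ z in Icc 0 T ×ˢ univ, ψ z * ((νs k).mom q z - μ.mom q z)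
  set x2 := ∫ z in Icc 0 T ×ˢ univ, D z * ((νs k).mom q z - μ.mom q z)
  have h8 : |x1| ≤ |x1 - x2| + |x2| := by simpa using abs_add_le (x1 - x2) x2
  linarith

/-- Weak* convergence follows from convergence of all Bernstein moments against `L¹` functions. -/
lemma weakStar_of_moments {T : ℝ} (νs : ℕ → YM T) (μ : YM T)
    (h : ∀ (n : ℕ) (i : Fin (n+1)) (ψ : ℝ × ℝ → ℝ), Integrable ψ →
      Tendsto (fun k => ∫ z in Icc 0 T ×ˢ univ, ψ z * ((νs k).mom (bp n i) z - μ.mom (bp n i) z)) atTop (𝓝 0))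
    {g : ℝ × (ℝ × ℝ) → ℝ} (hg : Continuous g) (hc : HasCompactSupport g) :
    Tendsto (fun k => ∫ z in Icc (0:ℝ) T ×ˢ (univ : Set ℝ), ∫ l, g (l, z) ∂(νs k).m z) atTop
      (𝓝 (∫ z in Icc (0:ℝ) T ×ˢ (univ : Set ℝ), ∫ l, g (l, z) ∂μ.m z)) := by
  obtain ⟨K, hK, hb⟩ := bern_test (T := T) hg hc
  have hψ : ∀ l, Integrable fun z => g (l, z) := fun l => by
    refine (show Continuous fun z => g (l, z) by fun_prop).integrable_of_hasCompactSupport ?_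
    exact HasCompactSupport.of_support_subset_isCompact (hc.isCompact.image continuous_snd)
      fun z hz => ⟨(l, z), subset_tsupport _ hz, rfl⟩
  -- the Bernstein sums and their integrability
  set S : ℕ → YM T → ℝ × ℝ → ℝ := fun n ν z => ∑ i : Fin (n+1), g ((i:ℕ) / (n:ℝ), z) * ν.mom (bp n i) z with hS
  have hSi1 : ∀ (n : ℕ) (ν : YM T) (i : Fin (n+1)), Integrable fun z => g ((i:ℕ) / (n:ℝ), z) * ν.mom (bp n i) z :=
    fun n ν i => by
      obtain ⟨C, hC0, hC⟩ := exists_bd (bp_cont n i)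
      exact (hψ _).mul_bdd (c := C) (mom_meas ν (bp_cont n i)).aestronglyMeasurable
        (ae_of_all _ fun z => mom_abs_le ν hC z)
  have hSi : ∀ n ν, Integrable (S n ν) := fun n ν => integrable_finsetSum _ fun i _ => hSi1 n ν i
  have hSm : ∀ n ν, Measurable (S n ν) := fun n ν => Finset.measurable_fun_sum _ fun i _ =>
    (show Continuous fun z => g ((i:ℕ) / (n:ℝ), z) by fun_prop).measurable.mul (mom_meas ν (bp_cont n i))
  have hgm : ∀ ν : YM T, Measurable fun z => ∫ l, g (l, z) ∂ν.m z := fun ν => by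
    refine measurable_of_tendsto_metrizable (fun n => hSm n ν) (tendsto_pi_nhds.2 fun z => ?_)
    rw [Metric.tendsto_nhds]
    intro κ hκ
    filter_upwards [hb (κ/2) (half_pos hκ)] with n hn
    rw [Real.dist_eq]
    refine (hn ν z).trans_lt ?_
    by_cases hz : z ∈ K
    · rw [indicator_of_mem hz]; linarith
    · rw [indicator_of_notMem hz]; exact hκ
  have hKi : ∀ κ : ℝ, Integrable (K.indicator fun _ => κ) := fun κ =>
    (integrable_indicator_iff hK.measurableSet).2 (integrableOn_const hK.measure_lt_top.ne)
  obtain ⟨n1, hn1⟩ := (hb 1 one_pos).exists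
  have hgi : ∀ ν : YM T, Integrable fun z => ∫ l, g (l, z) ∂ν.m z := fun ν => by
    have hd : Integrable fun z => S n1 ν z - ∫ l, g (l, z) ∂ν.m z :=
      (hKi 1).mono' ((hSm n1 ν).sub (hgm ν)).aestronglyMeasurable (ae_of_all _ fun z => hn1 ν z)
    refine ((hSi n1 ν).sub hd).congr (ae_of_all _ fun z => ?_)
    simp
  rw [Metric.tendsto_atTop]
  intro η hη
  set V := volume.real K with hV
  have hV0 : 0 ≤ V := measureReal_nonneg
  set κ := η / (4 * (V + 1)) with hκ
  have hκ0 : 0 < κ := by positivity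
  have hκV : κ * V ≤ η / 4 := by
    rw [hκ, div_mul_eq_mul_div, div_le_iff₀ (by positivity)]
    nlinarith
  obtain ⟨n, hn⟩ := (hb κ hκ0).exists
  have hclose : ∀ ν : YM T, |(∫ z in Icc (0:ℝ) T ×ˢ (univ : Set ℝ), S n ν z) -
      ∫ z in Icc (0:ℝ) T ×ˢ (univ : Set ℝ), ∫ l, g (l, z) ∂ν.m z| ≤ η / 4 := fun ν => by
    rw [← integral_sub (hSi n ν).integrableOn (hgi ν).integrableOn]
    have h1 : ‖∫ z in Icc (0:ℝ) T ×ˢ (univ : Set ℝ), (S n ν z - ∫ l, g (l, z) ∂ν.m z)‖ ≤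
        ∫ z in Icc (0:ℝ) T ×ˢ (univ : Set ℝ), K.indicator (fun _ => κ) z :=
      norm_integral_le_of_norm_le (hKi κ).integrableOn (ae_of_all _ fun z => hn ν z)
    have h2 : ∫ z in Icc (0:ℝ) T ×ˢ (univ : Set ℝ), K.indicator (fun _ => κ) z ≤ ∫ z, K.indicator (fun _ => κ) z :=
      setIntegral_le_integral (hKi κ) (ae_of_all _ fun z => indicator_nonneg (fun _ _ => hκ0.le) z)
    have h3 : ∫ z, K.indicator (fun _ => κ) z = V * κ := by
      rw [integral_indicator hK.measurableSet, setIntegral_const, smul_eq_mul]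
    rw [h3] at h2
    refine h1.trans (h2.trans ?_)
    linarith
  have hconv : Tendsto (fun k => (∫ z in Icc (0:ℝ) T ×ˢ (univ : Set ℝ), S n (νs k) z) -
      ∫ z in Icc (0:ℝ) T ×ˢ (univ : Set ℝ), S n μ z) atTop (𝓝 0) := by
    have h1 : ∀ k, (∫ z in Icc (0:ℝ) T ×ˢ (univ : Set ℝ), S n (νs k) z) - ∫ z in Icc (0:ℝ) T ×ˢ (univ : Set ℝ), S n μ z =
        ∑ i : Fin (n+1), ∫ z in Icc 0 T ×ˢ univ, g ((i:ℕ) / (n:ℝ), z) * ((νs k).mom (bp n i) z - μ.mom (bp n i) z) := by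
      intro k
      have hi : ∀ i : Fin (n+1), Integrable (fun z => g ((i:ℕ) / (n:ℝ), z) *
          ((νs k).mom (bp n i) z - μ.mom (bp n i) z)) (volume.restrict (Icc 0 T ×ˢ univ)) :=
        fun i => (mom_diff_int (νs k) μ (bp_cont n i) (hψ _)).integrableOn
      rw [← integral_sub (hSi n _).integrableOn (hSi n _).integrableOn]
      refine Eq.trans ?_ (integral_finsetSum Finset.univ fun i _ => hi i)
      refine integral_congr_ae (ae_of_all _ fun z => ?_)
      simp only [hS, mul_sub, Finset.sum_sub_distrib]
    simp only [h1]
    have := tendsto_finsetSum Finset.univ fun (i : Fin (n+1)) _ => h n i (fun z => g ((i:ℕ) / (n:ℝ), z)) (hψ _)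
    simpa using this
  obtain ⟨k0, hk0⟩ := (Metric.tendsto_atTop.1 hconv) (η / 4) (by positivity)
  refine ⟨k0, fun k hk => ?_⟩
  have e1 := hk0 k hk
  rw [Real.dist_eq, sub_zero] at e1
  have e2 := hclose (νs k)
  have e3 := hclose μ
  rw [Real.dist_eq]
  rw [abs_le] at e2 e3
  rw [abs_lt] at e1 ⊢
  constructor <;> linarith [e1.1, e1.2, e2.1, e2.2, e3.1, e3.2]

/-- The recovery sequence, for continuous coefficients. -/
theorem recovery {T : ℝ} (hT : 0 < T) {f σ : ℝ → ℝ} (hf : Continuous f) (hσ : Continuous σ)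
    (hσ0 : ∀ l ∈ Icc (0:ℝ) 1, 0 ≤ σ l) (hσ1 : ∀ l ∈ Ioo (0:ℝ) 1, 0 < σ l) {dw : YM T → YM T → ℝ}
    (hdw : GeneratesWeakStar T dw) (μ : YM T) (hI : calI f σ T μ ≠ ⊤) :
    ∃ μs : ℕ → YM T, (∀ n, M0 f σ T (μs n)) ∧ Tendsto (fun n => dM T dw (μs n) μ) atTop (𝓝 0) ∧
      Filter.limsup (fun n => calI f σ T (μs n)) atTop ≤ calI f σ T μ := by
  haveI : Fact ((1:ℝ≥0∞) ≠ ∞) := ⟨ENNReal.one_ne_top⟩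
  obtain ⟨D, hD⟩ := TopologicalSpace.exists_dense_seq (Lp ℝ 1 (volume : Measure (ℝ × ℝ)))
  have hex : ∀ k : ℕ, ∃ ν : YM T, M0 f σ T ν ∧ calI f σ T ν ≤ calI f σ T μ + ENNReal.ofReal (1 / ((k:ℝ) + 1)) ∧
      (∀ j : Fin k × Fin k × Fin k, |∫ z in Icc 0 T ×ˢ univ, (D j.1 : ℝ × ℝ → ℝ) z *
        (ν.mom (bp j.2.1 j.2.2) z - μ.mom (bp j.2.1 j.2.2) z)| ≤ 1 / ((k:ℝ) + 1)) ∧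
      ∀ t ∈ Icc 0 T, nb ((k:ℝ) + 1) (1 / ((k:ℝ) + 1)) fun x =>
        ν.mom (fun l => l) (t, x) - μ.mom (fun l => l) (t, x) := fun k =>
    approx hT hf hσ hσ0 hσ1 μ hI (ι := Fin k × Fin k × Fin k) (fun j => (D j.1 : ℝ × ℝ → ℝ))
      (fun j => L1.integrable_coeFn _) (fun j => bp j.2.1 j.2.2) (fun j => bp_cont _ _) k (by positivity)
  choose νs h0 hcost htest hnb using hex
  have hlim : Tendsto (fun k : ℕ => 1 / ((k:ℝ) + 1)) atTop (𝓝 0) := tendsto_one_div_add_atTop_nhds_zero_nat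
  refine ⟨νs, h0, ?_, ?_⟩
  · have hw : Tendsto (fun k => dw (νs k) μ) atTop (𝓝 0) := by
      refine (hdw.2.2 νs μ).2 fun g hg hc => weakStar_of_moments νs μ (fun n i ψ hψ => ?_) hg hc
      refine tendsto_all_L1 νs μ (bp_cont n i) hD (fun m => ?_) hψ
      refine squeeze_zero_norm' ?_ hlim
      filter_upwards [eventually_gt_atTop (max m (max n i))] with k hk
      have h1 : m < k := (le_max_left _ _).trans_lt hk
      have h2 : n < k := ((le_max_left _ _).trans (le_max_right _ _)).trans_lt hk
      have h3 : (i:ℕ) < k := ((le_max_right _ _).trans (le_max_right _ _)).trans_lt hk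
      exact htest k (⟨m, h1⟩, ⟨n, h2⟩, ⟨i, h3⟩)
    have hc : Tendsto (fun k => dcU T (νs k).bar μ.bar) atTop (𝓝 0) := by
      have hup : Tendsto (fun k : ℕ => 1 / ((k:ℝ) + 1) + (2:ℝ)⁻¹ ^ (k + 1)) atTop (𝓝 0) := by
        have h2 : Tendsto (fun k : ℕ => (2:ℝ)⁻¹ ^ (k + 1)) atTop (𝓝 0) :=
          (tendsto_pow_atTop_nhds_zero_of_lt_one (by norm_num) (by norm_num)).comp (tendsto_add_atTop_nat 1)
        simpa using hlim.add h2
      refine squeeze_zero (fun k => dcU_nonneg _ _) (fun k => ?_) hup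
      refine Real.sSup_le ?_ (by positivity)
      rintro r ⟨t, ht, rfl⟩
      exact dU_le (by positivity) k (hnb k t ht)
    have := hw.add hc
    simpa [dM] using this
  · have hup : Tendsto (fun k : ℕ => calI f σ T μ + ENNReal.ofReal (1 / ((k:ℝ) + 1))) atTop (𝓝 (calI f σ T μ)) := by
      have h2 : Tendsto (fun k : ℕ => ENNReal.ofReal (1 / ((k:ℝ) + 1))) atTop (𝓝 0) := by
        simpa using ENNReal.tendsto_ofReal hlim
      simpa using h2.const_add (calI f σ T μ)
    rw [← hup.limsup_eq]
    exact Filter.limsup_le_limsup (Eventually.of_forall hcost)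

/-- The envelope property for coefficients continuous on `[0,1]`. Only the values of the coefficients on `[0,1]`
matter, so they are extended continuously to `ℝ` by composing with `cl`. -/
theorem calI_final {T : ℝ} (hT : 0 < T) (f σ : ℝ → ℝ) (hf : ContinuousOn f (Icc (0:ℝ) 1))
    (hσ : ContinuousOn σ (Icc (0:ℝ) 1)) (hσ1 : ∀ l ∈ Ioo (0:ℝ) 1, 0 < σ l) (dw : YM T → YM T → ℝ)
    (hdw : GeneratesWeakStar T dw) :
    (∀ (μ : YM T) (μs : ℕ → YM T), Tendsto (fun n => dM T dw (μs n) μ) atTop (𝓝 0) →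
      calI f σ T μ ≤ Filter.liminf (fun n => calI f σ T (μs n)) atTop) ∧
    ∀ μ : YM T, calI f σ T μ ≠ ⊤ → ∃ μs : ℕ → YM T, (∀ n, M0 f σ T (μs n)) ∧
      Tendsto (fun n => dM T dw (μs n) μ) atTop (𝓝 0) ∧
        Filter.limsup (fun n => calI f σ T (μs n)) atTop ≤ calI f σ T μ := by
  have ef : ∀ l ∈ Icc (0:ℝ) 1, f l = f (cl l) := fun l hl => by rw [cl_eq hl]
  have eσ : ∀ l ∈ Icc (0:ℝ) 1, σ l = σ (cl l) := fun l hl => by rw [cl_eq hl]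
  have hfc := cl_comp_cont hf
  have hσc := cl_comp_cont hσ
  have hσ0 : ∀ l ∈ Icc (0:ℝ) 1, 0 ≤ σ (cl l) := fun l hl => by
    have hcl : l ∈ closure (Ioo (0:ℝ) 1) := by rwa [closure_Ioo zero_ne_one]
    refine closure_minimal (s := Ioo (0:ℝ) 1) (t := {l | 0 ≤ σ (cl l)}) ?_ (isClosed_le continuous_const hσc) hcl
    intro y hy
    have := hσ1 y hy
    change 0 ≤ σ (cl y)
    rw [cl_eq ⟨hy.1.le, hy.2.le⟩]
    exact this.le
  have eI : ∀ μ : YM T, calI f σ T μ = calI (fun l => f (cl l)) (fun l => σ (cl l)) T μ := calI_congr ef eσ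
  simp only [eI, M0_congr ef eσ]
  exact ⟨fun μ μs h => calI_lsc hdw hfc hσc h, fun μ hI => recovery hT hfc hσc hσ0
    (fun l hl => by rw [cl_eq ⟨hl.1.le, hl.2.le⟩]; exact hσ1 l hl) hdw μ hI⟩

end

/-- `𝓘` is the lower semicontinuous envelope of `𝓘̃` (equal to `𝓘` on `𝓜₀` and
`+∞` elsewhere): `𝓘` is lower semicontinuous on `𝓜` and every `μ` with `𝓘(μ) < +∞` is the
`d_𝓜`-limit of a sequence in `𝓜₀` along which `limsup 𝓘 ≤ 𝓘(μ)`. -/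
theorem calI_lsc_envelope (T : ℝ) (hT : 0 < T) (f D σ : ℝ → ℝ)
    (hf : ∃ C : NNReal, LipschitzOnWith C f (Icc 0 1))
    (hD : ContinuousOn D (Icc 0 1)) (hσ : ContinuousOn σ (Icc 0 1))
    (hDpos : ∃ c > 0, ∀ v ∈ Icc (0:ℝ) 1, c ≤ D v)
    (hσpos : ∀ v ∈ Ioo (0:ℝ) 1, 0 < σ v)
    (dw : YM T → YM T → ℝ) (hdw : GeneratesWeakStar T dw) :
    (∀ (μ : YM T) (μs : ℕ → YM T),
        Tendsto (fun n => dM T dw (μs n) μ) atTop (𝓝 0) →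
        calI f σ T μ ≤ Filter.liminf (fun n => calI f σ T (μs n)) atTop) ∧
    ∀ μ : YM T, calI f σ T μ ≠ ⊤ →
      ∃ μs : ℕ → YM T, (∀ n, M0 f σ T (μs n)) ∧
        Tendsto (fun n => dM T dw (μs n) μ) atTop (𝓝 0) ∧
        Filter.limsup (fun n => calI f σ T (μs n)) atTop ≤ calI f σ T μ := by
  obtain ⟨C, hC⟩ := hf
  exact calI_final hT f σ hC.continuousOn hσ hσpos dw hdw

end GammaSCL
end
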